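/- Let K be an algebraically closed field, let ℓ be a prime number with ℓ ≠ char K, and let n ≥ 3. Then the third group cohomology of the (abstract) group SL_n(K) with coefficients in the trivial module ℤ/ℓℤ vanishes: H³(SL_n(K), ℤ/ℓℤ) = 0. -/

import Mathlib

/-!
Cohomology of degree at most three is handled through explicit homogeneous cochains with values in
a field `k` of characteristic `ℓ`; `H1`, `H2`, `H3` say that it vanishes in the given degree.

Two devices reduce a group `G` to smaller ones. If `G` acts on a set with a notion of tuples in general
position (`GenCx`), the functions on generic tuples form an acyclic complex, and the resulting
hypercohomology argument (`machine3`, `machine2`), combined with Shapiro's lemma, reduces the degree-three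
cohomology of `G` to the lower cohomology of stabilizers of tuples and to invariant functions on quadruples.
The stabilizers are then simplified by passing to quotients by normal subgroups without cohomology
(`ext1`, `ext2`, `ext3`), mostly unipotent radicals, which are uniquely `ℓ`-divisible abelian groups
(`unip_ker`). An abelian `ℓ`-divisible group has no cohomology in degrees one and three
(`H1_of_div`, `H3_of_div`), and a class of degree two on it is detected by its restrictions
to the cyclic groups of order `ℓ`, the norm invariants `nn` (`det2`).

For `n ≥ 4`, generic tuples of vectors give an induction on `n` (`H3_step`), which also needs degrees one
and two (`H1_SL`, `H2_SL`).

The case `n = 3` (`H3_SL3`) uses points of the projective plane in general position. The stabilizer of a point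
reduces to `GL₂`. The stabilizer of a pair of points reduces to a torus of rank two, on which a class
of degree two may survive; its norm invariants have the form `A log a + B log b`, compatibility over triples of
points forces `A + B = 0`, and such a class is cancelled by a multiple of the Kummer cocycle, the Bockstein of the
character by which the stabilizer of a point acts on the corresponding line (`kill_pairs`). The stabilizer of a triple
is a divisible torus, and `SL₃` permutes generic quadruples transitively.

The group `GL₂` is treated on the projective line (`H3_GL2`). The new feature is that quadruples of points
have a modulus, the cross ratio, so that an invariant cocycle on them is a function `φ` on `K ∖ {0, 1}` satisfying the
five-term relation. Such a function vanishes (`FT.eq_zero`). Indeed, for coprime polynomials `A + B + C = 0` the class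
of `t ↦ φ (-A t / C t)`, modulo functions that are constant outside a finite set, is a sum over pairs of roots of `A`, `B`
and `C`, bilinear in the multiplicities (`Claim.main`). For `A = t ^ ℓ`, `B = 1 - t ^ ℓ`, `C = -1` all multiplicities of
roots of `A` are `ℓ = 0` in `k`, so `φ (t ^ ℓ)` is constant outside a finite set, and one more application
of the relation gives `φ = 0`.

The final comparison (`subsingleton_of_H3`) identifies homogeneous cocycles with the inhomogeneous ones
that compute group cohomology.
-/

set_option linter.unusedVariables false
set_option linter.unusedSectionVars false

namespace FM

/-! ### Homogeneous cochains -/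

section Cochains
variable {G A : Type*} [AddCommGroup A]

/-- The coboundary of a homogeneous cochain of degree zero, that is, of a function of one group element. -/
def d0 (a : G → A) : G → G → A := fun g0 g1 => a g1 - a g0
/-- The coboundary of a homogeneous cochain of degree one. -/
def d1 (a : G → G → A) : G → G → G → A := fun g0 g1 g2 => a g1 g2 - a g0 g2 + a g0 g1
/-- The coboundary of a homogeneous cochain of degree two. -/
def d2 (a : G → G → G → A) : G → G → G → G → A :=
  fun g0 g1 g2 g3 => a g1 g2 g3 - a g0 g2 g3 + a g0 g1 g3 - a g0 g1 g2
/-- The coboundary of a homogeneous cochain of degree three. -/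
def d3 (a : G → G → G → G → A) : G → G → G → G → G → A :=
  fun g0 g1 g2 g3 g4 =>
    a g1 g2 g3 g4 - a g0 g2 g3 g4 + a g0 g1 g3 g4 - a g0 g1 g2 g4 + a g0 g1 g2 g3

theorem d1_d0 (a : G → A) : d1 (d0 a) = 0 := by
  funext g0 g1 g2; simp only [d0, d1, Pi.zero_apply]; abel
theorem d2_d1 (a : G → G → A) : d2 (d1 a) = 0 := by
  funext g0 g1 g2 g3; simp only [d2, d1, Pi.zero_apply]; abel
theorem d3_d2 (a : G → G → G → A) : d3 (d2 a) = 0 := by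
  funext g0 g1 g2 g3 g4; simp only [d2, d3, Pi.zero_apply]; abel
end Cochains

section Inv
variable {G k : Type*} [Group G]
/-- Invariance of a homogeneous cochain of degree zero under left translation. -/
def I1 (a : G → k) : Prop := ∀ h g0, a (h * g0) = a g0
/-- Invariance of a homogeneous cochain of degree one under left translation. -/
def I2 (a : G → G → k) : Prop := ∀ h g0 g1, a (h * g0) (h * g1) = a g0 g1
/-- Invariance of a homogeneous cochain of degree two under left translation. -/
def I3 (a : G → G → G → k) : Prop := ∀ h g0 g1 g2, a (h * g0) (h * g1) (h * g2) = a g0 g1 g2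
/-- Invariance of a homogeneous cochain of degree three under left translation. -/
def I4 (a : G → G → G → G → k) : Prop :=
  ∀ h g0 g1 g2 g3, a (h * g0) (h * g1) (h * g2) (h * g3) = a g0 g1 g2 g3
variable {X : Type*} [MulAction G X]
/-- Invariance of a cochain of degree zero with values in the functions on a `G`-set `X`; equivalently,
equivariance of the cochain for the translation action on functions. -/
def XI1 (a : G → X → k) : Prop := ∀ h g0 x, a (h * g0) (h • x) = a g0 x
/-- Invariance of a cochain of degree one with values in the functions on a `G`-set `X`. -/
def XI2 (a : G → G → X → k) : Prop := ∀ h g0 g1 x, a (h * g0) (h * g1) (h • x) = a g0 g1 x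
/-- Invariance of a cochain of degree two with values in the functions on a `G`-set `X`. -/
def XI3 (a : G → G → G → X → k) : Prop :=
  ∀ h g0 g1 g2 x, a (h * g0) (h * g1) (h * g2) (h • x) = a g0 g1 g2 x
/-- Invariance of a cochain of degree three with values in the functions on a `G`-set `X`. -/
def XI4 (a : G → G → G → G → X → k) : Prop :=
  ∀ h g0 g1 g2 g3 x, a (h * g0) (h * g1) (h * g2) (h * g3) (h • x) = a g0 g1 g2 g3 x
end Inv

section Coh
variable {G k : Type*} [Group G] [AddCommGroup k]
/-- Invariant cocycles of degree one with trivial coefficients. -/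
structure Z1 (F : G → G → k) : Prop where
  inv : I2 F
  cyc : d1 F = 0
/-- Invariant cocycles of degree two with trivial coefficients. -/
structure Z2 (F : G → G → G → k) : Prop where
  inv : I3 F
  cyc : d2 F = 0
/-- Invariant cocycles of degree three with trivial coefficients. -/
structure Z3 (F : G → G → G → G → k) : Prop where
  inv : I4 F
  cyc : d3 F = 0
/-- Cochains of degree one that are the coboundary of an invariant cochain. -/
def B1 (F : G → G → k) : Prop := ∃ b, I1 b ∧ d0 b = F
/-- Cochains of degree two that are the coboundary of an invariant cochain. -/
def B2 (F : G → G → G → k) : Prop := ∃ b, I2 b ∧ d1 b = F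
/-- Cochains of degree three that are the coboundary of an invariant cochain. -/
def B3 (F : G → G → G → G → k) : Prop := ∃ b, I3 b ∧ d2 b = F
variable (k G) in
/-- Vanishing of the cohomology of `G` in degree one with trivial coefficients `k`: every invariant
cocycle is the coboundary of an invariant cochain. -/
def H1 : Prop := ∀ F : G → G → k, Z1 F → B1 F
variable (k G) in
/-- Vanishing of the cohomology of `G` in degree two with trivial coefficients `k`: every invariant
cocycle is the coboundary of an invariant cochain. -/
def H2 : Prop := ∀ F : G → G → G → k, Z2 F → B2 F
variable (k G) in
/-- Vanishing of the cohomology of `G` in degree three with trivial coefficients `k`: every invariant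
cocycle is the coboundary of an invariant cochain. -/
def H3 : Prop := ∀ F : G → G → G → G → k, Z3 F → B3 F

variable {X : Type*} [MulAction G X]
/-- Invariant cocycles of degree one with values in the functions on a `G`-set `X`. -/
structure XZ1 (F : G → G → X → k) : Prop where
  inv : XI2 F
  cyc : d1 F = 0
/-- Invariant cocycles of degree two with values in the functions on a `G`-set `X`. -/
structure XZ2 (F : G → G → G → X → k) : Prop where
  inv : XI3 F
  cyc : d2 F = 0
/-- Invariant cocycles of degree three with values in the functions on a `G`-set `X`. -/
structure XZ3 (F : G → G → G → G → X → k) : Prop where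
  inv : XI4 F
  cyc : d3 F = 0
/-- Cochains of degree one with values in the functions on `X` that are the coboundary of an invariant one. -/
def XB1 (F : G → G → X → k) : Prop := ∃ b, XI1 b ∧ d0 b = F
/-- Cochains of degree two with values in the functions on `X` that are the coboundary of an invariant one. -/
def XB2 (F : G → G → G → X → k) : Prop := ∃ b, XI2 b ∧ d1 b = F
/-- Cochains of degree three with values in the functions on `X` that are the coboundary of an invariant one. -/
def XB3 (F : G → G → G → G → X → k) : Prop := ∃ b, XI3 b ∧ d2 b = F
end Coh

/-! ### Linear compactness -/

/-- A system of linear equations over a field, each in finitely many unknowns, is solvable as soon as all its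
finite subsystems are. Row `i` of the system has the coefficients `bd i` and the right-hand side `f i`. -/
theorem LC {I J k : Type*} [Field k] (bd : I → J →₀ k) (f : I → k)
    (h : ∀ s : Finset I, ∃ g : J → k, ∀ i ∈ s, (bd i).sum (fun j c => c * g j) = f i) :
    ∃ g : J → k, ∀ i, (bd i).sum (fun j c => c * g j) = f i := by
  let Φ := Finsupp.linearCombination k bd
  let fl := Finsupp.linearCombination k f
  have hker : LinearMap.ker Φ ≤ LinearMap.ker fl := by
    intro v hv
    obtain ⟨g, hg⟩ := h v.support
    let L := Finsupp.linearCombination k g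
    have h1 : L (Φ v) = fl v := by
      simp only [Φ, fl, Finsupp.linearCombination_apply, Finsupp.sum, map_sum, map_smul]
      refine Finset.sum_congr rfl fun i hi => ?_
      rw [← hg i hi]
      simp [L, Finsupp.linearCombination_apply, Finsupp.sum]
    rw [LinearMap.mem_ker] at hv ⊢
    rw [← h1, hv, map_zero]
  obtain ⟨L, hL⟩ : ∃ L : (J →₀ k) →ₗ[k] k, L ∘ₗ Φ = fl := by
    have : fl ∈ LinearMap.range (Φ.dualMap) := by
      rw [LinearMap.range_dualMap_eq_dualAnnihilator_ker]
      rw [Submodule.mem_dualAnnihilator]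
      intro w hw; exact hker hw
    obtain ⟨L, hL⟩ := this
    exact ⟨L, hL⟩
  refine ⟨fun j => L (Finsupp.single j 1), fun i => ?_⟩
  have h2 := LinearMap.congr_fun hL (Finsupp.single i 1)
  simp only [LinearMap.comp_apply, Φ, fl, Finsupp.linearCombination_single, one_smul] at h2
  rw [← h2]
  conv_rhs => rw [← Finsupp.sum_single (bd i)]
  rw [Finsupp.sum, Finsupp.sum, map_sum]
  refine Finset.sum_congr rfl fun j _ => ?_
  rw [← smul_eq_mul, ← map_smul, Finsupp.smul_single, smul_eq_mul, mul_one]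

/-! ### Complexes of generic tuples -/

/-- A notion of tuples in general position in a `G`-set `Y`: it is `G`-invariant, passes to faces, and any finitely
many generic tuples of the same length can be coned off by a common point `w`. -/
structure GenCx (G Y : Type*) [Group G] [MulAction G Y] where
  Gen : ∀ {p : ℕ}, (Fin p → Y) → Prop
  face : ∀ {p : ℕ} (t : Fin (p+1) → Y) (i : Fin (p+1)), Gen t → Gen (fun j => t (i.succAbove j))
  inv : ∀ {p : ℕ} (g : G) (t : Fin p → Y), Gen t → Gen (fun j => g • t j)
  nil : ∀ t : Fin 0 → Y, Gen t
  cone : ∀ {p : ℕ} (s : Finset (Fin p → Y)), (∀ t ∈ s, Gen t) →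
    ∃ w, ∀ t ∈ s, Gen (Fin.cons w t : Fin (p+1) → Y)

namespace GenCx
variable {G Y k : Type*} [Group G] [MulAction G Y] (C : GenCx G Y) [Field k]

/-- The generic tuples of length `p + 1`, the `p`-simplices of the complex. -/
@[ext] structure X (p : ℕ) where
  val : Fin (p+1) → Y
  gen : C.Gen val

instance (p : ℕ) : MulAction G (C.X p) where
  smul g t := ⟨fun j => g • t.1 j, C.inv g t.1 t.2⟩
  one_smul t := X.ext (funext fun j => one_smul _ _)
  mul_smul g h t := X.ext (funext fun j => mul_smul _ _ _)

theorem smul_val {p : ℕ} (g : G) (t : C.X p) (j) : (g • t).1 j = g • t.1 j := rfl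

/-- The `i`-th face of a simplex. -/
def fc {p : ℕ} (i : Fin (p+2)) (t : C.X (p+1)) : C.X p := ⟨fun j => t.1 (i.succAbove j), C.face t.1 i t.2⟩

theorem fc_smul {p : ℕ} (i : Fin (p+2)) (g : G) (t : C.X (p+1)) : C.fc i (g • t) = g • C.fc i t := rfl

/-- The differential of the complex of functions on generic tuples. -/
def D {p : ℕ} : (C.X p → k) →+ (C.X (p+1) → k) where
  toFun f t := ∑ i : Fin (p+2), (-1 : k)^(i : ℕ) * f (C.fc i t)
  map_zero' := by funext t; simp
  map_add' f g := by funext t; simp [mul_add, Finset.sum_add_distrib]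

theorem D_apply {p : ℕ} (f : C.X p → k) (t : C.X (p+1)) :
    C.D f t = ∑ i : Fin (p+2), (-1 : k)^(i : ℕ) * f (C.fc i t) := rfl

theorem D_equiv {p : ℕ} (f : C.X p → k) (h : G) :
    C.D (fun x => f (h • x)) = fun x => C.D f (h • x) := by
  funext t; simp only [D_apply, fc_smul]

theorem D_D {p : ℕ} (f : C.X p → k) : C.D (C.D f) = 0 := by
  funext t
  simp only [D_apply, Finset.mul_sum, Pi.zero_apply]
  rw [← Finset.sum_product' (s := Finset.univ) (t := Finset.univ)
    (f := fun (x : Fin (p+3)) (i : Fin (p+2)) =>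
      (-1 : k)^(x : ℕ) * ((-1 : k)^(i : ℕ) * f (C.fc i (C.fc x t))))]
  have key : ∀ (i : Fin (p+3)) (j : Fin (p+2)),
      ((i.succAbove j : ℕ) + (j.predAbove i : ℕ) = i + j + 1 ∨
        (i.succAbove j : ℕ) + (j.predAbove i : ℕ) + 1 = i + j) ∧ i.succAbove j ≠ i := by
    intro i j
    refine ⟨?_, Fin.succAbove_ne i j⟩
    by_cases hij : j.castSucc < i
    · right
      rw [Fin.succAbove_of_castSucc_lt _ _ hij, Fin.predAbove_of_castSucc_lt _ _ hij]
      have : (j : ℕ) < i := hij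
      simp; omega
    · left
      rw [Fin.succAbove_of_le_castSucc _ _ (not_lt.1 hij), Fin.predAbove_of_le_castSucc _ _ (not_lt.1 hij)]
      simp; omega
  have hf : ∀ (i : Fin (p+3)) (j : Fin (p+2)),
      C.fc (j.predAbove i) (C.fc (i.succAbove j) t) = C.fc j (C.fc i t) := by
    intro i j
    apply X.ext; funext m
    simp only [fc]
    rw [Fin.succAbove_succAbove_succAbove_predAbove]
  refine Finset.sum_involution (fun x _ => (x.1.succAbove x.2, x.2.predAbove x.1)) ?_ ?_ ?_ ?_
  · rintro ⟨i, j⟩ -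
    simp only [hf]
    rw [← mul_assoc, ← mul_assoc, ← pow_add, ← pow_add, ← add_mul]
    rcases (key i j).1 with h | h
    · rw [h, pow_succ]; ring
    · rw [← h, pow_succ]; ring
  · rintro ⟨i, j⟩ - _ h
    exact (key i j).2 (congrArg Prod.fst h)
  · intros; simp
  · rintro ⟨i, j⟩ -
    exact Prod.ext (Fin.succAbove_succAbove_predAbove i j) (Fin.predAbove_predAbove_succAbove i j)

theorem D_const_one (c : k) : C.D (p := 0) (fun _ => c) = 0 := by
  funext t; simp [D_apply, Fin.sum_univ_succ]

end GenCx
end FM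

namespace FM

/-! ### Exactness and hypercohomology -/

namespace GenCx
variable {G Y k : Type*} [Group G] [MulAction G Y] (C : GenCx G Y) [Field k]

theorem cone1 {p : ℕ} (t : Fin p → Y) (ht : C.Gen t) : ∃ w, C.Gen (Fin.cons w t : Fin (p+1) → Y) := by
  obtain ⟨w, hw⟩ := C.cone {t} (by simpa using ht)
  exact ⟨w, hw t (by simp)⟩

theorem nonempty0 : Nonempty (C.X 0) := by
  obtain ⟨w, hw⟩ := C.cone1 _ (C.nil Fin.elim0)
  exact ⟨⟨_, hw⟩⟩

theorem cons_face {p : ℕ} (w : Y) (t : Fin (p+1) → Y) (i : Fin (p+1)) :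
    (fun j => (Fin.cons w t : Fin (p+2) → Y) (i.succ.succAbove j)) =
      Fin.cons w (fun j => t (i.succAbove j)) :=
  Fin.cons_comp_succ_succAbove w t i

theorem D_cons {p : ℕ} (f : C.X (p+1) → k) (w : Y) (t : C.X (p+1))
    (h : C.Gen (Fin.cons w t.1 : Fin (p+3) → Y)) 
    (h' : ∀ i, C.Gen (Fin.cons w (C.fc i t).1 : Fin (p+2) → Y)) :
    C.D f ⟨_, h⟩ = f t - ∑ i : Fin (p+2), (-1 : k)^(i : ℕ) * f ⟨_, h' i⟩ := by
  rw [D_apply, Fin.sum_univ_succ]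
  have h0 : C.fc 0 ⟨_, h⟩ = t := by
    apply X.ext; funext j; simp [fc]
  have hs : ∀ i : Fin (p+2), C.fc i.succ ⟨_, h⟩ = ⟨_, h' i⟩ := by
    intro i; apply X.ext; exact cons_face w t.1 i
  simp only [h0, hs, Fin.val_zero, pow_zero, one_mul, Fin.val_succ, pow_succ, mul_neg, mul_one,
    neg_mul, Finset.sum_neg_distrib, sub_eq_add_neg]

theorem cons_face_gen {p : ℕ} (w : Y) (t : C.X (p+1))
    (h : C.Gen (Fin.cons w t.1 : Fin (p+3) → Y)) (i) :
    C.Gen (Fin.cons w (C.fc i t).1 : Fin (p+2) → Y) := by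
  have := C.face _ i.succ h
  rw [cons_face] at this
  exact this

/-- The complex of functions on generic tuples is exact in positive degrees. Finitely many of the equations
`D g = f` are solved by coning off the tuples involved with a common point; `LC` does the rest. -/
theorem exact_succ {p : ℕ} (f : C.X (p+1) → k) (hf : C.D f = 0) : ∃ g : C.X p → k, C.D g = f := by
  classical
  obtain ⟨g, hg⟩ := LC (I := C.X (p+1)) (J := C.X p)
    (fun t => ∑ i : Fin (p+2), Finsupp.single (C.fc i t) ((-1 : k)^(i : ℕ))) f (by
      intro s
      obtain ⟨w, hw⟩ := C.cone (s.image X.val) (by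
        intro t ht
        obtain ⟨a, -, rfl⟩ := Finset.mem_image.1 ht
        exact a.2)
      refine ⟨fun u => if h : C.Gen (Fin.cons w u.1 : Fin (p+2) → Y) then f ⟨_, h⟩ else 0, ?_⟩
      intro t ht
      have hg := hw t.1 (Finset.mem_image_of_mem _ ht)
      have h0 := congrFun hf ⟨_, hg⟩
      rw [C.D_cons f w t hg (C.cons_face_gen w t hg), Pi.zero_apply, sub_eq_zero] at h0
      rw [h0, ← Finsupp.sum_finsetSum_index (by simp) (by intros; ring)]
      refine Finset.sum_congr rfl fun i _ => ?_
      rw [Finsupp.sum_single_index (by simp)]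
      dsimp only
      rw [dif_pos (C.cons_face_gen w t hg i)])
  refine ⟨g, ?_⟩
  funext t
  rw [← hg t, ← Finsupp.sum_finsetSum_index (by simp) (by intros; ring), D_apply]
  refine Finset.sum_congr rfl fun i _ => ?_
  rw [Finsupp.sum_single_index (by simp)]

/-- In degree zero the kernel of `D` consists of the constant functions. -/
theorem exact_zero (f : C.X 0 → k) (hf : C.D f = 0) : ∃ c : k, f = fun _ => c := by
  classical
  obtain ⟨x⟩ := C.nonempty0
  refine ⟨f x, funext fun y => ?_⟩
  obtain ⟨w, hw⟩ := C.cone {x.1, y.1} (by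
    intro t ht
    simp only [Finset.mem_insert, Finset.mem_singleton] at ht
    rcases ht with rfl | rfl
    exacts [x.2, y.2])
  have key : ∀ z : C.X 0, ∀ h : C.Gen (Fin.cons w z.1 : Fin 2 → Y), f z = f (C.fc 1 ⟨_, h⟩) := by
    intro z h
    have h1 := congrFun hf ⟨_, h⟩
    rw [D_apply, Fin.sum_univ_two] at h1
    have h0 : C.fc 0 ⟨_, h⟩ = z := by
      apply X.ext; funext j; simp [fc]
    rw [h0] at h1
    simp only [Fin.val_zero, pow_zero, one_mul, Fin.val_one, pow_one, neg_mul, Pi.zero_apply] at h1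
    exact sub_eq_zero.1 (by rw [sub_eq_add_neg]; exact h1)
  have hx := hw x.1 (by simp)
  have hy := hw y.1 (by simp)
  rw [key x hx, key y hy]
  congr 1
  apply X.ext; funext j
  fin_cases j
  rfl

/-! ### Lifting invariant cochains -/

/-- An invariant cochain with values in the kernel of `D` lifts through `D` to an invariant cochain: the lift is
chosen at the identity and transported by translation. -/
theorem lift1 {p : ℕ} (a : G → C.X (p+1) → k) (ha : XI1 a) (h0 : ∀ g, C.D (a g) = 0) :
    ∃ b : G → C.X p → k, XI1 b ∧ ∀ g, C.D (b g) = a g := by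
  obtain ⟨b, hb⟩ := C.exact_succ (a 1) (h0 1)
  refine ⟨fun g x => b (g⁻¹ • x), ?_, ?_⟩
  · intro h g x; simp [mul_smul]
  · intro g
    rw [D_equiv, hb]
    funext x
    rw [← ha g]; simp

/-- The analogue of `lift1` for cochains of two variables. -/
theorem lift2 {p : ℕ} (a : G → G → C.X (p+1) → k) (ha : XI2 a) (h0 : ∀ g g', C.D (a g g') = 0) :
    ∃ b : G → G → C.X p → k, XI2 b ∧ ∀ g g', C.D (b g g') = a g g' := by
  choose b hb using fun g => C.exact_succ (a 1 g) (h0 1 g)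
  refine ⟨fun g g' x => b (g⁻¹ * g') (g⁻¹ • x), ?_, ?_⟩
  · intro h g g' x; simp [mul_smul, mul_assoc]
  · intro g g'
    rw [D_equiv, hb]
    funext x
    rw [← ha g]; simp

theorem D_d0 {p : ℕ} (a : G → C.X p → k) (g0 g1) :
    C.D (d0 a g0 g1) = d0 (fun g => C.D (a g)) g0 g1 := by
  simp only [d0, map_sub]
theorem D_d1 {p : ℕ} (a : G → G → C.X p → k) (g0 g1 g2) :
    C.D (d1 a g0 g1 g2) = d1 (fun g g' => C.D (a g g')) g0 g1 g2 := by
  simp only [d1, map_sub, map_add]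
theorem D_d2 {p : ℕ} (a : G → G → G → C.X p → k) (g0 g1 g2 g3) :
    C.D (d2 a g0 g1 g2 g3) = d2 (fun g g' g'' => C.D (a g g' g'')) g0 g1 g2 g3 := by
  simp only [d2, map_sub, map_add]

theorem D_inv {p : ℕ} {f g : C.X p → k} {h : G} (hfg : ∀ x, f (h • x) = g x) (x) :
    C.D f (h • x) = C.D g x := by
  have := C.D_equiv f h
  rw [← congrFun this x]
  exact congrFun (congrArg _ (funext hfg)) x

/-- The hypercohomology spectral sequence of `G` acting on an acyclic complex of generic tuples, in total degree
three. The hypothesis `h03` says that the class dies in the column of points, `h12` is vanishing in the column of pairs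
modulo classes coming from points, `h21` is vanishing in the column of triples, and `h30` is exactness of invariant
functions at quadruples. -/
theorem machine3 (F : G → G → G → G → k) (hF : Z3 F)
    (h03 : XB3 (fun g0 g1 g2 g3 (_ : C.X 0) => F g0 g1 g2 g3))
    (h12 : ∀ c : G → G → G → C.X 1 → k, XZ2 c → (∀ g0 g1 g2, C.D (c g0 g1 g2) = 0) →
      ∃ b : G → G → G → C.X 0 → k, XZ2 b ∧
        XB2 (fun g0 g1 g2 => c g0 g1 g2 - C.D (b g0 g1 g2)))
    (h21 : ∀ c : G → G → C.X 2 → k, XZ1 c → XB1 c)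
    (h30 : ∀ f : C.X 3 → k, (∀ (g : G) x, f (g • x) = f x) → C.D f = 0 →
      ∃ e : C.X 2 → k, (∀ (g : G) x, e (g • x) = e x) ∧ C.D e = f) : B3 F := by
  obtain ⟨a0, ia0, ha0⟩ := h03
  -- c = D a0
  obtain ⟨b, hb, a1, ia1, ha1⟩ := h12 (fun g0 g1 g2 => C.D (a0 g0 g1 g2))
    ⟨fun h g0 g1 g2 x => C.D_inv (fun x => ia0 h g0 g1 g2 x) x, by
      funext g0 g1 g2 g3
      rw [← D_d2, ha0]
      exact C.D_const_one _⟩ (fun g0 g1 g2 => C.D_D _)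
  set a0' : G → G → G → C.X 0 → k := fun g0 g1 g2 => a0 g0 g1 g2 - b g0 g1 g2 with ha0'
  have ia0' : XI3 a0' := fun h g0 g1 g2 x => by
    simp only [ha0', Pi.sub_apply, ia0 h, hb.inv h]
  have da0' : d2 a0' = fun g0 g1 g2 g3 (_ : C.X 0) => F g0 g1 g2 g3 := by
    rw [← ha0]
    funext g0 g1 g2 g3
    have := congrFun (congrFun (congrFun (congrFun hb.cyc g0) g1) g2) g3
    simp only [d2, ha0', Pi.zero_apply] at this ⊢
    rw [← sub_eq_zero, ← neg_eq_zero, ← this]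
    abel
  have Da0' : ∀ g0 g1 g2, C.D (a0' g0 g1 g2) = d1 a1 g0 g1 g2 := by
    intro g0 g1 g2; rw [ha1]; simp only [ha0', map_sub]
  obtain ⟨a2, ia2, ha2⟩ := h21 (fun g0 g1 => C.D (a1 g0 g1))
    ⟨fun h g0 g1 x => C.D_inv (fun x => ia1 h g0 g1 x) x, by
      funext g0 g1 g2
      rw [← D_d1, ← Da0', D_D]; rfl⟩
  have hc : ∀ g0 g1, C.D (a2 g0) = C.D (a2 g1) := by
    intro g0 g1
    have h := C.D_d0 a2 g0 g1
    rw [ha2, D_D] at h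
    exact (sub_eq_zero.1 h.symm).symm
  obtain ⟨e, ie, he⟩ := h30 (C.D (a2 1)) (fun g x => by
    rw [← congrFun (hc (g * 1) 1)]; exact C.D_inv (fun x => ia2 g 1 x) x) (C.D_D _)
  set a2' : G → C.X 2 → k := fun g => a2 g - e with ha2'
  obtain ⟨u1, iu1, hu1⟩ := C.lift1 a2' (fun h g x => by
    simp only [ha2', Pi.sub_apply, ia2 h, ie]) (fun g => by
      rw [ha2', map_sub, he, hc g 1, sub_self])
  obtain ⟨u0, iu0, hu0⟩ := C.lift2 (fun g0 g1 => a1 g0 g1 - d0 u1 g0 g1) (fun h g0 g1 x => by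
    simp only [Pi.sub_apply, d0, ia1 h, iu1 h]) (fun g0 g1 => by
      rw [map_sub, D_d0]
      have := congrFun (congrFun ha2 g0) g1
      rw [← this]
      simp only [d0, hu1, ha2']
      abel)
  have hz : ∀ g0 g1 g2, C.D (a0' g0 g1 g2 - d1 u0 g0 g1 g2) = 0 := by
    intro g0 g1 g2
    rw [map_sub, Da0', D_d1]
    simp only [d1, hu0, d0]
    abel
  choose u hu using fun g0 g1 g2 => C.exact_zero _ (hz g0 g1 g2)
  obtain ⟨x0⟩ := C.nonempty0
  refine ⟨u, fun h g0 g1 g2 => ?_, ?_⟩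
  · have e1 := congrFun (hu (h*g0) (h*g1) (h*g2)) (h • x0)
    have e2 := congrFun (hu g0 g1 g2) x0
    rw [← e1, ← e2]
    simp only [d1, Pi.sub_apply, Pi.add_apply, ia0' h, iu0 h]
  · funext g0 g1 g2 g3
    have e1 := congrFun (congrFun (congrFun (congrFun (congrFun da0' g0) g1) g2) g3) x0
    have e2 := fun g0 g1 g2 => congrFun (hu g0 g1 g2) x0
    simp only [d2, d1, Pi.sub_apply, Pi.add_apply] at e1 e2 ⊢
    rw [← e1, ← e2, ← e2, ← e2, ← e2]
    abel

/-- The analogue of `machine3` in total degree two. -/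
theorem machine2 (F : G → G → G → k) (hF : Z2 F)
    (h02 : XB2 (fun g0 g1 g2 (_ : C.X 0) => F g0 g1 g2))
    (h11 : ∀ c : G → G → C.X 1 → k, XZ1 c → XB1 c)
    (h20 : ∀ f : C.X 2 → k, (∀ (g : G) x, f (g • x) = f x) → C.D f = 0 →
      ∃ e : C.X 1 → k, (∀ (g : G) x, e (g • x) = e x) ∧ C.D e = f) : B2 F := by
  obtain ⟨a0, ia0, ha0⟩ := h02
  obtain ⟨a1, ia1, ha1⟩ := h11 (fun g0 g1 => C.D (a0 g0 g1))
    ⟨fun h g0 g1 x => C.D_inv (fun x => ia0 h g0 g1 x) x, by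
      funext g0 g1 g2
      rw [← D_d1, ha0]
      exact C.D_const_one _⟩
  have hc : ∀ g0 g1, C.D (a1 g0) = C.D (a1 g1) := by
    intro g0 g1
    have h := C.D_d0 a1 g0 g1
    rw [ha1, D_D] at h
    exact (sub_eq_zero.1 h.symm).symm
  obtain ⟨e, ie, he⟩ := h20 (C.D (a1 1)) (fun g x => by
    rw [← congrFun (hc (g * 1) 1)]; exact C.D_inv (fun x => ia1 g 1 x) x) (C.D_D _)
  obtain ⟨u0, iu0, hu0⟩ := C.lift1 (fun g => a1 g - e) (fun h g x => by
    simp only [Pi.sub_apply, ia1 h, ie]) (fun g => by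
      rw [map_sub, he, hc g 1, sub_self])
  have hz : ∀ g0 g1, C.D (a0 g0 g1 - d0 u0 g0 g1) = 0 := by
    intro g0 g1
    rw [map_sub, D_d0]
    have := congrFun (congrFun ha1 g0) g1
    rw [← this]
    simp only [hu0, d0]
    abel
  choose u hu using fun g0 g1 => C.exact_zero _ (hz g0 g1)
  obtain ⟨x0⟩ := C.nonempty0
  refine ⟨u, fun h g0 g1 => ?_, ?_⟩
  · have e1 := congrFun (hu (h*g0) (h*g1)) (h • x0)
    have e2 := congrFun (hu g0 g1) x0
    rw [← e1, ← e2]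
    simp only [d0, Pi.sub_apply, ia0 h, iu0 h]
  · funext g0 g1 g2
    have e1 := congrFun (congrFun (congrFun (congrFun ha0 g0) g1) g2) x0
    have e2 := fun g0 g1 => congrFun (hu g0 g1) x0
    simp only [d1, d0, Pi.sub_apply, Pi.add_apply] at e1 e2 ⊢
    rw [← e1, ← e2, ← e2, ← e2]
    abel
end GenCx
end FM

namespace FM
/-! ### Shapiro's lemma -/

section Shapiro
variable {G X k : Type*} [Group G] [MulAction G X] [Field k]

theorem d1_zero {A : Type*} [AddCommGroup A] {F : G → G → A} (h : d1 F = 0) (a b c : G) :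
    F b c - F a c + F a b = 0 := congrFun (congrFun (congrFun h a) b) c
theorem d2_zero {A : Type*} [AddCommGroup A] {F : G → G → G → A} (h : d2 F = 0) (a b c d : G) :
    F b c d - F a c d + F a b d - F a b c = 0 :=
  congrFun (congrFun (congrFun (congrFun h a) b) c) d
theorem d3_zero {A : Type*} [AddCommGroup A] {F : G → G → G → G → A} (h : d3 F = 0) (a b c d e : G) :
    F b c d e - F a c d e + F a b d e - F a b c e + F a b c d = 0 :=
  congrFun (congrFun (congrFun (congrFun (congrFun h a) b) c) d) e
theorem xd1_zero {F : G → G → X → k} (h : d1 F = 0) (a b c : G) (x) :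
    F b c x - F a c x + F a b x = 0 := congrFun (d1_zero h a b c) x
theorem xd2_zero {F : G → G → G → X → k} (h : d2 F = 0) (a b c d : G) (x) :
    F b c d x - F a c d x + F a b d x - F a b c x = 0 := congrFun (d2_zero h a b c d) x
theorem xd3_zero {F : G → G → G → G → X → k} (h : d3 F = 0) (a b c d e : G) (x) :
    F b c d e x - F a c d e x + F a b d e x - F a b c e x + F a b c d x = 0 :=
  congrFun (d3_zero h a b c d e) x

/-- Orbit representatives `rep x`, with elements `σ x` transporting them to `x`. -/
theorem exists_section : ∃ (rep : X → X) (σ : X → G),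
    (∀ (h : G) x, rep (h • x) = rep x) ∧ ∀ x, σ x • rep x = x := by
  classical
  let rep : X → X := fun x => (Quotient.mk (MulAction.orbitRel G X) x).out
  have h1 : ∀ x, ∃ g : G, g • rep x = x := by
    intro x
    have : (MulAction.orbitRel G X) (rep x) x := Quotient.exact (Quotient.out_eq _)
    have := (MulAction.orbitRel G X).symm' this
    rw [MulAction.orbitRel_apply] at this
    exact this
  choose σ hσ using h1
  refine ⟨rep, σ, fun h x => ?_, hσ⟩
  have : Quotient.mk (MulAction.orbitRel G X) (h • x) = Quotient.mk (MulAction.orbitRel G X) x :=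
    Quotient.sound (MulAction.orbitRel_apply.2 ⟨h, rfl⟩)
  simp only [rep, this]

/-- A primitive defined on a subgroup extends by zero to a function on `G` that still solves the
equation, and is invariant, along the subgroup. -/
theorem B1.ext {S : Subgroup G} {F : G → G → k} (h : B1 (fun a b : S => F a b)) :
    ∃ b : G → k, (∀ h ∈ S, ∀ g0 ∈ S, b (h*g0) = b g0) ∧
      ∀ g0 ∈ S, ∀ g1 ∈ S, b g1 - b g0 = F g0 g1 := by
  classical
  obtain ⟨b, ib, hb⟩ := h
  refine ⟨fun g => if h : g ∈ S then b ⟨g, h⟩ else 0, ?_, ?_⟩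
  · intro h hh g0 h0
    simp only [h0, S.mul_mem hh h0, dif_pos]
    exact ib ⟨h, hh⟩ ⟨g0, h0⟩
  · intro g0 h0 g1 h1
    simp only [h0, h1, dif_pos]
    exact congrFun (congrFun hb ⟨g0, h0⟩) ⟨g1, h1⟩

/-- The analogue of `B1.ext` in degree two. -/
theorem B2.ext {S : Subgroup G} {F : G → G → G → k} (h : B2 (fun a b c : S => F a b c)) :
    ∃ b : G → G → k, (∀ h ∈ S, ∀ g0 ∈ S, ∀ g1 ∈ S, b (h*g0) (h*g1) = b g0 g1) ∧
      ∀ g0 ∈ S, ∀ g1 ∈ S, ∀ g2 ∈ S, b g1 g2 - b g0 g2 + b g0 g1 = F g0 g1 g2 := by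
  classical
  obtain ⟨b, ib, hb⟩ := h
  refine ⟨fun g g' => if h : g ∈ S ∧ g' ∈ S then b ⟨g, h.1⟩ ⟨g', h.2⟩ else 0, ?_, ?_⟩
  · intro h hh g0 h0 g1 h1
    simp only [h0, h1, S.mul_mem hh h0, S.mul_mem hh h1, and_self, dif_pos]
    exact ib ⟨h, hh⟩ ⟨g0, h0⟩ ⟨g1, h1⟩
  · intro g0 h0 g1 h1 g2 h2
    simp only [h0, h1, h2, dif_pos, and_self]
    exact congrFun (congrFun (congrFun hb ⟨g0, h0⟩) ⟨g1, h1⟩) ⟨g2, h2⟩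

/-- The analogue of `B1.ext` in degree three. -/
theorem B3.ext {S : Subgroup G} {F : G → G → G → G → k} (h : B3 (fun a b c d : S => F a b c d)) :
    ∃ b : G → G → G → k, (∀ h ∈ S, ∀ g0 ∈ S, ∀ g1 ∈ S, ∀ g2 ∈ S,
        b (h*g0) (h*g1) (h*g2) = b g0 g1 g2) ∧
      ∀ g0 ∈ S, ∀ g1 ∈ S, ∀ g2 ∈ S, ∀ g3 ∈ S,
        b g1 g2 g3 - b g0 g2 g3 + b g0 g1 g3 - b g0 g1 g2 = F g0 g1 g2 g3 := by
  classical
  obtain ⟨b, ib, hb⟩ := h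
  refine ⟨fun g g' g'' => if h : g ∈ S ∧ g' ∈ S ∧ g'' ∈ S then
    b ⟨g, h.1⟩ ⟨g', h.2.1⟩ ⟨g'', h.2.2⟩ else 0, ?_, ?_⟩
  · intro h hh g0 h0 g1 h1 g2 h2
    simp only [h0, h1, h2, S.mul_mem hh h0, S.mul_mem hh h1, S.mul_mem hh h2, and_self, dif_pos]
    exact ib ⟨h, hh⟩ ⟨g0, h0⟩ ⟨g1, h1⟩ ⟨g2, h2⟩
  · intro g0 h0 g1 h1 g2 h2 g3 h3
    simp only [h0, h1, h2, h3, dif_pos, and_self]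
    exact congrFun (congrFun (congrFun (congrFun hb ⟨g0, h0⟩) ⟨g1, h1⟩) ⟨g2, h2⟩) ⟨g3, h3⟩

/-- An equivariant retraction `R g x = g * σ (g⁻¹ • x)` of `G` onto a coset of a stabilizer: `R g x` carries the
representative of the orbit of `x` to `x`. -/
theorem exists_R : ∃ (rep : X → X) (σ : X → G) (R : G → X → G),
    (∀ (h : G) x, rep (h • x) = rep x) ∧ (∀ x, σ x • rep x = x) ∧
    (∀ h g x, R (h * g) (h • x) = h * R g x) ∧
    (∀ g x, (σ x)⁻¹ * R g x ∈ MulAction.stabilizer G (rep x)) ∧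
    (∀ h x, (σ (h • x))⁻¹ * h * σ x ∈ MulAction.stabilizer G (rep x)) := by
  obtain ⟨rep, σ, h1, h2⟩ := exists_section (G := G) (X := X)
  have e : ∀ x, (σ x)⁻¹ • x = rep x := fun x => by
    rw [inv_smul_eq_iff]; exact (h2 x).symm
  have e2 : ∀ x y, rep x = rep y → σ x • rep y = x := fun x y h => by rw [← h, h2]
  refine ⟨rep, σ, fun g x => g * σ (g⁻¹ • x), h1, h2, ?_, ?_, ?_⟩
  · intro h g x; simp [mul_smul, mul_assoc]
  · intro g x
    rw [MulAction.mem_stabilizer_iff]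
    rw [mul_smul, mul_smul, e2 _ _ (h1 _ _), smul_inv_smul, e]
  · intro h x
    rw [MulAction.mem_stabilizer_iff, mul_smul, mul_smul, h2, e, h1]

/-- Shapiro's lemma in degree one: a cocycle with values in the functions on `X` whose restrictions to all
stabilizers bound is a coboundary. A primitive on the stabilizer is transported along `R`, and the difference between
`g` and `R g x` is corrected by a prism homotopy. -/
theorem shapiro1 (F : G → G → X → k) (hF : XZ1 F)
    (hs : ∀ x, B1 (fun a b : MulAction.stabilizer G x => F a b x)) : XB1 F := by
  obtain ⟨rep, σ, R, h1, h2, hR, hm, hn⟩ := exists_R (G := G) (X := X)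
  choose b ib hb using fun x => B1.ext (F := fun a b => F a b x) (hs x)
  refine ⟨fun g x => b (rep x) ((σ x)⁻¹ * R g x) - F g (R g x) x, ?_, ?_⟩
  · intro h g x
    dsimp only
    have e : ∀ g, (σ (h • x))⁻¹ * R (h * g) (h • x) =
      ((σ (h • x))⁻¹ * h * σ x) * ((σ x)⁻¹ * R g x) := fun g => by rw [hR]; group
    rw [h1, e, ib _ _ (hn h x) _ (hm _ _), hR, hF.inv]
  · funext g0 g1 x
    have e := hb (rep x) _ (hm g0 x) _ (hm g1 x)
    rw [← hF.inv (σ x), h2, mul_inv_cancel_left, mul_inv_cancel_left] at e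
    have c := xd1_zero hF.cyc
    simp only [d0, Pi.sub_apply]
    linear_combination e + c g0 (R g0 x) (R g1 x) x - c g0 g1 (R g1 x) x

/-- Shapiro's lemma in degree two, by the argument of `shapiro1`. -/
theorem shapiro2 (F : G → G → G → X → k) (hF : XZ2 F)
    (hs : ∀ x, B2 (fun a b c : MulAction.stabilizer G x => F a b c x)) : XB2 F := by
  obtain ⟨rep, σ, R, h1, h2, hR, hm, hn⟩ := exists_R (G := G) (X := X)
  choose b ib hb using fun x => B2.ext (F := fun a b c => F a b c x) (hs x)
  refine ⟨fun g g' x => b (rep x) ((σ x)⁻¹ * R g x) ((σ x)⁻¹ * R g' x) -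
    (F g (R g x) (R g' x) x - F g g' (R g' x) x), ?_, ?_⟩
  · intro h g g' x
    dsimp only
    have e : ∀ g, (σ (h • x))⁻¹ * R (h * g) (h • x) =
      ((σ (h • x))⁻¹ * h * σ x) * ((σ x)⁻¹ * R g x) := fun g => by rw [hR]; group
    rw [h1, e, e, ib _ _ (hn h x) _ (hm _ _) _ (hm _ _), hR, hR, hF.inv, hF.inv]
  · funext g0 g1 g2 x
    have e := hb (rep x) _ (hm g0 x) _ (hm g1 x) _ (hm g2 x)
    rw [← hF.inv (σ x), h2, mul_inv_cancel_left, mul_inv_cancel_left, mul_inv_cancel_left] at e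
    have c := xd2_zero hF.cyc
    simp only [d1, Pi.sub_apply, Pi.add_apply]
    linear_combination e + c g0 (R g0 x) (R g1 x) (R g2 x) x - c g0 g1 (R g1 x) (R g2 x) x
      + c g0 g1 g2 (R g2 x) x

/-- Shapiro's lemma in degree three, by the argument of `shapiro1`. -/
theorem shapiro3 (F : G → G → G → G → X → k) (hF : XZ3 F)
    (hs : ∀ x, B3 (fun a b c d : MulAction.stabilizer G x => F a b c d x)) : XB3 F := by
  obtain ⟨rep, σ, R, h1, h2, hR, hm, hn⟩ := exists_R (G := G) (X := X)
  choose b ib hb using fun x => B3.ext (F := fun a b c d => F a b c d x) (hs x)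
  refine ⟨fun g g' g'' x => 
    b (rep x) ((σ x)⁻¹ * R g x) ((σ x)⁻¹ * R g' x) ((σ x)⁻¹ * R g'' x) -
    (F g (R g x) (R g' x) (R g'' x) x - F g g' (R g' x) (R g'' x) x
      + F g g' g'' (R g'' x) x), ?_, ?_⟩
  · intro h g g' g'' x
    dsimp only
    have e : ∀ g, (σ (h • x))⁻¹ * R (h * g) (h • x) =
      ((σ (h • x))⁻¹ * h * σ x) * ((σ x)⁻¹ * R g x) := fun g => by rw [hR]; group
    rw [h1, e, e, e, ib _ _ (hn h x) _ (hm _ _) _ (hm _ _) _ (hm _ _), hR, hR, hR, 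
      hF.inv, hF.inv, hF.inv]
  · funext g0 g1 g2 g3 x
    have e := hb (rep x) _ (hm g0 x) _ (hm g1 x) _ (hm g2 x) _ (hm g3 x)
    rw [← hF.inv (σ x), h2, mul_inv_cancel_left, mul_inv_cancel_left, mul_inv_cancel_left,
      mul_inv_cancel_left] at e
    have c := xd3_zero hF.cyc
    simp only [d2, Pi.sub_apply, Pi.add_apply]
    linear_combination e + c g0 (R g0 x) (R g1 x) (R g2 x) (R g3 x) x
      - c g0 g1 (R g1 x) (R g2 x) (R g3 x) x
      + c g0 g1 g2 (R g2 x) (R g3 x) x - c g0 g1 g2 g3 (R g3 x) x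

end Shapiro

section Basic
variable {G H k : Type*} [Group G] [Group H] [Field k]

theorem Z1.comp {F : G → G → k} (hF : Z1 F) (φ : H →* G) : Z1 (fun a b => F (φ a) (φ b)) :=
  ⟨fun h a b => by simp only [map_mul, hF.inv (φ h)], by
    funext a b c; exact d1_zero hF.cyc _ _ _⟩
theorem Z2.comp {F : G → G → G → k} (hF : Z2 F) (φ : H →* G) :
    Z2 (fun a b c => F (φ a) (φ b) (φ c)) :=
  ⟨fun h a b c => by simp only [map_mul, hF.inv (φ h)], by
    funext a b c d; exact d2_zero hF.cyc _ _ _ _⟩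
theorem Z3.comp {F : G → G → G → G → k} (hF : Z3 F) (φ : H →* G) :
    Z3 (fun a b c d => F (φ a) (φ b) (φ c) (φ d)) :=
  ⟨fun h a b c d => by simp only [map_mul, hF.inv (φ h)], by
    funext a b c d e; exact d3_zero hF.cyc _ _ _ _ _⟩

theorem B1.comp {F : G → G → k} (hF : B1 F) (φ : H →* G) : B1 (fun a b => F (φ a) (φ b)) := by
  obtain ⟨b, ib, rfl⟩ := hF
  exact ⟨fun a => b (φ a), fun h a => by simp only [map_mul, ib (φ h)], rfl⟩
theorem B2.comp {F : G → G → G → k} (hF : B2 F) (φ : H →* G) :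
    B2 (fun a b c => F (φ a) (φ b) (φ c)) := by
  obtain ⟨b, ib, rfl⟩ := hF
  exact ⟨fun a a' => b (φ a) (φ a'), fun h a a' => by simp only [map_mul, ib (φ h)], rfl⟩
theorem B3.comp {F : G → G → G → G → k} (hF : B3 F) (φ : H →* G) :
    B3 (fun a b c d => F (φ a) (φ b) (φ c) (φ d)) := by
  obtain ⟨b, ib, rfl⟩ := hF
  exact ⟨fun a a' a'' => b (φ a) (φ a') (φ a''), fun h a a' a'' => by simp only [map_mul, ib (φ h)], rfl⟩

theorem H1.equiv (e : G ≃* H) (h : H1 G k) : H1 H k := fun F hF => by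
  simpa using (h _ (hF.comp e.toMonoidHom)).comp e.symm.toMonoidHom
theorem H2.equiv (e : G ≃* H) (h : H2 G k) : H2 H k := fun F hF => by
  simpa using (h _ (hF.comp e.toMonoidHom)).comp e.symm.toMonoidHom
theorem H3.equiv (e : G ≃* H) (h : H3 G k) : H3 H k := fun F hF => by
  simpa using (h _ (hF.comp e.toMonoidHom)).comp e.symm.toMonoidHom

/-- The value of an equivariant cocycle at a point is a cocycle of the stabilizer of this point. -/
theorem XZ1.stab {X : Type*} [MulAction G X] {F : G → G → X → k} (hF : XZ1 F) (x : X) :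
    Z1 (fun a b : MulAction.stabilizer G x => F a b x) :=
  ⟨fun h a b => by
    have := hF.inv h a b x
    rwa [MulAction.mem_stabilizer_iff.1 h.2] at this, by
    funext a b c; exact xd1_zero hF.cyc _ _ _ x⟩
theorem XZ2.stab {X : Type*} [MulAction G X] {F : G → G → G → X → k} (hF : XZ2 F) (x : X) :
    Z2 (fun a b c : MulAction.stabilizer G x => F a b c x) :=
  ⟨fun h a b c => by
    have := hF.inv h a b c x
    rwa [MulAction.mem_stabilizer_iff.1 h.2] at this, by
    funext a b c d; exact xd2_zero hF.cyc _ _ _ _ x⟩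
theorem XZ3.stab {X : Type*} [MulAction G X] {F : G → G → G → G → X → k} (hF : XZ3 F) (x : X) :
    Z3 (fun a b c d : MulAction.stabilizer G x => F a b c d x) :=
  ⟨fun h a b c d => by
    have := hF.inv h a b c d x
    rwa [MulAction.mem_stabilizer_iff.1 h.2] at this, by
    funext a b c d e; exact xd3_zero hF.cyc _ _ _ _ _ x⟩

theorem shapiro1' {X : Type*} [MulAction G X] (hs : ∀ x : X, H1 (MulAction.stabilizer G x) k)
    (F : G → G → X → k) (hF : XZ1 F) : XB1 F := shapiro1 F hF fun x => hs x _ (hF.stab x)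
theorem shapiro2' {X : Type*} [MulAction G X] (hs : ∀ x : X, H2 (MulAction.stabilizer G x) k)
    (F : G → G → G → X → k) (hF : XZ2 F) : XB2 F := shapiro2 F hF fun x => hs x _ (hF.stab x)
theorem shapiro3' {X : Type*} [MulAction G X] (hs : ∀ x : X, H3 (MulAction.stabilizer G x) k)
    (F : G → G → G → G → X → k) (hF : XZ3 F) : XB3 F := shapiro3 F hF fun x => hs x _ (hF.stab x)

/-- A cocycle with trivial coefficients, viewed as a constant family over `X`. -/
theorem Z3.eps {X : Type*} [MulAction G X] {F : G → G → G → G → k} (hF : Z3 F) :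
    XZ3 (fun a b c d (_ : X) => F a b c d) :=
  ⟨fun h a b c d _ => hF.inv h a b c d, by
    funext a b c d e x; exact d3_zero hF.cyc a b c d e⟩
/-- A cocycle with trivial coefficients, viewed as a constant family over `X`. -/
theorem Z2.eps {X : Type*} [MulAction G X] {F : G → G → G → k} (hF : Z2 F) :
    XZ2 (fun a b c (_ : X) => F a b c) :=
  ⟨fun h a b c _ => hF.inv h a b c, by
    funext a b c d x; exact d2_zero hF.cyc a b c d⟩

/-- A class of degree three vanishes if every finite set lies in a subgroup on which it vanishes. Solving for a
primitive is a linear system in which each equation involves finitely many group elements, so `LC` applies. -/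
theorem B3_of_local {F : G → G → G → G → k} (hF : I4 F)
    (h : ∀ s : Finset G, ∃ S : Subgroup G, (s : Set G) ⊆ S ∧ B3 (fun a b c d : S => F a b c d)) :
    B3 F := by
  classical
  obtain ⟨g, hg⟩ := LC (I := G × G × G) (J := G × G) (k := k)
    (fun t => Finsupp.single (t.2.1, t.2.2) 1 + Finsupp.single (t.1 * t.2.1, t.2.2) (-1) +
      Finsupp.single (t.1, t.2.1 * t.2.2) 1 + Finsupp.single (t.1, t.2.1) (-1))
    (fun t => F 1 t.1 (t.1 * t.2.1) (t.1 * t.2.1 * t.2.2)) (by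
      intro s
      obtain ⟨S, hS, hb⟩ := h (s.image (fun t => t.1) ∪ s.image (fun t => t.2.1) ∪
        s.image (fun t => t.2.2))
      obtain ⟨b, ib, hb⟩ := B3.ext (F := F) hb
      refine ⟨fun t => b 1 t.1 (t.1 * t.2), fun t ht => ?_⟩
      obtain ⟨u, v, w⟩ := t
      have hu : u ∈ S := hS (by
        simp only [Finset.coe_union, Finset.coe_image, Set.mem_union, Set.mem_image]
        exact Or.inl (Or.inl ⟨_, ht, rfl⟩))
      have hv : v ∈ S := hS (by
        simp only [Finset.coe_union, Finset.coe_image, Set.mem_union, Set.mem_image]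
        exact Or.inl (Or.inr ⟨_, ht, rfl⟩))
      have hw : w ∈ S := hS (by
        simp only [Finset.coe_union, Finset.coe_image, Set.mem_union, Set.mem_image]
        exact Or.inr ⟨_, ht, rfl⟩)
      rw [Finsupp.sum_add_index' (by simp) (by intros; ring),
        Finsupp.sum_add_index' (by simp) (by intros; ring),
        Finsupp.sum_add_index' (by simp) (by intros; ring),
        Finsupp.sum_single_index (by simp), Finsupp.sum_single_index (by simp),
        Finsupp.sum_single_index (by simp), Finsupp.sum_single_index (by simp)]
      have e := hb 1 S.one_mem u hu (u * v) (S.mul_mem hu hv) (u * v * w)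
        (S.mul_mem (S.mul_mem hu hv) hw)
      have e2 := ib u hu 1 S.one_mem v hv (v * w) (S.mul_mem hv hw)
      rw [mul_one, ← mul_assoc] at e2
      simp only [← mul_assoc]
      linear_combination e - e2)
  refine ⟨fun a b c => g (a⁻¹ * b, b⁻¹ * c), fun h a b c => ?_, ?_⟩
  · simp only [mul_inv_rev, mul_assoc, inv_mul_cancel_left]
  · funext g0 g1 g2 g3
    have e := hg (g0⁻¹ * g1, g1⁻¹ * g2, g2⁻¹ * g3)
    rw [Finsupp.sum_add_index' (by simp) (by intros; ring),
        Finsupp.sum_add_index' (by simp) (by intros; ring),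
        Finsupp.sum_add_index' (by simp) (by intros; ring),
        Finsupp.sum_single_index (by simp), Finsupp.sum_single_index (by simp),
        Finsupp.sum_single_index (by simp), Finsupp.sum_single_index (by simp)] at e
    rw [← hF g0] at e
    simp only [mul_assoc, mul_inv_cancel_left, mul_one] at e
    simp only [d2]
    linear_combination e
end Basic
end FM

namespace FM
section
variable {G k : Type*} [Group G] [Field k] (ℓ : ℕ) [CharP k ℓ]

/-! ### Degree one -/

/-- An additive character of `G`. -/
def IsHom (φ : G → k) : Prop := ∀ a b, φ (a * b) = φ a + φ b

theorem IsHom.one {φ : G → k} (h : IsHom φ) : φ 1 = 0 := by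
  have := h 1 1
  rw [mul_one] at this
  linear_combination -this
theorem IsHom.inv {φ : G → k} (h : IsHom φ) (g : G) : φ g⁻¹ = - φ g := by
  have := h g g⁻¹
  rw [mul_inv_cancel, h.one] at this
  linear_combination -this
theorem IsHom.pow {φ : G → k} (h : IsHom φ) (g : G) (n : ℕ) : φ (g^n) = n * φ g := by
  induction n with
  | zero => simp [h.one]
  | succ n ih => rw [pow_succ, h, ih]; push_cast; ring
theorem IsHom.conj {φ : G → k} (h : IsHom φ) (a g : G) : φ (a * g * a⁻¹) = φ g := by
  rw [h, h, h.inv]; ring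
theorem IsHom.eq_zero_of_div {φ : G → k} (h : IsHom φ) (hd : ∀ x : G, ∃ y, y^ℓ = x) (x : G) : φ x = 0 := by
  obtain ⟨y, rfl⟩ := hd x
  rw [h.pow, CharP.cast_eq_zero, zero_mul]

theorem Z1.exists_hom {F : G → G → k} (hF : Z1 F) :
    ∃ φ : G → k, IsHom φ ∧ ∀ a b, F a b = φ (a⁻¹ * b) := by
  refine ⟨fun g => F 1 g, fun a b => ?_, fun a b => ?_⟩
  · have e := d1_zero hF.cyc 1 a (a * b)
    have e2 := hF.inv a 1 b
    rw [mul_one] at e2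
    linear_combination -e + e2
  · dsimp only
    rw [← hF.inv a 1]; simp

theorem H1_of_hom (h : ∀ φ : G → k, IsHom φ → ∀ x, φ x = 0) : H1 G k := by
  intro F hF
  obtain ⟨φ, hφ, e⟩ := hF.exists_hom
  refine ⟨0, fun _ _ => rfl, ?_⟩
  funext a b
  rw [e, h φ hφ]; simp [d0]

theorem H1.hom (h : H1 G k) {φ : G → k} (hφ : IsHom φ) (x : G) : φ x = 0 := by
  obtain ⟨b, ib, hb⟩ := h (fun a b => φ (a⁻¹ * b)) ⟨fun h a b => by simp [mul_assoc], by
    funext a b c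
    simp only [d1, hφ _ _, hφ.inv, Pi.zero_apply]; ring⟩
  have := congrFun (congrFun hb 1) x
  simp only [d0, inv_one, one_mul] at this
  rw [← this, ← ib x 1, mul_one, sub_self]

theorem H1_of_div (hd : ∀ x : G, ∃ y, y^ℓ = x) : H1 G k :=
  H1_of_hom fun _ hφ => hφ.eq_zero_of_div ℓ hd

/-! ### The norm invariant of a torsion element -/

/-- The norm invariant: for `τ ^ ℓ = 1`, the pullback of the class of `F` along the homomorphism from `ℤ/ℓ` to
`G` given by `τ`, under the identification of the second cohomology group of `ℤ/ℓ` with `k`. -/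
def nn (τ : G) (F : G → G → G → k) : k := ∑ i ∈ Finset.range ℓ, F 1 (τ^i) (τ^(i+1))

theorem nn_add (τ : G) (F F' : G → G → G → k) : 
    nn ℓ τ (fun a b c => F a b c + F' a b c) = nn ℓ τ F + nn ℓ τ F' := by
  simp [nn, Finset.sum_add_distrib]
theorem nn_sub (τ : G) (F F' : G → G → G → k) : 
    nn ℓ τ (fun a b c => F a b c - F' a b c) = nn ℓ τ F - nn ℓ τ F' := by
  simp [nn, Finset.sum_sub_distrib]
theorem nn_smul (τ : G) (r : k) (F : G → G → G → k) : 
    nn ℓ τ (fun a b c => r * F a b c) = r * nn ℓ τ F := by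
  simp [nn, Finset.mul_sum]

theorem nn_map {H : Type*} [Group H] (φ : H →* G) (τ : H) (F : G → G → G → k) :
    nn ℓ τ (fun a b c => F (φ a) (φ b) (φ c)) = nn ℓ (φ τ) F := by
  simp [nn]

/-- The norm invariant of a coboundary vanishes; only invariance of the primitive under `τ` is needed. -/
theorem nn_d1 {τ : G} (hτ : τ^ℓ = 1) (P : G → G → k) (hP : ∀ a b, P (τ * a) (τ * b) = P a b) :
    nn ℓ τ (fun a b c => P b c - P a c + P a b) = 0 := by
  have h1 : ∀ i : ℕ, P (τ^i) (τ^(i+1)) = P 1 τ := by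
    intro i
    induction i with
    | zero => simp
    | succ i ih => rw [pow_succ' τ i, pow_succ' τ (i+1), hP, ih]
  simp only [nn, h1]
  have h2 : ∀ m : ℕ, ∑ i ∈ Finset.range m, (P 1 τ - P 1 (τ^(i+1)) + P 1 (τ^i)) =
      m * P 1 τ - P 1 (τ^m) + P 1 1 := by
    intro m
    induction m with
    | zero => simp
    | succ m ih => rw [Finset.sum_range_succ, ih]; push_cast; ring
  rw [h2, hτ, CharP.cast_eq_zero]; ring

theorem nn_B2 {F : G → G → G → k} (hF : B2 F) {τ : G} (hτ : τ^ℓ = 1) : nn ℓ τ F = 0 := by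
  obtain ⟨b, ib, rfl⟩ := hF
  exact nn_d1 ℓ hτ b (ib τ)

theorem nn_one (F : G → G → G → k) : nn ℓ 1 F = 0 := by
  simp [nn, CharP.cast_eq_zero]

/-- Right translation changes a cocycle by a coboundary, hence does not change the norm invariant. -/
theorem nn_right {F : G → G → G → k} (hF : d2 F = 0) {τ : G} (hτ : τ^ℓ = 1)
    (hinv : ∀ a b c, F (τ * a) (τ * b) (τ * c) = F a b c) (g : G) :
    nn ℓ τ (fun a b c => F (a * g) (b * g) (c * g)) = nn ℓ τ F := by
  have h := nn_d1 ℓ hτ (fun a b => F a (a * g) (b * g) - F a b (b * g)) (fun a b => by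
    simp only [mul_assoc, hinv])
  have c := d2_zero hF
  rw [← sub_eq_zero, ← nn_sub, ← h]
  congr 1
  funext a b c'
  linear_combination c a (a * g) (b * g) (c' * g) - c a b (b * g) (c' * g)
      + c a b c' (c' * g)

/-- The norm invariant of a family of cocycles is unchanged when the torsion element is conjugated and the point is
translated accordingly. -/
theorem XZ2.nn_conj {X : Type*} [MulAction G X] {F : G → G → G → X → k} (hF : XZ2 F)
    {τ : G} (hτ : τ^ℓ = 1) {x : X} (hx : τ • x = x) (g : G) :
    nn ℓ (g * τ * g⁻¹) (fun a b c => F a b c (g • x)) = nn ℓ τ (fun a b c => F a b c x) := by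
  rw [← nn_right ℓ (τ := τ) (g := g⁻¹) (F := fun a b c => F a b c x) _ hτ]
  · simp only [nn]
    refine Finset.sum_congr rfl fun i _ => ?_
    rw [← hF.inv g _ _ _ x, conj_pow, conj_pow]
    simp [mul_assoc]
  · intro a b c
    have := hF.inv τ a b c x
    rwa [hx] at this
  · funext a b c d; exact xd2_zero hF.cyc a b c d x

theorem Z2.nn_conj {F : G → G → G → k} (hF : Z2 F) {τ : G} (hτ : τ^ℓ = 1) (g : G) :
    nn ℓ (g * τ * g⁻¹) F = nn ℓ τ F := by
  rw [← nn_right ℓ hF.cyc hτ (fun a b c => hF.inv τ a b c) g⁻¹]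
  simp only [nn]
  refine Finset.sum_congr rfl fun i _ => ?_
  rw [← hF.inv g (1 * g⁻¹), conj_pow, conj_pow]
  simp [mul_assoc]

/-! ### Abelian ℓ-divisible groups -/

/-- The inhomogeneous cochain attached to a homogeneous one. -/
def inh (F : G → G → G → k) (a b : G) : k := F 1 a (a * b)

theorem inh_eq {F : G → G → G → k} (hF : Z2 F) (a b c : G) : F a b c = inh F (a⁻¹ * b) (b⁻¹ * c) := by
  rw [inh, ← hF.inv a 1]; simp [mul_assoc]

/-- The inhomogeneous cocycle identity. -/
theorem inh_cyc {F : G → G → G → k} (hF : Z2 F) (a b c : G) :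
    inh F b c - inh F (a * b) c + inh F a (b * c) - inh F a b = 0 := by
  have e := d2_zero hF.cyc 1 a (a * b) (a * b * c)
  have e2 := hF.inv a 1 b (b * c)
  rw [mul_one] at e2
  simp only [inh, mul_assoc] at *
  rw [← e, e2]

section comm
variable (hc : ∀ a b : G, a * b = b * a) (hd : ∀ x : G, ∃ y, y^ℓ = x)
include hc hd
variable {F : G → G → G → k} (hF : Z2 F)

/-- On an abelian `ℓ`-divisible group every cocycle of degree two is symmetric: the commutator pairing is additive
in the first variable, hence zero. -/
theorem inh_symm (hF : Z2 F) (a b : G) : inh F a b = inh F b a := by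
  have c := inh_cyc hF
  have hb : ∀ h, IsHom (fun g => inh F g h - inh F h g) := by
    intro h a b
    have e1 := c a b h
    have e2 := c h a b
    have e3 := c a h b
    rw [hc a h, hc h b] at e3
    dsimp only
    linear_combination -e1 - e2 + e3
  have := (hb b).eq_zero_of_div ℓ hd a
  exact sub_eq_zero.1 this

/-- The pullback of a cocycle along the `m`-th power map, in terms of sums over powers of single elements. For
`m = ℓ` the last term is zero, and the remaining ones have the shape of a coboundary. -/
theorem inh_pow (hF : Z2 F) (g h : G) (m : ℕ) : inh F (g^m) (h^m) = inh F 1 1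
    + ∑ i ∈ Finset.range m, inh F ((g*h)^i) (g*h) - ∑ i ∈ Finset.range m, inh F (g^i) g
    - ∑ i ∈ Finset.range m, inh F (h^i) h + m * inh F g h := by
  have hs := inh_symm ℓ hc hd hF
  have c := inh_cyc hF
  have four : ∀ a b x y : G, inh F (a * x) (b * y) + inh F a x + inh F b y =
      inh F (a * b) (x * y) + inh F a b + inh F x y := by
    intro a b x y
    have e1 := c a x (b * y)
    have e2 := c a b (x * y)
    have e3 := c x b y
    have e4 := c b x y
    rw [← mul_assoc x b y, hc x b, mul_assoc b x y] at e1
    rw [hc x b] at e3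
    rw [hs x b] at e3
    linear_combination e2 - e1 - e4 + e3
  have hg : ∀ m : ℕ, (g * h)^m = g^m * h^m := fun m => Commute.mul_pow (hc g h) m
  induction m with
  | zero => simp
  | succ m ih =>
    have := four (g^m) (h^m) g h
    rw [Finset.sum_range_succ, Finset.sum_range_succ, Finset.sum_range_succ, pow_succ, pow_succ]
    rw [← hg m] at this
    push_cast
    linear_combination this + ih

/-- On an abelian `ℓ`-divisible group the norm invariant is additive on the `ℓ`-torsion. -/
theorem nn_mul (hF : Z2 F) {τ σ : G} (h1 : τ^ℓ = 1) (h2 : σ^ℓ = 1) :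
    nn ℓ (τ * σ) F = nn ℓ τ F + nn ℓ σ F := by
  have e := inh_pow ℓ hc hd hF τ σ ℓ
  rw [h1, h2, CharP.cast_eq_zero] at e
  simp only [nn, pow_succ]
  simp only [inh] at e
  linear_combination -e

/-- A class of degree two on an abelian `ℓ`-divisible group vanishes if its norm invariants on the `ℓ`-torsion do. -/
theorem det2 (hF : Z2 F) (h0 : ∀ τ : G, τ^ℓ = 1 → nn ℓ τ F = 0) : B2 F := by
  choose y hy using hd
  have e := inh_pow ℓ hc (fun x => ⟨y x, hy x⟩) hF
  have c := inh_cyc hF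
  have hx1 : ∀ x, inh F x 1 = inh F 1 1 := by
    intro x
    have := c x 1 1
    simp only [mul_one] at this
    linear_combination -this
  let P : G → k := fun g => ∑ i ∈ Finset.range ℓ, inh F (g^i) g
  have hP : ∀ a b, a^ℓ = b^ℓ → P a = P b := by
    intro a b hab
    have hτ : (b⁻¹ * a)^ℓ = 1 := by
      rw [(Commute.mul_pow (hc b⁻¹ a) ℓ), inv_pow, hab, inv_mul_cancel]
    have e1 := e b (b⁻¹ * a) ℓ
    rw [hτ, hx1, mul_inv_cancel_left, CharP.cast_eq_zero] at e1
    have e2 := h0 _ hτ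
    simp only [nn, pow_succ] at e2
    simp only [P]
    simp only [inh] at e1 ⊢
    linear_combination -e1 + e2
  refine ⟨fun a b => inh F 1 1 - P (y (a⁻¹ * b)), fun h a b => by simp [mul_assoc], ?_⟩
  funext g0 g1 g2
  rw [inh_eq hF]
  have e1 := e (y (g0⁻¹ * g1)) (y (g1⁻¹ * g2)) ℓ
  rw [CharP.cast_eq_zero, hy, hy] at e1
  have e2 := hP (y (g0⁻¹ * g2)) (y (g0⁻¹ * g1) * y (g1⁻¹ * g2)) (by
    rw [hy, Commute.mul_pow (hc _ _), hy, hy]; group)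
  simp only [d1]
  simp only [P] at *
  linear_combination -e1 + e2

/-- A uniquely `ℓ`-divisible abelian group has no cohomology in degree two. -/
theorem H2_of_uniq (hu : ∀ τ : G, τ^ℓ = 1 → τ = 1) : H2 G k := fun F hF =>
  det2 ℓ hc hd hF fun τ hτ => by rw [hu τ hτ, nn_one]
end comm
end
end FM

namespace FM

/-! ### Group extensions -/

namespace GenCx
variable {G Y k : Type*} [Group G] [MulAction G Y] [Field k]

/-- The complex of all tuples. -/
def full (G Y : Type*) [Group G] [MulAction G Y] [Nonempty Y] : GenCx G Y where
  Gen _ := True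
  face _ _ _ := trivial
  inv _ _ _ := trivial
  nil _ := trivial
  cone _ _ := ⟨Classical.arbitrary Y, fun _ _ => trivial⟩

variable (C : GenCx G Y)

/-- A point as a simplex of dimension zero. -/
def x0 (a : Y) (h : C.Gen ![a]) : C.X 0 := ⟨_, h⟩
theorem X0_eq (t : C.X 0) : ∃ h, t = ⟨![t.1 0], h⟩ := by
  have : t.1 = ![t.1 0] := by funext i; fin_cases i; rfl
  exact ⟨this ▸ t.2, X.ext this⟩
theorem X1_eq (t : C.X 1) : ∃ h, t = ⟨![t.1 0, t.1 1], h⟩ := by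
  have : t.1 = ![t.1 0, t.1 1] := by funext i; fin_cases i <;> rfl
  exact ⟨this ▸ t.2, X.ext this⟩
theorem X2_eq (t : C.X 2) : ∃ h, t = ⟨![t.1 0, t.1 1, t.1 2], h⟩ := by
  have : t.1 = ![t.1 0, t.1 1, t.1 2] := by funext i; fin_cases i <;> rfl
  exact ⟨this ▸ t.2, X.ext this⟩
theorem X3_eq (t : C.X 3) : ∃ h, t = ⟨![t.1 0, t.1 1, t.1 2, t.1 3], h⟩ := by
  have : t.1 = ![t.1 0, t.1 1, t.1 2, t.1 3] := by funext i; fin_cases i <;> rfl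
  exact ⟨this ▸ t.2, X.ext this⟩

theorem D0 (f : C.X 0 → k) (t : C.X 1) : C.D f t = f (C.fc 0 t) - f (C.fc 1 t) := by
  rw [D_apply, Fin.sum_univ_two]; simp; ring
theorem D1 (f : C.X 1 → k) (t : C.X 2) : C.D f t = f (C.fc 0 t) - f (C.fc 1 t) + f (C.fc 2 t) := by
  rw [D_apply, Fin.sum_univ_three]; simp; ring
theorem D2 (f : C.X 2 → k) (t : C.X 3) :
    C.D f t = f (C.fc 0 t) - f (C.fc 1 t) + f (C.fc 2 t) - f (C.fc 3 t) := by
  rw [D_apply, Fin.sum_univ_four]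
  simp only [Fin.isValue, Fin.val_zero, Fin.val_one, Fin.val_two, 
    show ((3 : Fin 4) : ℕ) = 3 from rfl]; ring
theorem D3 (f : C.X 3 → k) (t : C.X 4) :
    C.D f t = f (C.fc 0 t) - f (C.fc 1 t) + f (C.fc 2 t) - f (C.fc 3 t) + f (C.fc 4 t) := by
  rw [D_apply, Fin.sum_univ_five]
  simp only [Fin.isValue, Fin.val_zero, Fin.val_one, Fin.val_two, 
    show ((3 : Fin 5) : ℕ) = 3 from rfl, show ((4 : Fin 5) : ℕ) = 4 from rfl]; ring
end GenCx

section Ext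
variable {G Q k : Type*} [Group G] [Group Q] [Field k] (π : G →* Q)

/-- The set `Q` with the action of `G` through `π`. -/
@[ext] structure OQ (π : G →* Q) where
  val : Q

instance : MulAction G (OQ π) where
  smul g q := ⟨π g * q.val⟩
  one_smul q := OQ.ext (by change π 1 * q.val = q.val; simp)
  mul_smul g h q := OQ.ext (by change π (g * h) * q.val = π g * (π h * q.val); simp [mul_assoc])

instance : Nonempty (OQ π) := ⟨⟨1⟩⟩

theorem OQ.smul_mk (g : G) (q : Q) : g • (⟨q⟩ : OQ π) = ⟨π g * q⟩ := rfl
theorem OQ.smul_val (g : G) (q : OQ π) : (g • q).val = π g * q.val := rfl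

theorem OQ.smul_eq_iff {g : G} {q : OQ π} : g • q = q ↔ g ∈ π.ker := by
  rw [MonoidHom.mem_ker, OQ.ext_iff, OQ.smul_val]
  exact mul_eq_right

theorem OQ.stab0 (q : OQ π) : MulAction.stabilizer G q = π.ker := by
  ext g; rw [MulAction.mem_stabilizer_iff, OQ.smul_eq_iff]
theorem OQ.stab1 (q : OQ π × OQ π) : MulAction.stabilizer G q = π.ker := by
  ext g; rw [MulAction.mem_stabilizer_iff, Prod.ext_iff]
  simp only [Prod.smul_fst, Prod.smul_snd, OQ.smul_eq_iff, and_self]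
theorem OQ.stabX {p : ℕ} (t : (GenCx.full G (OQ π)).X p) : MulAction.stabilizer G t = π.ker := by
  ext g; rw [MulAction.mem_stabilizer_iff, GenCx.X.ext_iff, funext_iff]
  simp only [GenCx.smul_val, OQ.smul_eq_iff, forall_const]

variable {π} 

/-- Vanishing in degree one passes to extensions. -/
theorem ext1 (hπ : Function.Surjective π) (hN : H1 π.ker k) (hQ : H1 Q k) : H1 G k := by
  apply H1_of_hom
  intro φ hφ
  have h0 : ∀ n ∈ π.ker, φ n = 0 := fun n hn =>
    hN.hom (φ := fun x : π.ker => φ x) (fun a b => hφ a b) ⟨n, hn⟩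
  have h1 : ∀ a b, π a = π b → φ a = φ b := by
    intro a b h
    have := h0 (a⁻¹ * b) (by rw [MonoidHom.mem_ker, map_mul, map_inv, h, inv_mul_cancel])
    rw [hφ, hφ.inv] at this
    linear_combination -this
  choose s hs using hπ
  intro x
  rw [h1 x (s (π x)) (hs _).symm]
  exact hQ.hom (φ := fun q => φ (s q)) (fun a b => by
    dsimp only
    rw [← hφ]; apply h1; rw [map_mul, hs, hs, hs]) _

/-- A class of degree two that vanishes on the kernel of `π` is inflated from `Q`, provided that the kernel has
no cohomology in degree one. -/
theorem ext2 (hπ : Function.Surjective π) (hN : H1 π.ker k) (F : G → G → G → k) (hF : Z2 F)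
    (hb : B2 (fun a b c : π.ker => F a b c)) :
    ∃ F' : Q → Q → Q → k, Z2 F' ∧ B2 (fun a b c => F a b c - F' (π a) (π b) (π c)) := by
  obtain ⟨a0, ia0, ha0⟩ := shapiro2 (X := OQ π) _ hF.eps (fun x => by
    rw [OQ.stab0]; exact hb)
  have e0 : ∀ g0 g1 g2 x, a0 g1 g2 x - a0 g0 g2 x + a0 g0 g1 x = F g0 g1 g2 := fun g0 g1 g2 x =>
    congrFun (congrFun (congrFun (congrFun ha0 g0) g1) g2) x
  obtain ⟨a1, ia1, ha1⟩ := shapiro1' (X := OQ π × OQ π) (k := k) (fun x => by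
    rw [OQ.stab1]; exact hN) (fun g0 g1 x => a0 g0 g1 x.2 - a0 g0 g1 x.1)
    ⟨fun h a b x => by simp only [Prod.smul_fst, Prod.smul_snd, ia0 h], by
      funext g0 g1 g2 x
      have h1 := e0 g0 g1 g2 x.1
      have h2 := e0 g0 g1 g2 x.2
      simp only [d1, Pi.sub_apply, Pi.add_apply, Pi.zero_apply]
      linear_combination h2 - h1⟩
  have e1 : ∀ g0 g1 x y, a1 g1 (x, y) - a1 g0 (x, y) = a0 g0 g1 y - a0 g0 g1 x := fun g0 g1 x y =>
    congrFun (congrFun (congrFun ha1 g0) g1) (x, y)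
  let f : G → OQ π → OQ π → OQ π → k := fun g x y z => a1 g (y, z) - a1 g (x, z) + a1 g (x, y)
  have hf : ∀ g g' x y z, f g x y z = f g' x y z := by
    intro g g' x y z
    have h1 := e1 g g' y z
    have h2 := e1 g g' x z
    have h3 := e1 g g' x y
    simp only [f]
    linear_combination -h1 + h2 - h3
  have hfi : ∀ (h : G) x y z, f 1 (h • x) (h • y) (h • z) = f 1 x y z := by
    intro h x y z
    rw [hf 1 (h * 1)]
    have : ∀ x y, a1 (h * 1) (h • x, h • y) = a1 1 (x, y) := fun x y => ia1 h 1 (x, y)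
    simp only [f, this]
  refine ⟨fun x y z => - f 1 ⟨x⟩ ⟨y⟩ ⟨z⟩, ⟨?_, ?_⟩, ⟨fun g0 g1 => a0 g0 g1 ⟨π g0⟩ + a1 g1 (⟨π g0⟩, ⟨π g1⟩),
    ?_, ?_⟩⟩
  · intro h x y z
    obtain ⟨g, rfl⟩ := hπ h
    exact congrArg _ (hfi g ⟨x⟩ ⟨y⟩ ⟨z⟩)
  · funext x y z w
    simp only [d2, f, Pi.zero_apply]; ring
  · intro h g0 g1
    dsimp only
    rw [map_mul, map_mul]
    have h1 := ia0 h g0 g1 ⟨π g0⟩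
    have h2 := ia1 h g1 (⟨π g0⟩, ⟨π g1⟩)
    exact congrArg₂ (· + ·) h1 h2
  · funext g0 g1 g2
    have h1 := e0 g0 g1 g2 ⟨π g0⟩
    have h2 := e1 g1 g2 ⟨π g0⟩ ⟨π g1⟩
    have h3 := hf 1 g2 ⟨π g0⟩ ⟨π g1⟩ ⟨π g2⟩
    dsimp only
    rw [h3]
    simp only [d1, f]
    linear_combination h1 - h2

theorem B2_of_sub {F F' : G → G → G → k} (h : B2 F') (h' : B2 (fun a b c => F a b c - F' a b c)) :
    B2 F := by
  obtain ⟨b, ib, hb⟩ := h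
  obtain ⟨b', ib', hb'⟩ := h'
  refine ⟨fun x y => b x y + b' x y, fun h x y => by dsimp only; rw [ib, ib'], ?_⟩
  funext x y z
  have e := congrFun (congrFun (congrFun hb x) y) z
  have e' := congrFun (congrFun (congrFun hb' x) y) z
  simp only [d1] at *
  linear_combination e + e'

theorem ext2_H2 (hπ : Function.Surjective π) (hN : H1 π.ker k) (hN2 : H2 π.ker k) (hQ : H2 Q k) :
    H2 G k := by
  intro F hF
  obtain ⟨F', hF', h⟩ := ext2 hπ hN F hF (hN2 _ (hF.comp π.ker.subtype))
  exact B2_of_sub ((hQ F' hF').comp π) h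

/-- If the kernel has no cohomology in degrees one and two and the quotient is abelian and `ℓ`-divisible, then
a class of degree two vanishes as soon as its norm invariants vanish on torsion lifts of the `ℓ`-torsion of the quotient. -/
theorem ext2_det (ℓ : ℕ) [CharP k ℓ] (hπ : Function.Surjective π) (hN : H1 π.ker k)
    (hN2 : H2 π.ker k)
    (hc : ∀ a b : Q, a * b = b * a) (hd : ∀ x : Q, ∃ y, y^ℓ = x) {F : G → G → G → k} (hF : Z2 F)
    (h0 : ∀ q : Q, q^ℓ = 1 → ∃ τ : G, π τ = q ∧ τ^ℓ = 1 ∧ nn ℓ τ F = 0) : B2 F := by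
  obtain ⟨F', hF', h⟩ := ext2 hπ hN F hF (hN2 _ (hF.comp π.ker.subtype))
  refine B2_of_sub ((det2 ℓ hc hd hF' fun q hq => ?_).comp π) h
  obtain ⟨τ, rfl, h1, h2⟩ := h0 q hq
  have := nn_B2 ℓ h h1
  rw [nn_sub, h2, nn_map ℓ π τ F'] at this
  linear_combination -this

/-- Extensions in degree three, from `machine3` applied to all tuples of elements of `Q`: the stabilizer of every
tuple is the kernel, and invariant functions compute the cohomology of `Q`. The contribution of pairs is left as the
hypothesis `h12`. -/
theorem ext3_core (hπ : Function.Surjective π) (hN : H1 π.ker k)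
    (h12 : ∀ c : G → G → G → (GenCx.full G (OQ π)).X 1 → k, XZ2 c →
      (∀ g0 g1 g2, GenCx.D _ (c g0 g1 g2) = 0) → XB2 c) (hN3 : H3 π.ker k)
    (hQ : H3 Q k) : H3 G k := by
  intro F hF
  refine (GenCx.full G (OQ π)).machine3 F hF ?_ ?_ ?_ ?_
  · exact shapiro3' (fun x => by rw [OQ.stabX]; exact hN3) _ hF.eps
  · intro c hc hD
    refine ⟨0, ⟨fun _ _ _ _ _ => rfl, by funext a b c d x; simp [d2]⟩, ?_⟩
    simpa using h12 c hc hD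
  · exact shapiro1' (fun x => by rw [OQ.stabX]; exact hN)
  · intro f hf hD
    let C := GenCx.full G (OQ π)
    let F' : Q → Q → Q → Q → k := fun a b c d => f ⟨![⟨a⟩, ⟨b⟩, ⟨c⟩, ⟨d⟩], trivial⟩
    obtain ⟨b, ib, hb⟩ := hQ F' ⟨fun h a b c d => by
      obtain ⟨g, rfl⟩ := hπ h
      have := hf g ⟨![⟨a⟩, ⟨b⟩, ⟨c⟩, ⟨d⟩], trivial⟩
      simp only [F']
      rw [← this]
      congr 1
      apply GenCx.X.ext; funext i; fin_cases i <;> rfl, by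
      funext a b c d e
      have := congrFun hD ⟨![⟨a⟩, ⟨b⟩, ⟨c⟩, ⟨d⟩, ⟨e⟩], trivial⟩
      rw [GenCx.D3] at this
      rw [Pi.zero_apply] at this
      simp only [d3, F', Pi.zero_apply]
      convert this using 1
      congr 1
      congr 1
      congr 1
      congr 1
      all_goals (congr 1; apply GenCx.X.ext; funext i; fin_cases i <;> rfl)⟩
    refine ⟨fun t => b (t.1 0).val (t.1 1).val (t.1 2).val, fun g x => ib (π g) _ _ _, ?_⟩
    funext t
    obtain ⟨_, ht⟩ := C.X3_eq t
    rw [GenCx.D2]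
    have := congrFun (congrFun (congrFun (congrFun hb (t.1 0).val) (t.1 1).val) (t.1 2).val) (t.1 3).val
    simp only [F'] at this
    rw [← ht] at this
    rw [← this]
    rfl

/-- Vanishing in degree three passes to extensions by a kernel without cohomology in degrees one to three. -/
theorem ext3 (hπ : Function.Surjective π) (hN : H1 π.ker k) (hN2 : H2 π.ker k) (hN3 : H3 π.ker k)
    (hQ : H3 Q k) : H3 G k :=
  ext3_core hπ hN (fun c hc _ => shapiro2' (fun x => by rw [OQ.stabX]; exact hN2) c hc) hN3 hQ
end Ext
end FM

namespace FM

/-! ### Degree three for abelian divisible groups -/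

section
variable {k : Type*} [Field k] (ℓ : ℕ) [CharP k ℓ]

/-- Extensions of `ℓ`-divisible abelian groups in degree three. The kernel may have cohomology in degree two, but
the norm invariant of a class over a pair of points of `Q` is a homomorphism in the difference of the two points,
hence zero because `Q` is divisible. -/
theorem ext3_ab {G Q : Type*} [CommGroup G] [Group Q] {π : G →* Q} (hπ : Function.Surjective π)
    (hd : ∀ x : G, ∃ y, y^ℓ = x) (hdN : ∀ x : π.ker, ∃ y, y^ℓ = x)
    (hN3 : H3 π.ker k) (hQ : H3 Q k) : H3 G k := by
  have hdQ : ∀ x : Q, ∃ y, y^ℓ = x := by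
    intro x
    obtain ⟨g, rfl⟩ := hπ x
    obtain ⟨y, rfl⟩ := hd g
    exact ⟨π y, by simp⟩
  have hN : H1 π.ker k := H1_of_div ℓ hdN
  refine ext3_core hπ hN ?_ hN3 hQ
  intro c hc hD
  refine shapiro2 c hc fun x => ?_
  rw [OQ.stabX]
  have hst : ∀ (τ : π.ker) (y : (GenCx.full G (OQ π)).X 1), (τ : G) • y = y := by
    intro τ y
    rw [← MulAction.mem_stabilizer_iff, OQ.stabX]; exact τ.2
  refine det2 ℓ (fun a b => mul_comm a b) hdN ?_ ?_
  · have := hc.stab x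
    rw [OQ.stabX] at this
    exact this
  intro τ hτ
  have hτ' : (τ : G)^ℓ = 1 := by rw [← Subgroup.coe_pow, hτ]; rfl
  refine (nn_map ℓ π.ker.subtype τ (fun a b d => c a b d x)).trans ?_
  change nn ℓ (τ : G) _ = 0
  let pt : Q → Q → (GenCx.full G (OQ π)).X 1 := fun a b => ⟨![⟨a⟩, ⟨b⟩], trivial⟩
  let n : Q → Q → k := fun a b => nn ℓ (τ : G) (fun u v w => c u v w (pt a b))
  have hn1 : ∀ (g : G) a b, n (π g * a) (π g * b) = n a b := by
    intro g a b
    have := hc.nn_conj ℓ hτ' (hst τ (pt a b)) g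
    rw [mul_comm g, mul_inv_cancel_right] at this
    refine Eq.trans ?_ this
    simp only [n]
    have e : g • pt a b = pt (π g * a) (π g * b) := by
      apply GenCx.X.ext; funext i; fin_cases i <;> rfl
    rw [e]
  have hn2 : ∀ a b d, n b d - n a d + n a b = 0 := by
    intro a b d
    have : ∀ u v w, c u v w (pt b d) - c u v w (pt a d) + c u v w (pt a b) = 0 := by
      intro u v w
      have := congrFun (hD u v w) ⟨![⟨a⟩, ⟨b⟩, ⟨d⟩], trivial⟩
      rw [GenCx.D1, Pi.zero_apply] at this
      rw [← this]
      congr 1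
      congr 1
      all_goals (congr 1; apply GenCx.X.ext; funext i; fin_cases i <;> rfl)
    simp only [n]
    rw [← nn_sub, ← nn_add]
    simp only [this]
    simp [nn]
  have hn3 : ∀ q a b, n (q * a) (q * b) = n a b := by
    intro q a b; obtain ⟨g, rfl⟩ := hπ q; exact hn1 g a b
  have hφ : IsHom (fun q => n 1 q) := by
    intro a b
    have e1 := hn2 1 a (a * b)
    have e2 := hn3 a 1 b
    rw [mul_one] at e2
    dsimp only
    linear_combination -e1 + e2
  have hx : x = pt (x.1 0).val (x.1 1).val := by
    apply GenCx.X.ext; funext i; fin_cases i <;> rfl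
  rw [hx]
  change n _ _ = 0
  rw [← hn3 (x.1 0).val⁻¹, inv_mul_cancel]
  exact hφ.eq_zero_of_div ℓ hdQ _

theorem exists_int_sum (f : ℤ → k) : ∃ S : ℤ → k, ∀ n, S (n + 1) - S n = f n := by
  refine ⟨fun n => match n with
    | Int.ofNat m => ∑ i ∈ Finset.range m, f i
    | Int.negSucc m => - ∑ i ∈ Finset.range (m+1), f (-(i : ℤ) - 1), fun n => ?_⟩
  rcases n with m | m
  · have : (Int.ofNat m + 1) = Int.ofNat (m + 1) := rfl
    rw [this]
    simp only [Finset.sum_range_succ]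
    simp
  · cases m with
    | zero => simp [Int.negSucc_eq]
    | succ m =>
      have : (Int.negSucc (m + 1) + 1) = Int.negSucc m := by
        rw [Int.negSucc_eq, Int.negSucc_eq]; push_cast; ring
      rw [this]
      simp only [Finset.sum_range_succ _ (m+1)]
      rw [Int.negSucc_eq]
      have e : -((m + 1 : ℕ) : ℤ) - 1 = -(((m + 1 : ℕ) : ℤ) + 1) := by ring
      rw [e]; ring

section cyc
variable {G H : Type*} [CommGroup G] [Group H] {y : G} (hy : ∀ g : G, ∃ n : ℤ, y^n = g)
include hy

/-- On the cyclic group generated by `y`, the difference equation `β (y x) - β x = h x` is solvable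
if the sums of `h` over periods of `y` vanish. -/
theorem cyc_solve (h : G → k) (h0 : ∀ m : ℕ, y^m = 1 → ∑ i ∈ Finset.range m, h (y^i) = 0) :
    ∃ β : G → k, ∀ x, β (y * x) - β x = h x := by
  obtain ⟨S, hS⟩ := exists_int_sum (fun n => h (y^n))
  have per : ∀ m : ℕ, y^m = 1 → ∀ n : ℤ, S (n + m) = S n := by
    intro m hm
    have h1 : ∀ n : ℤ, S (n + 1 + m) - S (n + 1) = S (n + m) - S n := by
      intro n
      have e1 := hS n
      have e2 := hS (n + m)
      rw [zpow_add, zpow_natCast, hm, mul_one] at e2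
      rw [show n + 1 + (m : ℤ) = n + m + 1 by ring]
      linear_combination e2 - e1
    have h2 : S (0 + m) - S 0 = 0 := by
      rw [← h0 m hm]
      have : ∀ j : ℕ, S j - S 0 = ∑ i ∈ Finset.range j, h (y^i) := by
        intro j
        induction j with
        | zero => simp
        | succ j ih =>
          rw [Finset.sum_range_succ, ← ih]
          have := hS j
          rw [zpow_natCast] at this
          push_cast
          linear_combination this
      rw [zero_add]
      exact this m
    intro n
    rw [← sub_eq_zero]
    induction n using Int.induction_on with
    | zero => exact h2
    | succ n ih => rw [h1, ih]
    | pred n ih =>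
      rw [← ih]
      have := h1 (-(n : ℤ) - 1)
      rw [← this]; simp
  have wd : ∀ a b : ℤ, y^a = y^b → S a = S b := by
    have key : ∀ a b : ℤ, a ≤ b → y^a = y^b → S b = S a := by
      intro a b hab h
      obtain ⟨m, rfl⟩ := Int.le.dest hab
      apply per
      rw [zpow_add, zpow_natCast] at h
      exact mul_eq_left.1 h.symm
    intro a b h
    rcases le_total a b with hab | hab
    · exact (key a b hab h).symm
    · exact key b a hab h.symm
  choose n hn using hy
  refine ⟨fun x => S (n x), fun x => ?_⟩
  dsimp only
  rw [wd (n (y * x)) (n x + 1) (by rw [hn, zpow_add, hn, zpow_one, mul_comm]), hS, hn]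

/-- A class of degree three on a cyclic group becomes zero after pullback along a homomorphism with values in the
`ℓ`-th powers. A period of the generator gives a sum which is a homomorphism in the remaining variable, hence vanishes
on `ℓ`-th powers; `cyc_solve` then provides a primitive. -/
theorem cyc3 {F : G → G → G → G → k} (hF : Z3 F) (φ : H →* G) (hφ : ∀ h, ∃ z, φ h = z^ℓ) :
    B3 (fun a b c d => F (φ a) (φ b) (φ c) (φ d)) := by
  have c := d3_zero hF.cyc
  -- the sum over a period vanishes on ℓ-th powers
  have obs : ∀ g : H, ∀ m : ℕ, y^m = 1 →
      ∑ i ∈ Finset.range m, F (y * y^i) (y^i) 1 (φ g) = 0 := by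
    intro g m hm
    let A : G → G → k := fun u v => ∑ i ∈ Finset.range m, F (y * y^i) (y^i) u v
    have hA1 : ∀ u v, A (y * u) (y * v) = A u v := by
      intro u v
      have h1 : ∀ i : ℕ, F (y * y^i) (y^i) u v = F (y * y^(i+1)) (y^(i+1)) (y*u) (y*v) := by
        intro i; rw [← hF.inv y, pow_succ' y i]
      simp only [A, h1]
      have := Finset.sum_range_succ' (fun i => F (y * y^i) (y^i) (y*u) (y*v)) m
      rw [Finset.sum_range_succ, hm, pow_zero] at this
      exact add_right_cancel this
    have hA2 : ∀ u v w, A v w - A u w + A u v = 0 := by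
      intro u v w
      have h1 : ∀ i : ℕ, F (y * y^i) (y^i) v w - F (y * y^i) (y^i) u w + F (y * y^i) (y^i) u v =
          F (y^(i+1)) u v w - F (y^i) u v w := by
        intro i
        have := c (y * y^i) (y^i) u v w
        rw [pow_succ']
        linear_combination this
      simp only [A]
      rw [← Finset.sum_sub_distrib, ← Finset.sum_add_distrib]
      simp only [h1]
      rw [Finset.sum_range_sub (fun i => F (y^i) u v w), hm, pow_zero, sub_self]
    have hψ0 : A 1 1 = 0 := by have := hA2 1 1 1; linear_combination this
    have hψ : ∀ n : ℤ, A 1 (y^(n+1)) = A 1 (y^n) + A 1 y := by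
      intro n
      have e1 := hA2 1 y (y^(n+1))
      have e2 := hA1 1 (y^n)
      rw [mul_one, ← zpow_one_add, add_comm] at e2
      linear_combination -e1 + e2
    have hψn : ∀ n : ℤ, A 1 (y^n) = n * A 1 y := by
      intro n
      induction n using Int.induction_on with
      | zero => simp [hψ0]
      | succ n ih => rw [hψ, ih]; push_cast; ring
      | pred n ih =>
        have := hψ (-(n : ℤ) - 1)
        rw [sub_add_cancel, ih] at this
        push_cast at *
        linear_combination -this
    obtain ⟨z, hz⟩ := hφ g
    obtain ⟨n, rfl⟩ := hy z
    change A 1 (φ g) = 0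
    rw [hz, ← zpow_natCast, ← zpow_mul, hψn]
    push_cast
    rw [CharP.cast_eq_zero]; ring
  choose β0 hβ0 using fun g => cyc_solve hy (fun x => F (y * x) x 1 (φ g)) (obs g)
  let β : H → H → G → k := fun g0 g1 x => β0 (g0⁻¹ * g1) ((φ g0)⁻¹ * x)
  have hβ : ∀ g0 g1 x, β g0 g1 (y * x) - β g0 g1 x = F (y * x) x (φ g0) (φ g1) := by
    intro g0 g1 x
    have := hβ0 (g0⁻¹ * g1) ((φ g0)⁻¹ * x)
    rw [← hF.inv (φ g0), ← mul_assoc y, mul_comm y, mul_assoc, mul_inv_cancel_left, mul_inv_cancel_left, map_mul, map_inv,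
      mul_inv_cancel_left, mul_one] at this
    exact this
  have hβi : ∀ h g0 g1 x, β (h * g0) (h * g1) x = β g0 g1 ((φ h)⁻¹ * x) := by
    intro h g0 g1 x
    simp [β, mul_assoc]
  let B : H → H → H → G → k := fun g0 g1 g2 x => F x (φ g0) (φ g1) (φ g2) -
    (β g1 g2 x - β g0 g2 x + β g0 g1 x)
  have hB1 : ∀ g0 g1 g2 x, B g0 g1 g2 (y * x) = B g0 g1 g2 x := by
    intro g0 g1 g2 x
    have := c (y * x) x (φ g0) (φ g1) (φ g2)
    simp only [B]
    linear_combination -hβ g1 g2 x + hβ g0 g2 x - hβ g0 g1 x - this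
  have hB2 : ∀ g0 g1 g2 x, B g0 g1 g2 x = B g0 g1 g2 1 := by
    intro g0 g1 g2 x
    obtain ⟨n, rfl⟩ := hy x
    induction n using Int.induction_on with
    | zero => simp
    | succ n ih => rw [add_comm, zpow_one_add, hB1, ih]
    | pred n ih => 
      rw [← ih, ← hB1, ← zpow_one_add]
      congr 2; ring
  refine ⟨fun g0 g1 g2 => B g0 g1 g2 1, fun h g0 g1 g2 => ?_, ?_⟩
  · dsimp only
    rw [← hB2 g0 g1 g2 (φ h)⁻¹]
    simp only [B, hβi, mul_one]
    rw [← hF.inv (φ h) (φ h)⁻¹, mul_inv_cancel, map_mul, map_mul, map_mul]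
  · funext g0 g1 g2 g3
    simp only [d2, B]
    linear_combination -c 1 (φ g0) (φ g1) (φ g2) (φ g3)
end cyc

/-- A group whose finite subsets are contained in cyclic groups generated by `ℓ`-th powers has no cohomology in
degree three. -/
theorem H3_rank1 {A : Type*} [CommGroup A]
    (h : ∀ s : Finset A, ∃ y : A, (s : Set A) ⊆ Subgroup.zpowers (y^ℓ)) : H3 A k := by
  intro F hF
  refine B3_of_local hF.inv fun s => ?_
  obtain ⟨y, hs⟩ := h s
  refine ⟨Subgroup.zpowers (y^ℓ), hs, ?_⟩
  have hle : Subgroup.zpowers (y^ℓ) ≤ Subgroup.zpowers y := by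
    rw [Subgroup.zpowers_le]; exact Subgroup.npow_mem_zpowers y ℓ
  have := cyc3 (G := Subgroup.zpowers y) (H := Subgroup.zpowers (y^ℓ)) ℓ
    (y := ⟨y, Subgroup.mem_zpowers y⟩) (by
      rintro ⟨g, n, rfl⟩
      exact ⟨n, Subtype.ext (by simp)⟩) (hF.comp (Subgroup.subtype _)) (Subgroup.inclusion hle) (by
      rintro ⟨g, n, rfl⟩
      refine ⟨⟨y^n, n, rfl⟩, Subtype.ext ?_⟩
      simp only [Subgroup.coe_inclusion, Subgroup.coe_pow]
      rw [← zpow_natCast, ← zpow_natCast, ← zpow_mul, ← zpow_mul, mul_comm])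
  exact this

/-- Every element `x` of an `ℓ`-divisible abelian group lies in an `ℓ`-divisible subgroup to which `H3_rank1` applies:
the union of the cyclic groups generated by compatible `ℓ ^ n`-th roots of `x`. -/
theorem exists_div_tower {A : Type*} [CommGroup A] (hd : ∀ x : A, ∃ y, y^ℓ = x) (x : A) :
    ∃ D : Subgroup A, x ∈ D ∧ (∀ u ∈ D, ∃ v ∈ D, v^ℓ = u) ∧
      ∀ s : Finset A, (s : Set A) ⊆ D → ∃ y ∈ D, (s : Set A) ⊆ Subgroup.zpowers (y^ℓ) := by
  classical
  choose r hr using hd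
  let t : ℕ → A := fun n => r^[n] x
  have ht : ∀ n, (t (n+1))^ℓ = t n := by
    intro n; simp only [t, Function.iterate_succ_apply']; exact hr _
  have mono : Monotone (fun n => Subgroup.zpowers (t n)) := by
    refine monotone_nat_of_le_succ fun n => ?_
    rw [Subgroup.zpowers_le, ← ht n]; exact Subgroup.npow_mem_zpowers _ _
  have hmem : ∀ {u}, u ∈ (⨆ n, Subgroup.zpowers (t n)) ↔ ∃ n, u ∈ Subgroup.zpowers (t n) :=
    Subgroup.mem_iSup_of_directed mono.directed_le
  refine ⟨⨆ n, Subgroup.zpowers (t n), hmem.2 ⟨0, Subgroup.mem_zpowers _⟩, ?_, ?_⟩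
  · intro u hu
    obtain ⟨n, j, rfl⟩ := hmem.1 hu
    refine ⟨(t (n+1))^j, hmem.2 ⟨n+1, j, rfl⟩, ?_⟩
    dsimp only
    rw [← zpow_natCast, ← zpow_mul, mul_comm, zpow_mul, zpow_natCast, ht]
  · intro s
    have : (s : Set A) ⊆ (⨆ n, Subgroup.zpowers (t n) : Subgroup A) →
        ∃ n, (s : Set A) ⊆ Subgroup.zpowers (t n) := by
      induction s using Finset.induction_on with
      | empty => intro _; exact ⟨0, by simp⟩
      | insert a s ha ih =>
        intro h
        rw [Finset.coe_insert, Set.insert_subset_iff] at h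
        obtain ⟨n, hn⟩ := ih h.2
        obtain ⟨m, hm⟩ := hmem.1 h.1
        refine ⟨max n m, ?_⟩
        rw [Finset.coe_insert, Set.insert_subset_iff]
        exact ⟨mono (le_max_right n m) hm, hn.trans (mono (le_max_left n m))⟩
    intro hs
    obtain ⟨n, hn⟩ := this hs
    refine ⟨t (n+1), hmem.2 ⟨n+1, Subgroup.mem_zpowers _⟩, ?_⟩
    rw [ht]; exact hn

/-- Every finite subset lies in an `ℓ`-divisible subgroup without cohomology in degree three, obtained by adjoining
one divisible tower at a time. -/
theorem H3_of_div_aux {A : Type*} [CommGroup A] (hd : ∀ x : A, ∃ y, y^ℓ = x) (s : Finset A) :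
    ∃ B : Subgroup A, (s : Set A) ⊆ B ∧ (∀ u ∈ B, ∃ v ∈ B, v^ℓ = u) ∧ H3 B k := by
  classical
  induction s using Finset.induction_on with
  | empty =>
    refine ⟨⊥, by simp, ?_, ?_⟩
    · intro u hu
      rw [Subgroup.mem_bot] at hu
      exact ⟨1, Subgroup.one_mem _, by simp [hu]⟩
    · apply H3_rank1 ℓ
      intro s
      refine ⟨1, fun x _ => ?_⟩
      rw [Subsingleton.elim x 1]; exact Subgroup.one_mem _
  | insert x s hx ih =>
    obtain ⟨B, hs, hB, hB3⟩ := ih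
    obtain ⟨D, hxD, hD, hDs⟩ := exists_div_tower ℓ hd x
    have hdiv : ∀ u ∈ B ⊔ D, ∃ v ∈ B ⊔ D, v^ℓ = u := by
      intro u hu
      obtain ⟨b, hb, d, hdd, rfl⟩ := Subgroup.mem_sup.1 hu
      obtain ⟨b', hb', rfl⟩ := hB b hb
      obtain ⟨d', hd', rfl⟩ := hD d hdd
      exact ⟨b' * d', Subgroup.mul_mem_sup hb' hd', mul_pow _ _ _⟩
    refine ⟨B ⊔ D, ?_, hdiv, ?_⟩
    · rw [Finset.coe_insert, Set.insert_subset_iff]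
      exact ⟨(le_sup_right : D ≤ _) hxD, fun y hy => (le_sup_left : B ≤ _) (hs hy)⟩
    · let π := QuotientGroup.mk' (B.subgroupOf (B ⊔ D))
      have hker : π.ker = B.subgroupOf (B ⊔ D) := QuotientGroup.ker_mk' _
      refine ext3_ab (π := π) ℓ (QuotientGroup.mk'_surjective _) ?_ ?_ ?_ ?_
      · rintro ⟨u, hu⟩
        obtain ⟨v, hv, rfl⟩ := hdiv u hu
        exact ⟨⟨v, hv⟩, rfl⟩
      · rw [hker]
        rintro ⟨⟨u, hu⟩, hu'⟩
        obtain ⟨v, hv, rfl⟩ := hB u hu'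
        exact ⟨⟨⟨v, (le_sup_left : B ≤ B ⊔ D) hv⟩, hv⟩, rfl⟩
      · rw [hker]
        exact H3.equiv (Subgroup.subgroupOfEquivOfLe le_sup_left).symm hB3
      · apply H3_rank1 ℓ
        have hsur : ∀ q : (B ⊔ D : Subgroup A) ⧸ (B.subgroupOf (B ⊔ D)), ∃ d : D,
            π ⟨d, (le_sup_right : D ≤ B ⊔ D) d.2⟩ = q := by
          intro q
          obtain ⟨⟨u, hu⟩, rfl⟩ := QuotientGroup.mk'_surjective _ q
          obtain ⟨b, hb, d, hdd, rfl⟩ := Subgroup.mem_sup.1 hu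
          refine ⟨⟨d, hdd⟩, ?_⟩
          rw [QuotientGroup.mk'_eq_mk']
          refine ⟨⟨b, (le_sup_left : B ≤ B ⊔ D) hb⟩, hb, ?_⟩
          apply Subtype.ext
          exact mul_comm _ _
        choose e he using hsur
        intro s
        obtain ⟨y, hyD, hy⟩ := hDs (s.image (fun q => (e q : A))) (by
          intro a ha
          rw [Finset.coe_image] at ha
          obtain ⟨q, -, rfl⟩ := ha
          exact (e q).2)
        refine ⟨π ⟨y, (le_sup_right : D ≤ B ⊔ D) hyD⟩, fun q hq => ?_⟩
        obtain ⟨n, hn⟩ := hy (by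
          rw [Finset.coe_image]; exact ⟨q, hq, rfl⟩ : (e q : A) ∈ _)
        refine ⟨n, ?_⟩
        dsimp only at hn ⊢
        rw [← he q, ← map_pow, ← map_zpow]
        congr 1
        exact Subtype.ext (by rw [← hn]; rfl)

/-- An `ℓ`-divisible abelian group has no cohomology in degree three. -/
theorem H3_of_div {G : Type*} [Group G] (hc : ∀ a b : G, a * b = b * a)
    (hd : ∀ x : G, ∃ y, y^ℓ = x) : H3 G k := by
  let _ : CommGroup G := { ‹Group G› with mul_comm := hc }
  intro F hF
  refine B3_of_local hF.inv fun s => ?_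
  obtain ⟨B, hs, -, hB⟩ := H3_of_div_aux (k := k) ℓ hd s
  exact ⟨B, hs, hB _ (hF.comp B.subtype)⟩
end
end FM

namespace FM
/-! ### The five-term relation -/

section FT
open Polynomial
variable {K k : Type*} [Field K] [Field k]

/-- The five-term relation of the dilogarithm: `φ` defines a linear functional on the pre-Bloch group of `K`. The values
at `0` and `1` play no role. -/
def FT (φ : K → k) : Prop := ∀ x y : K, x ≠ 0 → x ≠ 1 → y ≠ 0 → y ≠ 1 → x ≠ y →
  φ x - φ y + φ (y / x) - φ ((y - 1) / (x - 1)) + φ ((y⁻¹ - 1) / (x⁻¹ - 1)) = 0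

variable {φ : K → k}

/-- For a solution `φ` of the five-term relation, `u ↦ φ u + φ u⁻¹` is multiplicative. -/
theorem FT.mul (h : FT φ) {u w : K} (hu0 : u ≠ 0) (hw0 : w ≠ 0) (hu : u ≠ 1) (hw : w ≠ 1) (huw : u * w ≠ 1) :
    φ (u * w) + φ (u * w)⁻¹ = (φ u + φ u⁻¹) + (φ w + φ w⁻¹) := by
  have n1 : 1 - w ≠ 0 := sub_ne_zero.2 (Ne.symm hw)
  have n2 : 1 - u * w ≠ 0 := sub_ne_zero.2 (Ne.symm huw)
  have n3 : 1 - u ≠ 0 := sub_ne_zero.2 (Ne.symm hu)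
  obtain ⟨x, hx⟩ : ∃ x, x = (1 - u * w) / (u * (1 - w)) := ⟨_, rfl⟩
  have hx' : x * (u * (1 - w)) = 1 - u * w := by rw [hx]; field_simp
  have hx0 : x ≠ 0 := by
    rintro rfl; rw [zero_mul] at hx'; exact n2 hx'.symm
  have hx1 : x ≠ 1 := by
    rintro rfl; apply n3; linear_combination -hx'
  have hy1 : u * x ≠ 1 := by
    intro e
    have : w * (1 - u) = 0 := by linear_combination (1 - w) * e - hx'
    rcases mul_eq_zero.1 this with h | h
    · exact hw0 h
    · exact n3 h
  have hxy : x ≠ u * x := by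
    intro e
    have : x * (1 - u) = 0 := by linear_combination e
    rcases mul_eq_zero.1 this with h | h
    · exact hx0 h
    · exact n3 h
  have n4 : x - 1 ≠ 0 := sub_ne_zero.2 hx1
  have n4' : 1 - x ≠ 0 := sub_ne_zero.2 hx1.symm
  have n5 : u * x - 1 ≠ 0 := sub_ne_zero.2 hy1
  have n6 : x⁻¹ - 1 ≠ 0 := sub_ne_zero.2 (by simpa using hx1)
  have hy0 : u * x ≠ 0 := mul_ne_zero hu0 hx0
  have e1 := h x (u * x) hx0 hx1 hy0 hy1 hxy
  have e2 := h (u * x) x hy0 hy1 hx0 hx1 hxy.symm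
  have f1 : u * x / x = u := by field_simp
  have f2 : (u * x - 1) / (x - 1) = u * w := by
    rw [div_eq_iff n4]; linear_combination hx'
  have f3 : ((u * x)⁻¹ - 1) / (x⁻¹ - 1) = w := by
    rw [div_eq_iff n6]; field_simp; linear_combination -hx'
  rw [← inv_div (u * x), ← inv_div (u * x - 1), ← inv_div ((u * x)⁻¹ - 1), f1, f2, f3] at e2
  rw [f1, f2, f3] at e1
  linear_combination -e1 - e2

/-- The multiplicative function of `FT.mul` vanishes, since every element of `K` is an `ℓ`-th power. -/
theorem FT.inv [IsAlgClosed K] (ℓ : ℕ) [CharP k ℓ] (hℓ : ℓ ≠ 0) (h : FT φ) {z : K} (hz0 : z ≠ 0) (hz : z ≠ 1) :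
    φ z⁻¹ = - φ z := by
  classical
  let f : K → k := fun z => φ z + φ z⁻¹
  have fi : ∀ u, f u⁻¹ = f u := by intro u; simp only [f, inv_inv]; ring
  have f2 : ∀ u, u ≠ 0 → u ≠ 1 → f u + f u = 0 := by
    intro u h0 h1
    obtain ⟨w, hw⟩ := Infinite.exists_notMem_finset ({0, 1, u⁻¹} : Finset K)
    simp only [Finset.mem_insert, Finset.mem_singleton, not_or] at hw
    obtain ⟨w0, w1, w2⟩ := hw
    have huw : u * w ≠ 1 := by
      intro e; exact w2 (eq_inv_of_mul_eq_one_right e)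
    have e1 := h.mul h0 w0 h1 w1 huw
    change f (u * w) = f u + f w at e1
    have e5 := h.mul (u := u⁻¹) (w := u * w) (inv_ne_zero h0) (mul_ne_zero h0 w0) (by simpa using h1) huw
      (by rwa [inv_mul_cancel_left₀ h0])
    rw [inv_mul_cancel_left₀ h0] at e5
    change f w = f u⁻¹ + f (u * w) at e5
    rw [fi] at e5
    linear_combination -e1 - e5
  let g : Kˣ → k := fun u => if u = 1 then 0 else f u
  have hg : IsHom g := by
    intro a b
    by_cases ha : a = 1
    · simp [g, ha]
    by_cases hb : b = 1
    · simp [g, hb]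
    by_cases hab : a * b = 1
    · have : b = a⁻¹ := eq_inv_of_mul_eq_one_right hab
      subst this
      have ha' : a⁻¹ ≠ 1 := by simpa using ha
      simp only [g, mul_inv_cancel, if_true, if_neg ha, if_neg ha']
      rw [Units.val_inv_eq_inv_val, fi]
      exact (f2 a a.ne_zero (by simpa using ha)).symm
    · simp only [g, if_neg ha, if_neg hb, if_neg hab]
      exact h.mul a.ne_zero b.ne_zero (by simpa using ha) (by simpa using hb)
        (by rw [← Units.val_mul]; exact fun e => hab (Units.ext e))
  have := hg.eq_zero_of_div ℓ (fun x => by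
    obtain ⟨y, hy⟩ := IsAlgClosed.exists_pow_nat_eq (x : K) (Nat.pos_of_ne_zero hℓ)
    have hy0 : y ≠ 0 := by
      rintro rfl
      rw [zero_pow hℓ] at hy; exact x.ne_zero hy.symm
    exact ⟨Units.mk0 y hy0, Units.ext (by simpa using hy)⟩) (Units.mk0 z hz0)
  have hz' : Units.mk0 z hz0 ≠ 1 := by
    intro e; exact hz (by simpa using congrArg Units.val e)
  simp only [g, if_neg hz', Units.val_mk0] at this
  simp only [f] at this
  linear_combination this

/-- The sum `φ z + φ (1 - z)` does not depend on `z`. -/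
theorem FT.one_sub [IsAlgClosed K] (ℓ : ℕ) [CharP k ℓ] (hℓ : ℓ ≠ 0) (h : FT φ) :
    ∃ c, ∀ z : K, z ≠ 0 → z ≠ 1 → φ (1 - z) = c - φ z := by
  classical
  obtain ⟨y, hy⟩ := Infinite.exists_notMem_finset ({0, 1} : Finset K)
  simp only [Finset.mem_insert, Finset.mem_singleton, not_or] at hy
  obtain ⟨y0, y1⟩ := hy
  have y2 : 1 - y ≠ 0 := sub_ne_zero.2 (Ne.symm y1)
  refine ⟨φ y + φ (1 - y), fun x x0 x1 => ?_⟩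
  have x2 : 1 - x ≠ 0 := sub_ne_zero.2 (Ne.symm x1)
  by_cases hxy : x = y
  · rw [hxy]; ring
  have h1y : 1 - y ≠ 1 := by simpa using y0
  have h1x : 1 - x ≠ 1 := by simpa using x0
  have e1 := h x y x0 x1 y0 y1 hxy
  have e2 := h (1 - x) (1 - y) x2 h1x y2 h1y (by simpa using hxy)
  have g1 : (y - 1) / (x - 1) = (1 - y) / (1 - x) := by
    rw [← neg_sub 1 y, ← neg_sub 1 x, neg_div_neg_eq]
  have g2 : ((1 - y) - 1) / ((1 - x) - 1) = y / x := by
    rw [show 1 - y - 1 = -y by ring, show 1 - x - 1 = -x by ring, neg_div_neg_eq]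
  have g3 : ((1 - y)⁻¹ - 1) / ((1 - x)⁻¹ - 1) = ((y⁻¹ - 1) / (x⁻¹ - 1))⁻¹ := by
    have a1 : (1 - y)⁻¹ - 1 = y / (1 - y) := by field_simp; ring
    have a2 : (1 - x)⁻¹ - 1 = x / (1 - x) := by field_simp; ring
    have a3 : y⁻¹ - 1 = (1 - y) / y := by field_simp
    have a4 : x⁻¹ - 1 = (1 - x) / x := by field_simp
    rw [a1, a2, a3, a4]; field_simp
  have i0 : (y⁻¹ - 1) / (x⁻¹ - 1) ≠ 0 := by
    have : y⁻¹ - 1 ≠ 0 := sub_ne_zero.2 (by simpa using y1)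
    have : x⁻¹ - 1 ≠ 0 := sub_ne_zero.2 (by simpa using x1)
    positivity
  have i1 : (y⁻¹ - 1) / (x⁻¹ - 1) ≠ 1 := by
    have : x⁻¹ - 1 ≠ 0 := sub_ne_zero.2 (by simpa using x1)
    intro e
    rw [div_eq_one_iff_eq this] at e
    apply hxy; 
    simpa using e.symm
  rw [g2, g3, h.inv ℓ hℓ i0 i1] at e2
  rw [g1] at e1
  linear_combination e1 + e2
end FT
end FM

namespace FM
/-! ### Symbols of polynomials -/

section FT2
open Polynomial
variable {K k : Type*} [Field K] [Field k]

variable (K k) in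
/-- The functions on `K` that are constant outside a finite set. -/
def acst : Submodule k (K → k) where
  carrier := {f | ∃ κ, ∀ᶠ t in Filter.cofinite, f t = κ}
  zero_mem' := ⟨0, Filter.Eventually.of_forall fun _ => rfl⟩
  add_mem' := by
    rintro f g ⟨a, ha⟩ ⟨b, hb⟩
    exact ⟨a + b, by filter_upwards [ha, hb] with t h1 h2; rw [Pi.add_apply, h1, h2]⟩
  smul_mem' := by
    rintro r f ⟨a, ha⟩
    exact ⟨r * a, by filter_upwards [ha] with t h1; rw [Pi.smul_apply, h1, smul_eq_mul]⟩

/-- Functions on `K` modulo those that are constant outside a finite set. -/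
abbrev QF (K k : Type*) [Field K] [Field k] := (K → k) ⧸ acst K k

/-- The class of a function in `QF K k`. -/
def qf (f : K → k) : QF K k := (acst K k).mkQ f

theorem qf_eq_zero {f : K → k} : qf f = 0 ↔ ∃ κ, ∀ᶠ t in Filter.cofinite, f t = κ := by
  rw [qf, Submodule.mkQ_apply, Submodule.Quotient.mk_eq_zero]; rfl
theorem qf_add (f g : K → k) : qf (f + g) = qf f + qf g := map_add _ _ _
theorem qf_sub (f g : K → k) : qf (f - g) = qf f - qf g := map_sub _ _ _
theorem qf_neg (f : K → k) : qf (-f) = - qf f := map_neg _ _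

theorem ev_ne [Infinite K] {A : K[X]} (h : A ≠ 0) : ∀ᶠ t in Filter.cofinite, A.eval t ≠ 0 := by
  rw [Filter.eventually_cofinite]
  have := A.rootSet_finite K
  refine (A.finite_setOfPred_isRoot h).subset ?_
  intro x hx; simpa using hx

variable (φ : K → k)

/-- The symbol of a pair of points: the class of `t ↦ φ ((t - α) / (β - α))`, set to `0` for `α = β`. -/
noncomputable def sy (α β : K) : QF K k := open Classical in if α = β then 0 else qf (fun t => φ ((t - α) / (β - α)))

/-- The sum of the symbols of all pairs of roots of `A` and `B`, with multiplicities. -/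
noncomputable def SS (A B : K[X]) : QF K k := (A.roots.map fun α => (B.roots.map fun β => sy φ α β).sum).sum

/-- The class of the function `t ↦ φ (-A t / C t)`. -/
def PP (A C : K[X]) : QF K k := qf (fun t => φ (-(A.eval t) / C.eval t))

/-- The identity expressing `φ (-A / C)` through symbols of roots, to be shown for coprime `A`, `B`, `C` with `A + B + C = 0`. -/
def Claim (A B C : K[X]) : Prop := PP φ A C = SS φ A B + SS φ B C + SS φ C A

theorem SS_mul_left {A A' : K[X]} (h : A ≠ 0) (h' : A' ≠ 0) (B : K[X]) : SS φ (A * A') B = SS φ A B + SS φ A' B := by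
  simp [SS, roots_mul (mul_ne_zero h h')]
theorem SS_mul_right {A A' : K[X]} (h : A ≠ 0) (h' : A' ≠ 0) (B : K[X]) : SS φ B (A * A') = SS φ B A + SS φ B A' := by
  simp [SS, roots_mul (mul_ne_zero h h')]
theorem SS_C_left (r : K) (B : K[X]) : SS φ (C r) B = 0 := by simp [SS]
theorem SS_C_right (r : K) (B : K[X]) : SS φ B (C r) = 0 := by simp [SS]
theorem SS_neg_left (A B : K[X]) : SS φ (-A) B = SS φ A B := by simp [SS]
theorem SS_neg_right (A B : K[X]) : SS φ A (-B) = SS φ A B := by simp [SS]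

variable {φ} [IsAlgClosed K] (ℓ : ℕ) [CharP k ℓ] (hℓ : ℓ ≠ 0) (h : FT φ)
include hℓ h

theorem sy_anti (α β : K) : sy φ β α = - sy φ α β := by
  unfold sy
  by_cases e : α = β
  · simp [e]
  rw [if_neg e, if_neg (Ne.symm e)]
  obtain ⟨c, hc⟩ := h.one_sub ℓ hℓ
  rw [← qf_neg, ← sub_eq_zero, ← qf_sub, qf_eq_zero]
  refine ⟨c, ?_⟩
  have h1 := (Set.finite_singleton α).compl_mem_cofinite
  have h2 := (Set.finite_singleton β).compl_mem_cofinite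
  filter_upwards [h1, h2] with t ha hb
  have ne : β - α ≠ 0 := sub_ne_zero.2 (Ne.symm e)
  have ne' : α - β ≠ 0 := sub_ne_zero.2 e
  have ha : t ≠ α := ha
  have hb : t ≠ β := hb
  have := hc ((t - α) / (β - α)) (div_ne_zero (sub_ne_zero.2 ha) ne)
    (by rw [Ne, div_eq_one_iff_eq ne]; simpa using hb)
  have e1 : 1 - (t - α) / (β - α) = (t - β) / (α - β) := by
    rw [eq_div_iff ne']; field_simp; ring
  rw [e1] at this
  simp only [Pi.sub_apply, Pi.neg_apply, this]; ring

theorem SS_anti (A B : K[X]) : SS φ B A = - SS φ A B := by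
  unfold SS
  rw [Multiset.sum_map_sum_map]
  simp only [← Multiset.sum_map_neg]
  congr 1
  refine Multiset.map_congr rfl fun α _ => ?_
  congr 1
  refine Multiset.map_congr rfl fun β _ => ?_
  exact sy_anti ℓ hℓ h _ _

theorem PP_swap {A C : K[X]} (hA : A ≠ 0) (hC : C ≠ 0) (hAC : A + C ≠ 0) : PP φ C A = - PP φ A C := by
  unfold PP
  rw [← qf_neg, ← sub_eq_zero, ← qf_sub, qf_eq_zero]
  refine ⟨0, ?_⟩
  filter_upwards [ev_ne hA, ev_ne hC, ev_ne hAC] with t h1 h2 h3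
  have := h.inv ℓ hℓ (z := -(A.eval t) / C.eval t) (div_ne_zero (neg_ne_zero.2 h1) h2) (by
    rw [Ne, div_eq_one_iff_eq h2]; intro e; apply h3; rw [eval_add, ← e]; ring)
  rw [inv_div, div_neg, ← neg_div] at this
  simp only [Pi.sub_apply, Pi.neg_apply, this]; ring

theorem PP_swap2 {A B C : K[X]} (hA : A ≠ 0) (hB : B ≠ 0) (hC : C ≠ 0) (hs : A + B + C = 0) :
    PP φ B C = - PP φ A C := by
  obtain ⟨c, hc⟩ := h.one_sub ℓ hℓ
  unfold PP
  rw [← qf_neg, ← sub_eq_zero, ← qf_sub, qf_eq_zero]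
  refine ⟨c, ?_⟩
  filter_upwards [ev_ne hA, ev_ne hB, ev_ne hC] with t h1 h2 h3
  have hs' : A.eval t + B.eval t + C.eval t = 0 := by rw [← eval_add, ← eval_add, hs, eval_zero]
  have := hc (-(A.eval t) / C.eval t) (div_ne_zero (neg_ne_zero.2 h1) h3) (by
    rw [Ne, div_eq_one_iff_eq h3]; intro e; apply h2; linear_combination hs' + e)
  have e1 : 1 - -(A.eval t) / C.eval t = -(B.eval t) / C.eval t := by
    field_simp; linear_combination hs'
  rw [e1] at this
  simp only [Pi.sub_apply, Pi.neg_apply, this]; ring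

theorem Claim.swap {A B C : K[X]} (hA : A ≠ 0) (hB : B ≠ 0) (hC : C ≠ 0) (hs : A + B + C = 0) (H : Claim φ A B C) :
    Claim φ B A C := by
  unfold Claim at *
  rw [PP_swap2 ℓ hℓ h hA hB hC hs, H, SS_anti ℓ hℓ h A B, SS_anti ℓ hℓ h C A, SS_anti ℓ hℓ h B C]
  abel

theorem Claim.swap2 {A B C : K[X]} (hA : A ≠ 0) (hB : B ≠ 0) (hC : C ≠ 0) (hs : A + B + C = 0) (H : Claim φ A B C) :
    Claim φ C B A := by
  unfold Claim at *
  rw [PP_swap ℓ hℓ h hA hC (by intro e; apply hB; linear_combination hs - e), H, 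
    SS_anti ℓ hℓ h A B, SS_anti ℓ hℓ h C A, SS_anti ℓ hℓ h B C]
  abel

/-- The five-term relation, evaluated at rational functions of `t`, reduces the identity for the products `aA`, `bB`, `cC`
to four triples of smaller polynomials. -/
theorem Claim.step {a b c A B C E : K[X]} (ha : a ≠ 0) (hb : b ≠ 0) (hc : c ≠ 0) (hA : A ≠ 0) (hB : B ≠ 0) (hC : C ≠ 0)
    (hE : E ≠ 0) (hs : a + b + c = 0) (e1 : A - B = -(c * E)) (e2 : B - C = -(a * E)) (e3 : C - A = -(b * E))
    (H : Claim φ a b c) (H1 : Claim φ A (-B) (c * E)) (H2 : Claim φ B (-C) (a * E)) (H3 : Claim φ C (-A) (b * E)) :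
    Claim φ (a * A) (b * B) (c * C) := by
  obtain ⟨k0, hk⟩ := h.one_sub ℓ hℓ
  have key : PP φ (a * A) (c * C) = PP φ a c + PP φ A (c * E) + PP φ B (a * E) + PP φ C (b * E) := by
    unfold PP
    rw [← sub_eq_zero, ← qf_add, ← qf_add, ← qf_add, ← qf_sub, qf_eq_zero]
    refine ⟨3 * k0, ?_⟩
    filter_upwards [ev_ne ha, ev_ne hb, ev_ne hc, ev_ne hA, ev_ne hB, ev_ne hC, ev_ne hE] with t n1 n2 n3 n4 n5 n6 n7
    have hs' : a.eval t + b.eval t + c.eval t = 0 := by rw [← eval_add, ← eval_add, hs, eval_zero]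
    have e1' : A.eval t - B.eval t = -(c.eval t * E.eval t) := by rw [← eval_sub, e1, eval_neg, eval_mul]
    have e2' : B.eval t - C.eval t = -(a.eval t * E.eval t) := by rw [← eval_sub, e2, eval_neg, eval_mul]
    have e3' : C.eval t - A.eval t = -(b.eval t * E.eval t) := by rw [← eval_sub, e3, eval_neg, eval_mul]
    simp only [Pi.sub_apply, Pi.add_apply, eval_mul]
    generalize a.eval t = a at *
    generalize b.eval t = b at *
    generalize c.eval t = c at *
    generalize A.eval t = A at *
    generalize B.eval t = B at *
    generalize C.eval t = C at *
    generalize E.eval t = E at *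
    have hABC : a * A + b * B + c * C = 0 := by linear_combination B * hs' + a * e1' - c * e2'
    have m1 := mul_ne_zero n1 n7
    have m2 := mul_ne_zero n2 n7
    have m3 := mul_ne_zero n3 n7
    have aux : ∀ {u v w : K}, u ≠ 0 → v ≠ 0 → w ≠ 0 → u - v = -w → φ (-u / w) = φ (v / u) - k0 := by
      intro u v w hu hv hw e
      have vu : v / u ≠ 1 := by
        rw [Ne, div_eq_one_iff_eq hu]; intro e'; apply hw; linear_combination e + e'
      have := hk (v / u) (div_ne_zero hv hu) vu
      have h2 := h.inv ℓ hℓ (z := 1 - v / u) (sub_ne_zero.2 vu.symm) (by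
        rw [Ne, sub_eq_self]; exact div_ne_zero hv hu)
      have e2 : (1 - v / u)⁻¹ = -u / w := by
        have : 1 - v / u = w / (-u) := by field_simp; linear_combination e
        rw [this, inv_div]
      rw [e2, this] at h2
      rw [h2]; ring
    rw [aux n4 n5 m3 e1', aux n5 n6 m1 e2', aux n6 n4 m2 e3']
    have CB : C / B ≠ 1 := by
      rw [Ne, div_eq_one_iff_eq n5]; intro e'; apply m1; linear_combination e2' + e'
    have := h (-a / c) (-(a * A) / (c * C)) (by simp [*]) 
      (by rw [Ne, div_eq_one_iff_eq n3]; intro e; apply n2; linear_combination hs' + e) (by simp [*]) 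
      (by
        rw [Ne, div_eq_one_iff_eq (mul_ne_zero n3 n6)]; intro e
        apply mul_ne_zero n2 n5
        linear_combination e + hABC) 
      (by
        intro e
        rw [div_eq_div_iff n3 (mul_ne_zero n3 n6)] at e
        apply mul_ne_zero (mul_ne_zero n1 n3) m2
        linear_combination e + a * c * e3')
    have g1 : -(a * A) / (c * C) / (-a / c) = A / C := by field_simp
    have nn : -a / c - 1 ≠ 0 := by
      rw [sub_ne_zero, Ne, div_eq_one_iff_eq n3]; intro e; apply n2; linear_combination hs' + e
    have nn' : (-a / c)⁻¹ - 1 ≠ 0 := by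
      rw [sub_ne_zero, inv_div, Ne, div_eq_one_iff_eq (by simpa using n1)]; intro e; apply n2; linear_combination hs' - e
    have f1 : -a / c - 1 = b / c := by field_simp; linear_combination -hs'
    have f2 : -(a * A) / (c * C) - 1 = b * B / (c * C) := by
      field_simp; linear_combination -hABC
    have g2 : (-(a * A) / (c * C) - 1) / (-a / c - 1) = B / C := by rw [f1, f2]; field_simp
    have f3 : (-a / c)⁻¹ - 1 = b / a := by field_simp; linear_combination -hs'
    have f4 : (-(a * A) / (c * C))⁻¹ - 1 = b * B / (a * A) := by
      field_simp; linear_combination -hABC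
    have g3 : ((-(a * A) / (c * C))⁻¹ - 1) / ((-a / c)⁻¹ - 1) = B / A := by rw [f3, f4]; field_simp
    rw [g1, g2, g3] at this
    have i1 := h.inv ℓ hℓ (div_ne_zero n6 n5) CB
    rw [inv_div] at i1
    rw [i1] at this
    linear_combination -this
  unfold Claim at *
  rw [key, H, H1, H2, H3]
  simp only [SS_mul_left φ ha hA, SS_mul_left φ hb hB, SS_mul_left φ hc hC, SS_mul_right φ ha hA, SS_mul_right φ hb hB, 
    SS_mul_right φ hc hC, SS_mul_left φ ha hE, SS_mul_left φ hb hE, SS_mul_left φ hc hE, SS_mul_right φ ha hE, SS_mul_right φ hb hE, 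
    SS_mul_right φ hc hE, SS_neg_left, SS_neg_right]
  rw [SS_anti ℓ hℓ h A E, SS_anti ℓ hℓ h B E, SS_anti ℓ hℓ h C E]
  abel

end FT2
end FM

namespace FM
/-! ### Vanishing of solutions of the five-term relation -/

section FT3
open Polynomial
variable {K k : Type*} [Field K] [Field k] {φ : K → k} 

theorem Claim.scale {A B C : K[X]} (p : K) (hp : p ≠ 0) (H : Claim φ A B C) :
    Claim φ (Polynomial.C p * A) (Polynomial.C p * B) (Polynomial.C p * C) := by
  unfold Claim SS PP at *
  simp only [roots_C_mul _ hp]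
  rw [← H]
  congr 1
  funext t
  simp only [eval_mul, eval_C]
  rw [← mul_neg, mul_div_mul_left _ _ hp]

theorem Claim.const (a b c : K) : Claim φ (C a) (C b) (C c) := by
  unfold Claim
  simp only [SS_C_left, add_zero]
  rw [PP, qf_eq_zero]
  exact ⟨φ (-a / c), by simp⟩

theorem Claim.lin0 {α β : K} (hαβ : α ≠ β) : Claim φ (X - C α) (-(X - C β)) (C (α - β)) := by
  unfold Claim
  rw [SS_C_left, SS_C_right, SS_neg_right, SS]
  simp only [roots_X_sub_C, Multiset.map_singleton, Multiset.sum_singleton, add_zero]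
  rw [sy, if_neg hαβ, PP]
  congr 1
  funext t
  simp only [eval_sub, eval_X, eval_C]
  congr 1
  have ne : β - α ≠ 0 := sub_ne_zero.2 (Ne.symm hαβ)
  have ne' : α - β ≠ 0 := sub_ne_zero.2 hαβ
  rw [div_eq_div_iff ne' ne]; ring

variable [IsAlgClosed K] (ℓ : ℕ) [CharP k ℓ] (hℓ : ℓ ≠ 0) (h : FT φ)
include hℓ h

theorem Claim.swap3 {A B C : K[X]} (hA : A ≠ 0) (hB : B ≠ 0) (hC : C ≠ 0) (hs : A + B + C = 0) (H : Claim φ A B C) :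
    Claim φ A C B := by
  have H1 := Claim.swap ℓ hℓ h hA hB hC hs H
  have H2 := Claim.swap2 ℓ hℓ h hB hA hC (by rw [← hs]; ring) H1
  exact Claim.swap ℓ hℓ h hC hA hB (by rw [← hs]; ring) H2

theorem Claim.lin {α β γ : K} (h1 : α ≠ β) (h2 : β ≠ γ) (h3 : γ ≠ α) : 
    Claim φ (C (β - γ) * (X - C α)) (C (γ - α) * (X - C β)) (C (α - β) * (X - C γ)) := by
  have m1 : (C (α - β) : K[X]) ≠ 0 := C_ne_zero.2 (sub_ne_zero.2 h1)
  have m2 : (C (β - γ) : K[X]) ≠ 0 := C_ne_zero.2 (sub_ne_zero.2 h2)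
  have m2' : (C (γ - β) : K[X]) ≠ 0 := C_ne_zero.2 (sub_ne_zero.2 h2.symm)
  have m3 : (C (α - γ) : K[X]) ≠ 0 := C_ne_zero.2 (sub_ne_zero.2 h3.symm)
  have := Claim.step ℓ hℓ h (a := X - C α) (b := -(X - C β)) (c := C (α - β)) (A := C (β - γ)) (B := C (α - γ))
    (C := X - C γ) (E := 1) (X_sub_C_ne_zero _) (neg_ne_zero.2 (X_sub_C_ne_zero _)) m1 m2 m3
    (X_sub_C_ne_zero _) one_ne_zero
    (by simp only [map_sub]; ring) (by simp only [map_sub]; ring) (by simp only [map_sub]; ring) (by simp only [map_sub]; ring)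
    (Claim.lin0 h1) (by rw [mul_one, ← C_neg]; exact Claim.const _ _ _) 
    (by
      rw [mul_one]
      exact Claim.swap2 ℓ hℓ h (X_sub_C_ne_zero _) (neg_ne_zero.2 (X_sub_C_ne_zero _)) m3
        (by simp only [map_sub]; ring) (Claim.lin0 (φ := φ) h3.symm)) 
    (by
      rw [mul_one, ← C_neg, neg_sub]
      exact Claim.swap3 ℓ hℓ h (X_sub_C_ne_zero _) (neg_ne_zero.2 (X_sub_C_ne_zero _)) m2'
        (by simp only [map_sub]; ring) (Claim.lin0 (φ := φ) h2.symm))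
  convert this using 1
  · ring
  · simp only [map_sub]; ring

/-- If `a + b + c = 0` and `aA + bB + cC = 0`, the differences `A - B`, `B - C`, `C - A` are `-cE`, `-aE`, `-bE` for a
common `E`, so that `Claim.step` reduces the identity for `aA`, `bB`, `cC` to triples of degree at most `N`. -/
theorem Claim.red {a b c A B C : K[X]} {N : ℕ} (ha : a ≠ 0) (hb : b ≠ 0) (hc : c ≠ 0) (hA : A ≠ 0) (hB : B ≠ 0) (hC : C ≠ 0)
    (hs : a + b + c = 0) (hS : a * A + b * B + c * C = 0) (hab : IsCoprime a b) (hAB : IsCoprime A B)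
    (hBC : IsCoprime B C) (hCA : IsCoprime C A)
    (H0 : Claim φ a b c) (dA : A.natDegree ≤ N) (dB : B.natDegree ≤ N) (dC : C.natDegree ≤ N)
    (IH : ∀ A B C : K[X], A + B + C = 0 → IsCoprime A B → A ≠ 0 → B ≠ 0 → C ≠ 0 → A.natDegree ≤ N → 
      B.natDegree ≤ N → Claim φ A B C) : Claim φ (a * A) (b * B) (c * C) := by
  have e0 : a * (A - C) = b * (C - B) := by linear_combination hS - C * hs
  obtain ⟨E, hE⟩ : b ∣ A - C := hab.symm.dvd_of_dvd_mul_left ⟨C - B, e0⟩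
  have e3 : C - A = -(b * E) := by linear_combination -hE
  have e2 : B - C = -(a * E) := by
    apply mul_left_cancel₀ hb
    linear_combination e0 - a * hE
  have e1 : A - B = -(c * E) := by linear_combination hE - e2 + E * hs
  by_cases hE0 : E = 0
  · subst hE0
    have q1 : B = A := by linear_combination -e1
    have q2 : C = A := by linear_combination e3
    subst q1
    subst q2
    have : IsUnit C := isCoprime_self.1 hAB
    obtain ⟨r, hr, hrC⟩ := Polynomial.isUnit_iff.1 this
    subst hrC
    have := H0.scale r hr.ne_zero
    rwa [mul_comm _ a, mul_comm _ b, mul_comm _ c] at this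
  refine Claim.step ℓ hℓ h ha hb hc hA hB hC hE0 hs e1 e2 e3 H0 ?_ ?_ ?_
  · exact IH _ _ _ (by linear_combination e1) hAB.neg_right hA (neg_ne_zero.2 hB) (mul_ne_zero hc hE0) dA (by rwa [natDegree_neg])
  · exact IH _ _ _ (by linear_combination e2) hBC.neg_right hB (neg_ne_zero.2 hC) (mul_ne_zero ha hE0) dB (by rwa [natDegree_neg])
  · exact IH _ _ _ (by linear_combination e3) hCA.neg_right hC (neg_ne_zero.2 hA) (mul_ne_zero hb hE0) dC (by rwa [natDegree_neg])

/-- The inductive step for non-constant `A` and `B`: one linear factor is split off from each non-constant member, and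
these factors are scaled so that, with a constant for a constant member, they sum to zero. -/
theorem Claim.main_aux {A B D : K[X]} {N : ℕ} (hs : A + B + D = 0) (co : IsCoprime A B)
    (hA : A ≠ 0) (hB : B ≠ 0) (hD : D ≠ 0) (dA : A.natDegree ≤ N + 1) (dB : B.natDegree ≤ N + 1)
    (nA : A.natDegree ≠ 0) (nB : B.natDegree ≠ 0)
    (IH : ∀ A B C : K[X], A + B + C = 0 → IsCoprime A B → A ≠ 0 → B ≠ 0 → C ≠ 0 → A.natDegree ≤ N → 
      B.natDegree ≤ N → Claim φ A B C) : Claim φ A B D := by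
  have rt : ∀ P : K[X], P.natDegree ≠ 0 → ∃ α Q, P = (X - C α) * Q := by
    intro P hP
    obtain ⟨α, hα⟩ := IsAlgClosed.exists_root P (by
      intro e; apply hP; exact natDegree_eq_of_degree_eq_some e)
    obtain ⟨Q, hQ⟩ := dvd_iff_isRoot.2 hα
    exact ⟨α, Q, hQ⟩
  have coBD : IsCoprime B D := by
    have : D = -A + (-1) * B := by linear_combination hs
    rw [this]
    exact (co.symm.neg_right).add_mul_right_right _
  have coDA : IsCoprime D A := by
    have : D = -B + (-1) * A := by linear_combination hs
    rw [this]
    exact (co.symm.neg_left).add_mul_right_left _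
  have dD : D.natDegree ≤ N + 1 := by
    have : D = -(A + B) := by linear_combination hs
    rw [this, natDegree_neg]
    exact (natDegree_add_le _ _).trans (max_le dA dB)
  obtain ⟨α, A, rfl⟩ := rt A nA
  obtain ⟨β, B, rfl⟩ := rt B nB
  have hA' := right_ne_zero_of_mul hA
  have hB' := right_ne_zero_of_mul hB
  rw [natDegree_mul (X_sub_C_ne_zero _) hA', natDegree_X_sub_C] at dA
  rw [natDegree_mul (X_sub_C_ne_zero _) hB', natDegree_X_sub_C] at dB
  have ne : ∀ {α β : K} {P Q : K[X]}, IsCoprime ((X - C α) * P) ((X - C β) * Q) → α ≠ β := by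
    rintro α β P Q hco rfl
    exact not_isUnit_X_sub_C α (hco.isUnit_of_dvd' (dvd_mul_right _ _) (dvd_mul_right _ _))
  have hαβ := ne co
  have m1 : (C (α - β) : K[X]) ≠ 0 := C_ne_zero.2 (sub_ne_zero.2 hαβ)
  have cab : IsCoprime (X - C α) (X - C β) := isCoprime_X_sub_C_of_isUnit_sub (sub_ne_zero.2 hαβ).isUnit
  have coAB : IsCoprime A B := co.of_mul_left_right.of_mul_right_right
  by_cases nD : D.natDegree = 0
  · obtain ⟨d, rfl⟩ := natDegree_eq_zero.1 nD
    have hd0 : d ≠ 0 := by simpa using hD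
    have hu0 : d / (α - β) ≠ 0 := div_ne_zero hd0 (sub_ne_zero.2 hαβ)
    have hcu : ∀ P : K[X], IsCoprime P (C (d / (α - β))) := fun P =>
      ⟨0, C (d / (α - β))⁻¹, by rw [← C_mul, inv_mul_cancel₀ hu0]; simp⟩
    have key := Claim.red (N := N) ℓ hℓ h (a := X - C α) (b := -(X - C β)) (c := C (α - β)) (A := A) (B := -B)
      (C := C (d / (α - β))) (X_sub_C_ne_zero _) (neg_ne_zero.2 (X_sub_C_ne_zero _)) m1 hA' (neg_ne_zero.2 hB')
      (C_ne_zero.2 hu0)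
      (by simp only [map_sub]; ring)
      (by rw [← C_mul, mul_div_cancel₀ _ (sub_ne_zero.2 hαβ), ← hs]; ring)
      cab.neg_right coAB.neg_right
      (hcu _) (hcu _).symm (Claim.lin0 hαβ) (by omega) (by rw [natDegree_neg]; omega) (by simp) IH
    rw [← C_mul, mul_div_cancel₀ _ (sub_ne_zero.2 hαβ)] at key
    convert key using 1; ring
  · obtain ⟨γ, D, rfl⟩ := rt D nD
    have hβγ := ne coBD
    have hγα := ne coDA
    have hD' := right_ne_zero_of_mul hD
    rw [natDegree_mul (X_sub_C_ne_zero _) hD', natDegree_X_sub_C] at dD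
    have z1 := sub_ne_zero.2 hαβ
    have z2 := sub_ne_zero.2 hβγ
    have z3 := sub_ne_zero.2 hγα
    have uu : ∀ {r : K}, r ≠ 0 → IsUnit (C r⁻¹ : K[X]) := fun hr => isUnit_C.2 (inv_ne_zero hr).isUnit
    have cc : ∀ {r s : K} {P Q : K[X]}, r ≠ 0 → s ≠ 0 → IsCoprime P Q → IsCoprime (C r⁻¹ * P) (C s⁻¹ * Q) :=
      fun hr hs hPQ => (isCoprime_mul_unit_left_left (uu hr) _ _).2 ((isCoprime_mul_unit_left_right (uu hs) _ _).2 hPQ)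
    have g : ∀ {r : K} (hr : r ≠ 0) (P Q : K[X]), C r * P * (C r⁻¹ * Q) = P * Q := by
      intro r hr P Q
      have : (C r * C r⁻¹ : K[X]) = 1 := by rw [← C_mul, mul_inv_cancel₀ hr, C_1]
      linear_combination P * Q * this
    have nz : ∀ {r : K} {P : K[X]}, r ≠ 0 → P ≠ 0 → C r * P ≠ 0 := fun hr hP => mul_ne_zero (C_ne_zero.2 hr) hP
    have nd : ∀ (r : K) {P : K[X]}, P.natDegree ≤ N → (C r * P).natDegree ≤ N := fun r P hP => (natDegree_C_mul_le _ _).trans hP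
    have key := Claim.red (N := N) ℓ hℓ h (a := C (β - γ) * (X - C α)) (b := C (γ - α) * (X - C β)) (c := C (α - β) * (X - C γ)) 
      (A := C (β - γ)⁻¹ * A) (B := C (γ - α)⁻¹ * B) (C := C (α - β)⁻¹ * D)
      (nz z2 (X_sub_C_ne_zero _)) (nz z3 (X_sub_C_ne_zero _)) (nz z1 (X_sub_C_ne_zero _))
      (nz (inv_ne_zero z2) hA') (nz (inv_ne_zero z3) hB') (nz (inv_ne_zero z1) hD')
      (by simp only [map_sub]; ring)
      (by rw [g z2, g z3, g z1, hs])
      (by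
        have := cc (inv_ne_zero z2) (inv_ne_zero z3) cab
        rwa [inv_inv, inv_inv] at this)
      (cc z2 z3 coAB) (cc z3 z1 coBD.of_mul_left_right.of_mul_right_right) (cc z1 z2 coDA.of_mul_left_right.of_mul_right_right)
      (Claim.lin ℓ hℓ h hαβ hβγ hγα) (nd _ (by omega)) (nd _ (by omega)) (nd _ (by omega)) IH
    rwa [g z2, g z3, g z1] at key

/-- The symbol identity holds for all coprime polynomials with sum zero. -/
theorem Claim.main (N : ℕ) : ∀ A B C : K[X], A + B + C = 0 → IsCoprime A B → A ≠ 0 → B ≠ 0 → C ≠ 0 → A.natDegree ≤ N → 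
      B.natDegree ≤ N → Claim φ A B C := by
  induction N with
  | zero =>
    intro A B D hs co hA hB hD dA dB
    obtain ⟨a, rfl⟩ := natDegree_eq_zero.1 (Nat.le_zero.1 dA)
    obtain ⟨b, rfl⟩ := natDegree_eq_zero.1 (Nat.le_zero.1 dB)
    have : D = C (-(a + b)) := by rw [map_neg, map_add]; linear_combination hs
    rw [this]; exact Claim.const _ _ _
  | succ N IH =>
    intro A B D hs co hA hB hD dA dB
    have coBD : IsCoprime B D := by
      have : D = -A + (-1) * B := by linear_combination hs
      rw [this]
      exact (co.symm.neg_right).add_mul_right_right _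
    have coDA : IsCoprime D A := by
      have : D = -B + (-1) * A := by linear_combination hs
      rw [this]
      exact (co.symm.neg_left).add_mul_right_left _
    have dD : D.natDegree ≤ N + 1 := by
      have : D = -(A + B) := by linear_combination hs
      rw [this, natDegree_neg]
      exact (natDegree_add_le _ _).trans (max_le dA dB)
    have two : ∀ {P Q R : K[X]}, P + Q + R = 0 → P.natDegree = 0 → Q.natDegree = 0 → R.natDegree = 0 := by
      intro P Q R e hP hQ
      have : R = -(P + Q) := by linear_combination e
      rw [this, natDegree_neg]
      have := natDegree_add_le P Q
      omega
    by_cases nA : A.natDegree = 0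
    · by_cases nB : B.natDegree = 0
      · exact IH _ _ _ hs co hA hB hD (by omega) (by omega)
      · have nD : D.natDegree ≠ 0 := fun e => nB (two (by rw [← hs]; ring) nA e)
        have := Claim.main_aux ℓ hℓ h (A := D) (B := B) (D := A) (by rw [← hs]; ring) coBD.symm hD hB hA dD dB nD nB IH
        exact Claim.swap2 ℓ hℓ h hD hB hA (by rw [← hs]; ring) this
    · by_cases nB : B.natDegree = 0
      · have nD : D.natDegree ≠ 0 := fun e => nA (two (by rw [← hs]; ring) nB e)
        have := Claim.main_aux ℓ hℓ h (A := A) (B := D) (D := B) (by rw [← hs]; ring) coDA.symm hA hD hB dA dD nA nD IH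
        exact Claim.swap3 ℓ hℓ h hA hD hB (by rw [← hs]; ring) this
      · exact Claim.main_aux ℓ hℓ h hs co hA hB hD dA dB nA nB IH

/-- A solution of the five-term relation vanishes. In the symbol identity for `t ^ ℓ`, `1 - t ^ ℓ`, `-1` every root of
`t ^ ℓ` counts `ℓ = 0` times, so `φ (t ^ ℓ)` is constant outside a finite set; hence so is `φ`, and the five-term relation
with a generic second argument gives `φ x = 0`. -/
theorem FT.eq_zero {x : K} (x0 : x ≠ 0) (x1 : x ≠ 1) : φ x = 0 := by
  have key : Claim φ (X^ℓ : K[X]) (1 - X^ℓ) (C (-1)) := by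
    have e : (1 - X^ℓ : K[X]) = -(X^ℓ - C 1) := by simp
    have ne : (X^ℓ - C 1 : K[X]) ≠ 0 := X_pow_sub_C_ne_zero (Nat.pos_of_ne_zero hℓ) 1
    refine Claim.main ℓ hℓ h ℓ _ _ _ (by simp) ⟨1, 1, by ring⟩ (by simp) ?_ (by simp) (by simp) ?_
    · rw [e]; exact neg_ne_zero.2 ne
    · rw [e, natDegree_neg, natDegree_X_pow_sub_C]
  unfold Claim at key
  rw [SS_C_left, SS_C_right, SS, roots_pow, Multiset.map_nsmul, Multiset.sum_nsmul] at key
  have z : ∀ q : QF K k, ℓ • q = 0 := by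
    intro q
    rw [← Nat.cast_smul_eq_nsmul k, CharP.cast_eq_zero, zero_smul]
  rw [z, add_zero, add_zero, PP, qf_eq_zero] at key
  obtain ⟨κ, hκ⟩ := key
  have fin : {u : K | φ u ≠ κ}.Finite := by
    rw [Filter.eventually_cofinite] at hκ
    refine (hκ.image (fun t => t^ℓ)).subset ?_
    intro u hu
    obtain ⟨t, rfl⟩ := IsAlgClosed.exists_pow_nat_eq u (Nat.pos_of_ne_zero hℓ)
    refine ⟨t, ?_, rfl⟩
    simpa using hu
  have n1 : x⁻¹ - 1 ≠ 0 := sub_ne_zero.2 (by simpa using x1)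
  have n2 : x - 1 ≠ 0 := sub_ne_zero.2 x1
  have ev : ∀ f : K → K, Function.Injective f → ∀ᶠ y in Filter.cofinite, φ (f y) = κ := by
    intro f hf
    rw [Filter.eventually_cofinite]
    exact fin.preimage hf.injOn
  have evn : ∀ a : K, ∀ᶠ y in Filter.cofinite, y ≠ a := fun a => (Set.finite_singleton a).compl_mem_cofinite
  have i1 : Function.Injective (fun y => y / x) := fun a b e => (div_left_inj' x0).1 e
  have i2 : Function.Injective (fun y => (y - 1) / (x - 1)) := fun a b e => by
    simpa using (div_left_inj' n2).1 e
  have i3 : Function.Injective (fun y => (y⁻¹ - 1) / (x⁻¹ - 1)) := fun a b e => by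
    simpa using (div_left_inj' n1).1 e
  obtain ⟨y, y1, y2, y3, y4, y5, y6, y7⟩ := ((ev _ Function.injective_id).and ((ev _ i1).and ((ev _ i2).and ((ev _ i3).and 
    ((evn 0).and ((evn 1).and (evn x))))))).exists
  have := h x y x0 x1 y5 y6 y7.symm
  rw [y2, y3, y4] at this
  simp only [id] at y1
  rw [y1] at this
  linear_combination this

end FT3
end FM

namespace FM

/-! ### Linear groups: unipotent radicals, characters, diagonal maps -/

section Lin
variable {K V : Type} [Field K] [AddCommGroup V] [Module K V]

/-- The map `g` fixes `W` pointwise and acts trivially on `V ⧸ W`. These maps form the unipotent group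
`1 + Hom(V ⧸ W, W)`. -/
def InUnip (W : Submodule K V) (g : V ≃ₗ[K] V) : Prop :=
  (∀ w ∈ W, g w = w) ∧ ∀ v, g v - v ∈ W

theorem InUnip.pow {W : Submodule K V} {g : V ≃ₗ[K] V} (h : InUnip W g) (n : ℕ) (v : V) :
    (g ^ n) v = v + (n : K) • (g v - v) := by
  induction n with
  | zero => simp
  | succ n ih =>
    rw [pow_succ', LinearEquiv.mul_apply, ih, map_add, map_smul, h.1 _ (h.2 v)]
    push_cast
    module

theorem InUnip.comm {W : Submodule K V} {g g' : V ≃ₗ[K] V} (h : InUnip W g) (h' : InUnip W g') :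
    g * g' = g' * g := by
  ext v
  rw [LinearEquiv.mul_apply, LinearEquiv.mul_apply]
  have e1 := h.1 _ (h'.2 v)
  have e2 := h'.1 _ (h.2 v)
  rw [map_sub] at e1 e2
  rw [eq_add_of_sub_eq e1, eq_add_of_sub_eq e2]; abel

/-- The unipotent map `1 + c (g - 1)`. -/
def unipScale (W : Submodule K V) (g : V ≃ₗ[K] V) (h : InUnip W g) (c : K) : V ≃ₗ[K] V :=
  LinearEquiv.ofLinearMap (LinearMap.id + c • ((g : V →ₗ[K] V) - LinearMap.id))
    (LinearMap.id - c • ((g : V →ₗ[K] V) - LinearMap.id))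
    (by
      ext v
      have e1 := h.1 _ (h.2 v)
      rw [map_sub, sub_eq_iff_eq_add] at e1
      simp [map_sub, e1])
    (by
      ext v
      have e1 := h.1 _ (h.2 v)
      rw [map_sub, sub_eq_iff_eq_add] at e1
      simp [map_sub, e1])

theorem unipScale_apply (W : Submodule K V) (g : V ≃ₗ[K] V) (h : InUnip W g) (c : K) (v : V) :
    unipScale W g h c v = v + c • (g v - v) := by simp [unipScale]

theorem unipScale_in (W : Submodule K V) (g : V ≃ₗ[K] V) (h : InUnip W g) (c : K) :
    InUnip W (unipScale W g h c) := by
  refine ⟨fun w hw => ?_, fun v => ?_⟩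
  · rw [unipScale_apply, h.1 w hw]; simp
  · rw [unipScale_apply, add_sub_cancel_left]; exact W.smul_mem _ (h.2 v)

/-- A group realized as the full unipotent group of `W` is abelian and uniquely `ℓ`-divisible, because `ℓ` is invertible
in `K`; so it has no cohomology in degrees one to three. -/
theorem unip_H {k N : Type*} [Field k] (ℓ : ℕ) [CharP k ℓ] (hK : (ℓ : K) ≠ 0) [Group N]
    (j : N →* (V ≃ₗ[K] V)) (hj : Function.Injective j) (W : Submodule K V)
    (h : ∀ g, (∃ s, j s = g) ↔ InUnip W g) : H1 N k ∧ H2 N k ∧ H3 N k := by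
  have hU : ∀ s, InUnip W (j s) := fun s => (h _).1 ⟨s, rfl⟩
  have hc : ∀ a b : N, a * b = b * a := fun a b => hj (by
    rw [map_mul, map_mul]; exact (hU a).comm (hU b))
  have hd : ∀ x : N, ∃ y, y ^ ℓ = x := fun x => by
    obtain ⟨y, hy⟩ := (h _).2 (unipScale_in W (j x) (hU x) (ℓ : K)⁻¹)
    refine ⟨y, hj ?_⟩
    ext v
    rw [map_pow, (hU y).pow, hy, unipScale_apply, add_sub_cancel_left, smul_smul,
      mul_inv_cancel₀ hK, one_smul]; abel
  have hu : ∀ τ : N, τ ^ ℓ = 1 → τ = 1 := fun τ hτ => by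
    apply hj
    ext v
    have e := (hU τ).pow ℓ v
    rw [← map_pow, hτ, map_one, LinearEquiv.coe_one, id, eq_comm, add_eq_left, smul_eq_zero] at e
    rw [map_one, LinearEquiv.coe_one, id, ← sub_eq_zero]
    exact e.resolve_left hK
  exact ⟨H1_of_div ℓ hd, H2_of_uniq ℓ hc hd hu, H3_of_div ℓ hc hd⟩

/-- The form of `unip_H` used for stabilizers: the kernel of `π` is the full unipotent group of `W`. -/
theorem unip_ker {k S Q : Type*} [Field k] (ℓ : ℕ) [CharP k ℓ] (hK : (ℓ : K) ≠ 0) [Group S] [Group Q]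
    (j : S →* (V ≃ₗ[K] V)) (hj : Function.Injective j) (π : S →* Q) (W : Submodule K V)
    (h : ∀ g, (∃ s, π s = 1 ∧ j s = g) ↔ InUnip W g) : H1 π.ker k ∧ H2 π.ker k ∧ H3 π.ker k :=
  unip_H ℓ hK (j.comp π.ker.subtype) (hj.comp Subtype.val_injective) W fun g => by
    rw [← h]
    exact ⟨fun ⟨s, hs⟩ => ⟨s, s.2, hs⟩, fun ⟨s, h1, hs⟩ => ⟨⟨s, h1⟩, hs⟩⟩

/-! ### Determinants and blocks -/

theorem mkQ_eq {W : Submodule K V} {a b : V} : W.mkQ a = W.mkQ b ↔ a - b ∈ W :=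
  Submodule.Quotient.eq W

variable [FiniteDimensional K V]

theorem det_block (W : Submodule K V) (g : V ≃ₗ[K] V) (a : W →ₗ[K] W) (b : (V ⧸ W) →ₗ[K] (V ⧸ W))
    (ha : ∀ w : W, g w = a w) (hb : ∀ v, W.mkQ (g v) = b (W.mkQ v)) :
    LinearMap.det (g : V →ₗ[K] V) = LinearMap.det a * LinearMap.det b := by
  have he : W ≤ W.comap (g : V →ₗ[K] V) := fun w hw => by
    have := ha ⟨w, hw⟩
    simp only [Submodule.mem_comap, LinearEquiv.coe_coe]
    rw [this]; exact (a _).2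
  rw [LinearMap.det_eq_det_mul_det W _ he]
  congr 2
  · ext w; simp [ha]
  · ext v; exact hb v

theorem det_unip {W : Submodule K V} {g : V ≃ₗ[K] V} (h : InUnip W g) :
    LinearMap.det (g : V →ₗ[K] V) = 1 := by
  rw [det_block W g LinearMap.id LinearMap.id (fun w => h.1 w w.2) (fun v => by
    rw [LinearMap.id_apply, mkQ_eq]
    exact h.2 v)]
  simp

theorem det_dim1 {U : Type*} [AddCommGroup U] [Module K U] (h : Module.finrank K U = 1)
    (f : U →ₗ[K] U) (x : U) : f x = LinearMap.det f • x := by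
  obtain ⟨c, rfl⟩ : ∃ c : K, f = c • LinearMap.id := by
    obtain ⟨v, hv, hv'⟩ := finrank_eq_one_iff'.1 h
    obtain ⟨c, hc⟩ := hv' (f v)
    refine ⟨c, LinearMap.ext fun x => ?_⟩
    obtain ⟨d, rfl⟩ := hv' x
    rw [map_smul, ← hc, LinearMap.smul_apply, LinearMap.id_apply, smul_comm]
  rw [LinearMap.det_smul, h]; simp

/-- In codimension one, a map of determinant one that fixes `W` pointwise acts trivially on `V ⧸ W`. -/
theorem unip_of_codim1 {W : Submodule K V} (hW : Module.finrank K (V ⧸ W) = 1) {g : V ≃ₗ[K] V}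
    (h : ∀ w ∈ W, g w = w) (hd : LinearMap.det (g : V →ₗ[K] V) = 1) : InUnip W g := by
  refine ⟨h, fun v => ?_⟩
  have he : W ≤ W.comap (g : V →ₗ[K] V) := fun w hw => by
    simp only [Submodule.mem_comap, LinearEquiv.coe_coe]
    rw [h w hw]; exact hw
  have := det_block W g LinearMap.id (W.mapQ W (g : V →ₗ[K] V) he) (fun w => h w w.2) (fun v => rfl)
  rw [hd, LinearMap.det_id, one_mul] at this
  have e := det_dim1 hW (W.mapQ W (g : V →ₗ[K] V) he) (W.mkQ v)
  rw [← this, one_smul, ← sub_eq_zero] at e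
  rw [← Submodule.Quotient.mk_eq_zero]; exact e

/-- In dimension one, a map of determinant one that acts trivially on `V ⧸ W` fixes `W` pointwise. -/
theorem unip_of_dim1 {W : Submodule K V} (hW : Module.finrank K W = 1) {g : V ≃ₗ[K] V}
    (h : ∀ v, g v - v ∈ W) (hd : LinearMap.det (g : V →ₗ[K] V) = 1) : InUnip W g := by
  have he : W ≤ W.comap (g : V →ₗ[K] V) := fun w hw => by
    simp only [Submodule.mem_comap, LinearEquiv.coe_coe]
    simpa using W.add_mem (h w) hw
  refine ⟨fun w hw => ?_, h⟩
  have := det_block W g ((g : V →ₗ[K] V).restrict he) LinearMap.id (fun w => rfl) (fun v => by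
    rw [LinearMap.id_apply, mkQ_eq]
    exact h v)
  rw [hd, LinearMap.det_id, mul_one] at this
  have e := det_dim1 hW ((g : V →ₗ[K] V).restrict he) ⟨w, hw⟩
  rw [← this, one_smul] at e
  exact congrArg Subtype.val e

/-- Automorphisms of `W` and `V ⧸ W` are induced by an automorphism of `V`. -/
theorem exists_block (W : Submodule K V) (a : W ≃ₗ[K] W) (b : (V ⧸ W) ≃ₗ[K] (V ⧸ W)) :
    ∃ g : V ≃ₗ[K] V, (∀ w : W, g w = a w) ∧ (∀ v, W.mkQ (g v) = b (W.mkQ v)) ∧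
      LinearMap.det (g : V →ₗ[K] V) = LinearMap.det (a : W →ₗ[K] W) *
        LinearMap.det (b : (V ⧸ W) →ₗ[K] (V ⧸ W)) := by
  obtain ⟨C, hC⟩ := Submodule.exists_isCompl W
  let q := Submodule.quotientEquivOfIsCompl W C hC
  let e : (W × (V ⧸ W)) ≃ₗ[K] V :=
    (LinearEquiv.prodCongr (LinearEquiv.refl K W) q).trans (Submodule.prodEquivOfIsCompl W C hC)
  have he : ∀ p, e p = (p.1 : V) + (q p.2 : V) := fun p => by
    simp [e]
  have hq : ∀ p, W.mkQ (e p) = p.2 := fun p => by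
    rw [he, map_add]
    have h1 : W.mkQ (p.1 : V) = 0 := by simp
    rw [h1, zero_add]
    apply q.injective
    simp [q]
  let g : V ≃ₗ[K] V := e.symm.trans ((LinearEquiv.prodCongr a b).trans e)
  have hg : ∀ p, g (e p) = e (a p.1, b p.2) := fun p => by simp [g]
  have h1 : ∀ w : W, g w = a w := fun w => by
    have : (w : V) = e (w, 0) := by rw [he]; simp
    rw [this, hg, he]; simp
  have h2 : ∀ v, W.mkQ (g v) = b (W.mkQ v) := fun v => by
    obtain ⟨p, rfl⟩ := e.surjective v
    rw [hg, hq, hq]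
  exact ⟨g, h1, h2, det_block W g a b h1 h2⟩

/-- The character through which a group acts on a common eigenvector. -/
noncomputable def chi {S : Type*} [Group S] (j : S →* (V ≃ₗ[K] V)) (v : V) (hv : v ≠ 0)
    (h : ∀ s, ∃ u : Kˣ, j s v = (u : K) • v) : S →* Kˣ where
  toFun s := (h s).choose
  map_one' := by
    have : v = ((h 1).choose : K) • v := by
      refine Eq.trans ?_ (h 1).choose_spec
      rw [map_one, LinearEquiv.coe_one, id]
    exact Units.ext (smul_left_injective K hv (by simpa using this.symm))
  map_mul' s t := by
    have e : ((h (s * t)).choose : K) • v = ((h s).choose : K) • ((h t).choose : K) • v := by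
      refine (h (s * t)).choose_spec.symm.trans ?_
      rw [smul_comm, ← (h s).choose_spec, ← map_smul, ← (h t).choose_spec, map_mul,
        LinearEquiv.mul_apply]
    rw [smul_smul] at e
    exact Units.ext (smul_left_injective K hv e)

theorem chi_spec {S : Type*} [Group S] (j : S →* (V ≃ₗ[K] V)) (v : V) (hv : v ≠ 0)
    (h : ∀ s, ∃ u : Kˣ, j s v = (u : K) • v) (s : S) : j s v = (chi j v hv h s : K) • v :=
  (h s).choose_spec

theorem chi_eq {S : Type*} [Group S] (j : S →* (V ≃ₗ[K] V)) (v : V) (hv : v ≠ 0)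
    (h : ∀ s, ∃ u : Kˣ, j s v = (u : K) • v) {s : S} {u : Kˣ} (e : j s v = (u : K) • v) :
    chi j v hv h s = u := by
  rw [chi_spec j v hv h] at e
  exact Units.ext (smul_left_injective K hv e)

/-- The action on a quotient by an invariant subspace. -/
def qhom {S : Type*} [Group S] (j : S →* (V ≃ₗ[K] V)) (W : Submodule K V)
    (h : ∀ s, W.map (j s : V →ₗ[K] V) = W) : S →* ((V ⧸ W) ≃ₗ[K] (V ⧸ W)) where
  toFun s := Submodule.Quotient.equiv W W (j s) (h s)
  map_one' := by
    ext x
    obtain ⟨v, rfl⟩ := W.mkQ_surjective x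
    simp [Submodule.Quotient.equiv]
  map_mul' s t := by
    ext x
    obtain ⟨v, rfl⟩ := W.mkQ_surjective x
    simp [Submodule.Quotient.equiv]

theorem qhom_mk {S : Type*} [Group S] (j : S →* (V ≃ₗ[K] V)) (W : Submodule K V)
    (h : ∀ s, W.map (j s : V →ₗ[K] V) = W) (s : S) (v : V) :
    qhom j W h s (W.mkQ v) = W.mkQ (j s v) := rfl

theorem qhom_eq_one {S : Type*} [Group S] (j : S →* (V ≃ₗ[K] V)) (W : Submodule K V)
    (h : ∀ s, W.map (j s : V →ₗ[K] V) = W) (s : S) :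
    qhom j W h s = 1 ↔ ∀ v, j s v - v ∈ W := by
  constructor
  · intro e v
    have := qhom_mk j W h s v
    rw [e, LinearEquiv.coe_one, id, eq_comm, mkQ_eq] at this
    exact this
  · intro e
    ext x
    obtain ⟨v, rfl⟩ := W.mkQ_surjective x
    rw [qhom_mk, LinearEquiv.coe_one, id, mkQ_eq]
    exact e v

/-- The diagonal map with respect to a basis. -/
noncomputable def diagE {ι : Type*} [Fintype ι] [DecidableEq ι] (b : Module.Basis ι K V) (u : ι → Kˣ) :
    V ≃ₗ[K] V := b.equiv (b.unitsSMul u) (Equiv.refl ι)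

section diag
variable {ι : Type*} [Fintype ι] [DecidableEq ι] (b : Module.Basis ι K V) (u : ι → Kˣ)

theorem diagE_apply (i : ι) : diagE b u (b i) = (u i : K) • b i := by
  rw [diagE, Module.Basis.equiv_apply, Module.Basis.unitsSMul_apply, Units.smul_def]; rfl

theorem diagE_det : LinearMap.det (diagE b u : V →ₗ[K] V) = ∏ i, (u i : K) := by
  rw [← LinearMap.det_toMatrix b]
  have : LinearMap.toMatrix b b (diagE b u : V →ₗ[K] V) = Matrix.diagonal fun i => (u i : K) := by
    ext i j
    rw [LinearMap.toMatrix_apply, LinearEquiv.coe_coe, diagE_apply, Matrix.diagonal_apply]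
    simp only [map_smul, Module.Basis.repr_self, Finsupp.smul_single, smul_eq_mul, mul_one,
      Finsupp.single_apply]
    by_cases h : i = j
    · simp [h]
    · simp [h, Ne.symm h]
  rw [this, Matrix.det_diagonal]

theorem equiv_ext_basis {g g' : V ≃ₗ[K] V} (h : ∀ i, g (b i) = g' (b i)) : g = g' :=
  LinearEquiv.toLinearMap_injective (b.ext h)

theorem diagE_pow (n : ℕ) : diagE b u ^ n = diagE b (u ^ n) := by
  apply equiv_ext_basis b
  intro i
  rw [diagE_apply]
  induction n with
  | zero => simp
  | succ n ih => rw [pow_succ', LinearEquiv.mul_apply, ih, map_smul, diagE_apply, smul_smul]; simp [pow_succ]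

theorem diagE_one : diagE b 1 = 1 := by
  apply equiv_ext_basis b
  intro i; rw [diagE_apply]; simp

theorem diagE_mul (w : ι → Kˣ) : diagE b u * diagE b w = diagE b (u * w) := by
  apply equiv_ext_basis b
  intro i
  rw [LinearEquiv.mul_apply, diagE_apply, map_smul, diagE_apply, diagE_apply, smul_smul]
  simp [mul_comm]

/-- A map with eigenvectors a basis is diagonal. -/
theorem eq_diagE {g : V ≃ₗ[K] V} (h : ∀ i, g (b i) = (u i : K) • b i) : g = diagE b u :=
  equiv_ext_basis b fun i => by rw [h, diagE_apply]
end diag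

end Lin
end FM

namespace FM

/-! ### Configurations in general position -/

section Lin
variable {K V : Type} [Field K] [AddCommGroup V] [Module K V]

variable (K V) in
/-- The special linear group, as a subgroup of the group of linear automorphisms. -/
noncomputable def SL : Subgroup (V ≃ₗ[K] V) := (LinearEquiv.det : (V ≃ₗ[K] V) →* Kˣ).ker

theorem mem_SL {g : V ≃ₗ[K] V} : g ∈ SL K V ↔ LinearMap.det (g : V →ₗ[K] V) = 1 := by
  rw [SL, MonoidHom.mem_ker, Units.ext_iff, LinearEquiv.coe_det, Units.val_one]

theorem indepOn_units {ι : Type*} (v w : ι → V) (u : ι → Kˣ) (h : ∀ i, w i = (u i : K) • v i) (s : Set ι) :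
    LinearIndepOn K w s ↔ LinearIndepOn K v s := by
  have : (fun i : s => w i) = (fun i : s => u i) • (fun i : s => v i) := by
    funext i; simp [h, Units.smul_def]
  unfold LinearIndepOn
  rw [this, LinearIndependent.units_smul_iff]

theorem indep_units {ι : Type*} (v w : ι → V) (u : ι → Kˣ) (h : ∀ i, w i = (u i : K) • v i) :
    LinearIndependent K w ↔ LinearIndependent K v := by
  rw [← linearIndepOn_univ_iff, ← linearIndepOn_univ_iff, indepOn_units v w u h]

section Cx
variable {G Y : Type*} [Group G] [MulAction G Y] 

/-- Tuples in which any at most `dim V` of the attached vectors are linearly independent. -/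
def linCx [FiniteDimensional K V] [Infinite K] [Nontrivial V] (vec : Y → V)
    (hg : ∀ g : G, ∃ φ : V ≃ₗ[K] V, ∀ y, ∃ u : Kˣ, vec (g • y) = (u : K) • φ (vec y))
    (hs : ∀ w : V, w ≠ 0 → ∃ y, ∃ u : Kˣ, vec y = (u : K) • w) : GenCx G Y where
  Gen {p} t := ∀ s : Finset (Fin p), s.card ≤ Module.finrank K V →
    LinearIndepOn K (fun i => vec (t i)) (s : Set (Fin p))
  face {p} t i h s hc := by
    have := h (s.map i.succAboveEmb) (by simpa using hc)
    rw [Finset.coe_map] at this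
    exact this.comp_of_image (f := i.succAbove) i.succAboveEmb.injective.injOn
  inv {p} g t h s hc := by
    obtain ⟨φ, hφ⟩ := hg g
    choose u hu using hφ
    rw [indepOn_units (fun i => φ (vec (t i))) _ (fun i => u (t i)) (fun i => hu _)]
    exact (h s hc).map' (φ : V →ₗ[K] V) φ.ker
  nil t s hc := by
    have : s = ∅ := Finset.eq_empty_of_isEmpty s
    subst this; simp
  cone {p} S hS := by
    classical
    let T : Finset (Subspace K V) := insert ⊥ ((S ×ˢ
      (Finset.univ : Finset (Finset (Fin p))).filter (fun s => s.card < Module.finrank K V)).image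
        (fun ts => Submodule.span K ((fun i => vec (ts.1 i)) '' (ts.2 : Set (Fin p)))))
    have hT : ⊤ ∉ T := by
      simp only [T, Finset.mem_insert, Finset.mem_image, Finset.mem_product, Finset.mem_filter,
        Finset.mem_univ, true_and, not_or, not_exists, not_and, and_imp, Prod.forall]
      refine ⟨top_ne_bot, fun t s ht hs e => ?_⟩
      have h1 := finrank_span_finset_le_card (R := K) (s.image (fun i => vec (t i)))
      rw [Finset.coe_image] at h1
      rw [Set.finrank, e, finrank_top] at h1
      exact absurd (h1.trans Finset.card_image_le) (not_le.2 hs)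
    have hne := Subspace.biUnion_ne_univ_of_top_notMem hT
    obtain ⟨w0, hw0⟩ := (Set.ne_univ_iff_exists_notMem _).1 hne
    simp only [Set.mem_iUnion, not_exists, SetLike.mem_coe] at hw0
    obtain ⟨y, u, hy⟩ := hs w0 (fun h => hw0 ⊥ (by simp [T]) (by simp [h]))
    refine ⟨y, fun t ht s hc => ?_⟩
    let s' : Finset (Fin p) := s.preimage Fin.succ (Fin.succ_injective p).injOn
    have hs' : Fin.succ '' (s' : Set (Fin p)) = (s : Set _) \ {0} := by
      ext i
      simp only [s', Finset.coe_preimage, Set.mem_image, Set.mem_preimage, SetLike.mem_coe,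
        Set.mem_sdiff, Set.mem_singleton_iff]
      constructor
      · rintro ⟨j, hj, rfl⟩; exact ⟨hj, Fin.succ_ne_zero j⟩
      · rintro ⟨h1, h2⟩
        obtain ⟨j, rfl⟩ := Fin.exists_succ_eq.2 h2
        exact ⟨j, h1, rfl⟩
    have hs2 : s'.map (Fin.succEmb p) = s.erase 0 := by
      apply Finset.coe_injective
      rw [Finset.coe_map, Finset.coe_erase, ← hs']; rfl
    have hcard : s'.card = (s.erase 0).card := by rw [← hs2, Finset.card_map]
    have h1 : LinearIndepOn K (fun i => vec ((Fin.cons y t : Fin (p+1) → Y) i)) ((s : Set (Fin (p+1))) \ {0}) := by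
      rw [← hs']
      refine LinearIndepOn.image_of_comp (s := (s' : Set (Fin p))) Fin.succ _ ?_
      exact hS t ht s' (hcard.le.trans ((Finset.card_erase_le).trans hc))
    by_cases h0 : (0 : Fin (p+1)) ∈ s
    · have e : (s : Set (Fin (p+1))) = insert 0 ((s : Set (Fin (p+1))) \ {0}) := by
        rw [Set.insert_sdiff_singleton, Set.insert_eq_of_mem]; exact h0
      rw [e, linearIndepOn_insert (by simp)]
      refine ⟨h1, fun hm => ?_⟩
      rw [← hs', Set.image_image] at hm
      simp only [Fin.cons_succ, Fin.cons_zero] at hm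
      refine hw0 _ (Finset.mem_insert_of_mem (Finset.mem_image.2 ⟨(t, s'), ?_, rfl⟩)) ?_
      · rw [Finset.mem_product, Finset.mem_filter]
        refine ⟨ht, Finset.mem_univ _, ?_⟩
        dsimp only
        rw [hcard]
        exact lt_of_lt_of_le (Finset.card_erase_lt_of_mem h0) hc
      · rw [hy] at hm
        have := Submodule.smul_mem _ ((u⁻¹ : Kˣ) : K) hm
        rwa [smul_smul, Units.inv_mul, one_smul] at this
    · have e : (s : Set (Fin (p+1))) = ((s : Set (Fin (p+1))) \ {0}) := by
        rw [Set.sdiff_singleton_eq_self]; exact h0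
      rw [e]; exact h1

variable [FiniteDimensional K V] [Infinite K] [Nontrivial V] (vec : Y → V)
    (hg : ∀ g : G, ∃ φ : V ≃ₗ[K] V, ∀ y, ∃ u : Kˣ, vec (g • y) = (u : K) • φ (vec y))
    (hs : ∀ w : V, w ≠ 0 → ∃ y, ∃ u : Kˣ, vec y = (u : K) • w)

theorem linCx_gen_iff {p : ℕ} (hp : p ≤ Module.finrank K V) (t : Fin p → Y) :
    (linCx vec hg hs).Gen t ↔ LinearIndependent K (fun i => vec (t i)) := by
  constructor
  · intro h
    have := h Finset.univ (by simpa using hp)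
    rwa [Finset.coe_univ, linearIndepOn_univ_iff] at this
  · intro h s _
    exact h.linearIndepOn _

theorem linCx_gen_of_faces {p : ℕ} (hp : Module.finrank K V ≤ p) (t : Fin (p+1) → Y)
    (h : ∀ i, (linCx vec hg hs).Gen (fun j => t (Fin.succAbove i j))) : (linCx vec hg hs).Gen t := by
  classical
  intro s hc
  obtain ⟨i, hi⟩ : ∃ i, i ∉ s := by
    by_contra! hall
    have : s = Finset.univ := Finset.eq_univ_iff_forall.2 hall
    rw [this, Finset.card_univ, Fintype.card_fin] at hc
    omega
  let s' : Finset (Fin p) := s.preimage i.succAbove (Fin.succAbove_right_injective).injOn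
  have hs' : i.succAbove '' (s' : Set (Fin p)) = (s : Set _) := by
    rw [Finset.coe_preimage, Set.image_preimage_eq_iff, Fin.range_succAbove]
    intro j hj e
    rw [Set.mem_singleton_iff] at e
    exact hi (e ▸ hj)
  have hcard : s'.card ≤ s.card := by
    rw [← Finset.card_map i.succAboveEmb]
    apply Finset.card_le_card
    intro j hj
    rw [← Finset.mem_coe, Finset.coe_map] at hj
    rw [← Finset.mem_coe, ← hs']; exact hj
  rw [← hs']
  exact LinearIndepOn.image_of_comp (s := (s' : Set (Fin p))) i.succAbove _ (h i s' (hcard.trans hc))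
end Cx

/-! ### Extension of linear maps -/

variable [FiniteDimensional K V]

theorem exists_basis_ext {p : ℕ} {v : Fin p → V} (hv : LinearIndependent K v) :
    ∃ b : Module.Basis (Fin p ⊕ Fin (Module.finrank K V - p)) K V, ∀ i, b (Sum.inl i) = v i := by
  classical
  let b0 := Module.Basis.sumExtend hv
  have hf : Finite (Fin p ⊕ Module.Basis.sumExtendIndex hv) := Module.Finite.finite_basis b0
  have hfr : Finite (Module.Basis.sumExtendIndex hv) :=
    Finite.of_injective (Sum.inr : _ → Fin p ⊕ Module.Basis.sumExtendIndex hv) Sum.inr_injective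
  have := Fintype.ofFinite (Module.Basis.sumExtendIndex hv)
  have hc : Module.finrank K V = p + Fintype.card (Module.Basis.sumExtendIndex hv) := by
    rw [Module.finrank_eq_card_basis b0]; simp
  let e := (Fintype.equivFinOfCardEq (α := Module.Basis.sumExtendIndex hv)
    (n := Module.finrank K V - p) (by omega))
  refine ⟨b0.reindex (Equiv.sumCongr (Equiv.refl _) e), fun i => ?_⟩
  simp only [b0, Module.Basis.coe_reindex, Function.comp_apply, Equiv.sumCongr_symm, Equiv.sumCongr_apply,
    Sum.map_inl, Equiv.refl_symm, Equiv.refl_apply, Module.Basis.sumExtend, Module.Basis.extend_apply_self]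
  rfl

theorem exists_GL {p : ℕ} {v w : Fin p → V} (hv : LinearIndependent K v) (hw : LinearIndependent K w) :
    ∃ g : V ≃ₗ[K] V, ∀ i, g (v i) = w i := by
  obtain ⟨b, hb⟩ := exists_basis_ext hv
  obtain ⟨c, hc⟩ := exists_basis_ext hw
  refine ⟨b.equiv c (Equiv.refl _), fun i => ?_⟩
  rw [← hb, Module.Basis.equiv_apply]; simp [hc]

theorem exists_SL {p : ℕ} (hp : p < Module.finrank K V) {v w : Fin p → V}
    (hv : LinearIndependent K v) (hw : LinearIndependent K w) :
    ∃ g ∈ SL K V, ∀ i, g (v i) = w i := by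
  classical
  obtain ⟨g, hg⟩ := exists_GL hv hw
  obtain ⟨b, hb⟩ := exists_basis_ext hv
  let d := LinearEquiv.det g
  let i0 : Fin (Module.finrank K V - p) := ⟨0, by omega⟩
  refine ⟨g * diagE b (Function.update 1 (Sum.inr i0) d⁻¹), ?_, fun i => ?_⟩
  · rw [mem_SL]
    have : ((g * diagE b (Function.update 1 (Sum.inr i0) d⁻¹) : V ≃ₗ[K] V) : V →ₗ[K] V) =
      (g : V →ₗ[K] V) * (diagE b (Function.update 1 (Sum.inr i0) d⁻¹) : V →ₗ[K] V) := rfl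
    rw [this, map_mul, diagE_det, ← Units.coe_prod, Finset.prod_update_of_mem (Finset.mem_univ _)]
    simp [d, ← LinearEquiv.coe_det]
  · rw [LinearEquiv.mul_apply, ← hb, diagE_apply, Function.update_of_ne (by simp)]
    simp [hb, hg]

end Lin
end FM

namespace FM

/-! ### Degree one for the special linear group -/

section Lin
variable {K V : Type} [Field K] [AddCommGroup V] [Module K V] [FiniteDimensional K V]

/-- The pointwise stabilizer of `W` in `SL(V)` is an extension of `SL(V/W)` by a unipotent group. -/
theorem fix_ext {k S : Type*} [Field k] (ℓ : ℕ) [CharP k ℓ] (hK : (ℓ : K) ≠ 0) [Group S]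
    (j : S →* (V ≃ₗ[K] V)) (hj : Function.Injective j) (W : Submodule K V)
    (h : ∀ g, (∃ s, j s = g) ↔ (LinearMap.det (g : V →ₗ[K] V) = 1 ∧ ∀ w ∈ W, g w = w)) :
    ∃ π : S →* SL K (V ⧸ W), Function.Surjective π ∧
      (H1 π.ker k ∧ H2 π.ker k ∧ H3 π.ker k) := by
  have hS : ∀ s, (LinearMap.det (j s : V →ₗ[K] V) = 1 ∧ ∀ w ∈ W, j s w = w) := fun s => (h _).1 ⟨s, rfl⟩
  have hm : ∀ s, W.map (j s : V →ₗ[K] V) = W := fun s => by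
    ext w
    constructor
    · rintro ⟨w', hw', rfl⟩
      rw [LinearEquiv.coe_coe, (hS s).2 _ hw']; exact hw'
    · intro hw; exact ⟨w, hw, (hS s).2 _ hw⟩
  have hd : ∀ s, qhom j W hm s ∈ SL K (V ⧸ W) := fun s => by
    have := det_block W (j s) LinearMap.id (qhom j W hm s : (V ⧸ W) →ₗ[K] (V ⧸ W))
      (fun w => (hS s).2 w w.2) (fun v => rfl)
    rw [(hS s).1, LinearMap.det_id, one_mul] at this
    rw [mem_SL, ← this]
  refine ⟨(qhom j W hm).codRestrict (SL K (V ⧸ W)) hd, ?_, ?_⟩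
  · rintro ⟨q, hq⟩
    obtain ⟨g, h1, h2, h3⟩ := exists_block W (LinearEquiv.refl K W) q
    rw [mem_SL.1 hq, LinearEquiv.refl_toLinearMap, LinearMap.det_id, one_mul] at h3
    obtain ⟨s, rfl⟩ := (h g).2 ⟨h3, fun w hw => h1 ⟨w, hw⟩⟩
    refine ⟨s, Subtype.ext ?_⟩
    ext x
    obtain ⟨v, rfl⟩ := W.mkQ_surjective x
    exact h2 v
  · refine unip_ker ℓ hK j hj _ W fun g => ⟨?_, fun hg => ?_⟩
    · rintro ⟨s, h1, rfl⟩
      exact ⟨(hS s).2, (qhom_eq_one j W hm s).1 (congrArg Subtype.val h1)⟩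
    · obtain ⟨s, rfl⟩ := (h g).2 ⟨det_unip hg, hg.1⟩
      exact ⟨s, Subtype.ext ((qhom_eq_one j W hm s).2 hg.2), rfl⟩

/-- The inclusion of a subgroup of `SL(V)` in the group of linear automorphisms. -/
noncomputable def incl (S : Subgroup (SL K V)) : S →* (V ≃ₗ[K] V) := (SL K V).subtype.comp S.subtype

theorem incl_inj (S : Subgroup (SL K V)) : Function.Injective (incl S) :=
  Subtype.val_injective.comp Subtype.val_injective

theorem incl_det (S : Subgroup (SL K V)) (s : S) : LinearMap.det (incl S s : V →ₗ[K] V) = 1 :=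
  mem_SL.1 s.1.2

theorem incl_exists (S : Subgroup (SL K V)) (g : V ≃ₗ[K] V) (P : (V ≃ₗ[K] V) → Prop)
    (hP : ∀ s : SL K V, s ∈ S ↔ P s) :
    (∃ s, incl S s = g) ↔ (LinearMap.det (g : V →ₗ[K] V) = 1 ∧ P g) := by
  constructor
  · rintro ⟨s, rfl⟩
    exact ⟨incl_det S s, (hP s.1).1 s.2⟩
  · rintro ⟨h1, h2⟩
    exact ⟨⟨⟨g, mem_SL.2 h1⟩, (hP ⟨g, mem_SL.2 h1⟩).2 h2⟩, rfl⟩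

theorem SL.smul_def (g : SL K V) (v : V) : g • v = (g : V ≃ₗ[K] V) v := rfl

theorem fix_span {g : V ≃ₗ[K] V} {s : Set V} : (∀ w ∈ Submodule.span K s, g w = w) ↔ ∀ w ∈ s, g w = w := by
  constructor
  · intro h w hw; exact h w (Submodule.subset_span hw)
  · intro h w hw
    induction hw using Submodule.span_induction with
    | mem x hx => exact h x hx
    | zero => simp
    | add x y _ _ hx hy => rw [map_add, hx, hy]
    | smul c x _ hx => rw [map_smul, hx]

/-- The form of `fix_ext` for the common stabilizer of a set of vectors. -/
theorem stab_ext {k : Type*} [Field k] (ℓ : ℕ) [CharP k ℓ] (hK : (ℓ : K) ≠ 0)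
    (S : Subgroup (SL K V)) (s : Set V) (hS : ∀ g : SL K V, g ∈ S ↔ ∀ w ∈ s, (g : V ≃ₗ[K] V) w = w) :
    ∃ π : S →* SL K (V ⧸ Submodule.span K s), Function.Surjective π ∧
      (H1 π.ker k ∧ H2 π.ker k ∧ H3 π.ker k) :=
  fix_ext ℓ hK (incl S) (incl_inj S) (Submodule.span K s) fun g => by
    rw [incl_exists S g (fun g => ∀ w ∈ s, g w = w) hS, fix_span]

theorem SL_dim_le_one (h : Module.finrank K V ≤ 1) (g : SL K V) : g = 1 := by
  apply Subtype.ext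
  ext v
  rcases Nat.lt_or_ge (Module.finrank K V) 1 with h0 | h1
  · have : Subsingleton V := (Module.finrank_zero_iff (R := K)).1 (by omega)
    exact Subsingleton.elim _ _
  · have := det_dim1 (le_antisymm h h1) ((g : V ≃ₗ[K] V) : V →ₗ[K] V) v
    rw [mem_SL.1 g.2, one_smul] at this
    exact this

theorem exists_transvection {x y : V} (h : LinearIndependent K ![x, y]) :
    ∃ g : SL K V, (g : V ≃ₗ[K] V) x = y ∧ ∃ f : V →ₗ[K] K, ∀ v, f v = 0 → (g : V ≃ₗ[K] V) v = v := by
  have h2 : LinearIndependent K ![x, y - x] := by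
    rw [LinearIndependent.pair_iff] at h ⊢
    intro s t e
    have := h (s - t) t (by rw [← e]; module)
    exact ⟨by rw [← sub_zero s, ← this.2, this.1, this.2], this.2⟩
  obtain ⟨b, hb⟩ := exists_basis_ext h2
  have h0 := hb 0
  have h1 := hb 1
  simp only [Matrix.cons_val_zero, Matrix.cons_val_one] at h0 h1
  have f0 : b.coord (Sum.inl 0) x = 1 := by rw [← h0]; simp
  have f1 : b.coord (Sum.inl 0) (y - x) = 0 := by rw [← h1]; simp
  refine ⟨⟨LinearEquiv.transvection f1, ?_⟩, ?_, b.coord (Sum.inl 0), fun v hv => ?_⟩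
  · rw [mem_SL]
    have := LinearMap.transvection.det (b.coord (Sum.inl 0)) (y - x)
    rw [f1, add_zero] at this
    rw [← this]; rfl
  · change LinearMap.transvection (b.coord (Sum.inl 0)) (y - x) x = y
    rw [LinearMap.transvection.apply, f0]; simp
  · change LinearMap.transvection (b.coord (Sum.inl 0)) (y - x) v = v
    rw [LinearMap.transvection.apply, hv]; simp

/-- Degree one for `SL(V)`, by induction on the dimension: a character is trivial on stabilizers of vectors, which
are extensions of smaller special linear groups by unipotent ones, and transvections show that these stabilizers
generate `SL(V)`. -/
theorem H1_SL {k : Type*} [Field k] (ℓ : ℕ) [CharP k ℓ] (hK : (ℓ : K) ≠ 0) :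
    ∀ (n : ℕ) (V : Type) [AddCommGroup V] [Module K V] [FiniteDimensional K V],
      Module.finrank K V = n → H1 (SL K V) k := by
  intro n
  induction n with
  | zero =>
    intro V _ _ _ hV
    refine H1_of_hom fun φ hφ x => ?_
    rw [SL_dim_le_one (by omega) x, hφ.one]
  | succ n ih =>
    intro V _ _ _ hV
    refine H1_of_hom fun φ hφ => ?_
    rcases Nat.eq_zero_or_pos n with hn | hn
    · intro x; rw [SL_dim_le_one (by omega) x, hφ.one]
    have hstab : ∀ v : V, v ≠ 0 → ∀ g : SL K V, (g : V ≃ₗ[K] V) v = v → φ g = 0 := by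
      intro v hv g hg
      obtain ⟨π, h1, h2⟩ := stab_ext (k := k) ℓ hK (MulAction.stabilizer (SL K V) v) {v} (fun g => by
        rw [MulAction.mem_stabilizer_iff, SL.smul_def]; simp)
      have h3 := ext1 h1 h2.1 (ih _ (by
        have := Submodule.finrank_quotient_add_finrank (Submodule.span K {v})
        rw [finrank_span_singleton hv] at this; omega))
      exact h3.hom (φ := fun x => φ x) (fun a b => hφ a b) ⟨g, MulAction.mem_stabilizer_iff.2 hg⟩
    have htr : ∀ x y : V, LinearIndependent K ![x, y] → ∃ g : SL K V, (g : V ≃ₗ[K] V) x = y ∧ φ g = 0 := by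
      intro x y hxy
      obtain ⟨g, hg, f, hf⟩ := exists_transvection hxy
      obtain ⟨v, hv, hv0⟩ : ∃ v ∈ LinearMap.ker f, v ≠ 0 := by
        apply Submodule.exists_mem_ne_zero_of_ne_bot
        intro hb
        have := LinearMap.finrank_le_finrank_of_injective (LinearMap.ker_eq_bot.1 hb)
        rw [Module.finrank_self] at this; omega
      exact ⟨g, hg, hstab v hv0 g (hf v hv)⟩
    have hind : ∀ (v : V), v ≠ 0 → ∀ g : SL K V, LinearIndependent K ![v, (g : V ≃ₗ[K] V) v] → φ g = 0 := by
      intro v hv g hi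
      obtain ⟨h, h1, h2⟩ := htr _ _ hi
      have e : φ (h⁻¹ * g) = 0 := hstab v hv _ (by
        rw [Subgroup.coe_mul, LinearEquiv.mul_apply, ← h1, Subgroup.coe_inv]
        exact (h : V ≃ₗ[K] V).symm_apply_apply v)
      rw [hφ, hφ.inv, h2] at e
      simpa using e
    intro g
    have : Nontrivial V := Module.finrank_pos_iff.1 (by omega : 0 < Module.finrank K V)
    obtain ⟨v, hv⟩ := exists_ne (0 : V)
    by_cases hi : LinearIndependent K ![v, (g : V ≃ₗ[K] V) v]
    · exact hind v hv g hi
    · obtain ⟨c, hc⟩ : ∃ c : K, c • v = (g : V ≃ₗ[K] V) v := by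
        by_contra! hne
        exact hi ((LinearIndependent.pair_iff' hv).2 hne)
      obtain ⟨w, hw⟩ := exists_linearIndependent_pair_of_one_lt_finrank (R := K) (by omega) hv
      have hc0 : c ≠ 0 := by
        rintro rfl
        rw [zero_smul, eq_comm, LinearEquiv.map_eq_zero_iff] at hc
        exact hv hc
      obtain ⟨h, h1, h2⟩ := htr _ _ hw
      have e : φ (h * g) = 0 := hind v hv _ (by
        rw [Subgroup.coe_mul, LinearEquiv.mul_apply, ← hc, map_smul, h1]
        rw [LinearIndependent.pair_iff] at hw ⊢
        intro s t e
        have := hw s (t * c) (by rw [← e]; module)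
        exact ⟨this.1, (mul_eq_zero.1 this.2).resolve_right hc0⟩)
      rw [hφ, h2] at e
      simpa using e
end Lin
end FM

namespace FM

/-! ### Configurations of vectors -/

theorem GenCx.exists_X {G Y : Type*} [Group G] [MulAction G Y] (C : GenCx G Y) (p : ℕ) : Nonempty (C.X p) := by
  have : ∀ p : ℕ, ∃ t : Fin p → Y, C.Gen t := by
    intro p
    induction p with
    | zero => exact ⟨Fin.elim0, C.nil _⟩
    | succ p ih =>
      obtain ⟨t, ht⟩ := ih
      obtain ⟨w, hw⟩ := C.cone1 t ht
      exact ⟨_, hw⟩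
  obtain ⟨t, ht⟩ := this (p+1)
  exact ⟨⟨t, ht⟩⟩

section Lin
variable {K : Type} [Field K] [Infinite K] (V : Type) [AddCommGroup V] [Module K V] [FiniteDimensional K V] [Nontrivial V]

variable (K) in
/-- The complex of generic tuples of vectors. -/
noncomputable def vC : GenCx (SL K V) V := linCx (K := K) (V := V) id
  (fun g => ⟨(g : V ≃ₗ[K] V), fun y => ⟨1, by simp [SL.smul_def]⟩⟩)
  (fun w _ => ⟨w, 1, by simp⟩)

variable {V}

theorem vC_gen {p : ℕ} (hp : p ≤ Module.finrank K V) (t : Fin p → V) :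
    (vC K V).Gen t ↔ LinearIndependent K t := linCx_gen_iff _ _ _ hp t

theorem vC_indep {p : ℕ} (hp : p + 1 ≤ Module.finrank K V) (t : (vC K V).X p) : LinearIndependent K t.1 :=
  (vC_gen hp t.1).1 t.2

/-- The stabilizer of `p + 1` independent vectors is an extension of the special linear group of the quotient by
their span by a unipotent group. -/
theorem vC_stab {k : Type*} [Field k] (ℓ : ℕ) [CharP k ℓ] (hK : (ℓ : K) ≠ 0) {p : ℕ}
    (hp : p + 1 ≤ Module.finrank K V) (t : (vC K V).X p) :
    ∃ (W : Submodule K V) (π : MulAction.stabilizer (SL K V) t →* SL K (V ⧸ W)),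
      Module.finrank K (V ⧸ W) = Module.finrank K V - (p + 1) ∧ Function.Surjective π ∧
      (H1 π.ker k ∧ H2 π.ker k ∧ H3 π.ker k) := by
  obtain ⟨π, h⟩ := stab_ext (k := k) ℓ hK (MulAction.stabilizer (SL K V) t) (Set.range t.1) (fun g => by
    rw [MulAction.mem_stabilizer_iff, GenCx.X.ext_iff, funext_iff]
    simp only [Set.forall_mem_range]; rfl)
  refine ⟨_, π, ?_, h⟩
  have := Submodule.finrank_quotient_add_finrank (Submodule.span K (Set.range t.1))
  rw [finrank_span_eq_card (vC_indep hp t), Fintype.card_fin] at this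
  omega

/-- An invariant function killed by `D` is constant, as long as the tuples are linearly independent. Below the dimension
`SL(V)` is transitive; for bases the function depends only on the determinant, and the relation `D F = 0` on a basis
extended by one vector, chosen so that only one of the determinants of its faces varies, removes this dependence. -/
theorem vC_const {k : Type*} [Field k] {p : ℕ} (hp : p + 1 ≤ Module.finrank K V)
    (F : (vC K V).X p → k) (hF : ∀ (g : SL K V) x, F (g • x) = F x) (hD : (vC K V).D F = 0)
    (t t' : (vC K V).X p) : F t = F t' := by
  rcases hp.lt_or_eq with hp' | hp'
  · obtain ⟨g, hg, hg'⟩ := exists_SL hp' (vC_indep hp t) (vC_indep hp t')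
    rw [← hF ⟨g, hg⟩ t]
    exact congrArg F (GenCx.X.ext (funext hg'))
  let b : Module.Basis (Fin (p+1)) K V :=
    basisOfLinearIndependentOfCardEqFinrank (vC_indep hp t) (by simp [hp'])
  have hb : ∀ i, b i = t.1 i := fun i => by simp [b]
  have hb' : ⇑b = t.1 := funext hb
  have hne : ∀ x : (vC K V).X p, b.det x.1 ≠ 0 := fun x => by
    let c : Module.Basis (Fin (p+1)) K V :=
      basisOfLinearIndependentOfCardEqFinrank (vC_indep hp x) (by simp [hp'])
    have := b.isUnit_det c
    simpa [c] using this.ne_zero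
  have hdet : ∀ x y : (vC K V).X p, b.det x.1 = b.det y.1 → F x = F y := by
    intro x y h
    obtain ⟨g, hg⟩ := exists_GL (vC_indep hp x) (vC_indep hp y)
    have h1 := b.det_comp (g : V →ₗ[K] V) x.1
    have h2 : (⇑(g : V →ₗ[K] V) ∘ x.1) = y.1 := funext hg
    rw [h2, ← h] at h1
    have h3 : LinearMap.det (g : V →ₗ[K] V) = 1 := mul_right_cancel₀ (hne x) (by rw [← h1, one_mul])
    rw [← hF ⟨g, mem_SL.2 h3⟩ x]
    exact congrArg F (GenCx.X.ext (funext hg))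
  -- the generic vector with first coordinate `a`
  let w : K → V := fun a => a • t.1 0 + ∑ j : Fin p, t.1 j.succ
  have hw : ∀ a : K, a ≠ 0 → ∀ i, b.coord i (w a) ≠ 0 := by
    intro a ha i
    simp only [w, map_add, map_smul, map_sum, ← hb, Module.Basis.coord_apply, Module.Basis.repr_self]
    rcases Fin.eq_zero_or_eq_succ i with rfl | ⟨j, rfl⟩
    · rw [Finset.sum_eq_zero (fun j _ => by simp)]
      simpa using ha
    · rw [Finset.sum_eq_single j (fun j' _ h => by simp [h]) (by simp)]
      simp
  have hgen : ∀ a : K, a ≠ 0 → (vC K V).Gen (Fin.cons (w a) t.1 : Fin (p+2) → V) := by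
    intro a ha
    apply linCx_gen_of_faces _ _ _ hp'.ge
    intro i
    rcases Fin.eq_zero_or_eq_succ i with rfl | ⟨j, rfl⟩
    · exact t.2
    · refine (vC_gen hp _).2 ?_
      have e : (fun m => (Fin.cons (w a) t.1 : Fin (p+2) → V) (j.succ.succAbove m)) =
          Fin.cons (w a) (t.1 ∘ j.succAbove) := by
        funext m
        refine Fin.cases ?_ (fun m => ?_) m <;> simp
      rw [e, linearIndependent_finCons]
      refine ⟨(vC_indep hp t).comp _ Fin.succAbove_right_injective, fun hm => hw a ha j ?_⟩
      have : Submodule.span K (Set.range (t.1 ∘ j.succAbove)) ≤ LinearMap.ker (b.coord j) := by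
        rw [Submodule.span_le]
        rintro _ ⟨m, rfl⟩
        simp [← hb]
      exact this hm
  let u : ∀ a : K, a ≠ 0 → (vC K V).X (p+1) := fun a ha => ⟨Fin.cons (w a) t.1, hgen a ha⟩
  have hu : ∀ (a : K) (ha : a ≠ 0) (j : Fin (p+1)), ((vC K V).fc j.succ (u a ha)).1 = Fin.cons (w a) (t.1 ∘ j.succAbove) := by
    intro a ha j
    funext m
    refine Fin.cases ?_ (fun m => ?_) m <;> simp [u, GenCx.fc]
  have hcons : ∀ (a : K) (s : Fin p → V), b.det (Fin.cons (w a) s : Fin (p+1) → V) =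
      a * b.det (Fin.cons (t.1 0) s : Fin (p+1) → V) +
        ∑ j : Fin p, b.det (Fin.cons (t.1 j.succ) s : Fin (p+1) → V) := by
    intro a s
    let L : V →ₗ[K] K := 
      { toFun := fun x => b.det (Fin.cons x s : Fin (p+1) → V)
        map_add' := fun x y => b.det.toMultilinearMap.cons_add s x y
        map_smul' := fun c x => b.det.toMultilinearMap.cons_smul s c x }
    change L (w a) = a * L (t.1 0) + ∑ j : Fin p, L (t.1 j.succ)
    simp [w]
  have hsucc : ∀ (a : K) (ha : a ≠ 0) (a' : K) (ha' : a' ≠ 0) (j : Fin (p+1)), j ≠ 0 →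
      F ((vC K V).fc j.succ (u a ha)) = F ((vC K V).fc j.succ (u a' ha')) := by
    intro a ha a' ha' j hj
    apply hdet
    rw [hu a ha, hu a' ha', hcons, hcons]
    have : b.det (Fin.cons (t.1 0) (t.1 ∘ j.succAbove) : Fin (p+1) → V) = 0 := by
      obtain ⟨m, hm⟩ := Fin.exists_succAbove_eq hj.symm
      refine b.det.map_eq_zero_of_eq _ (i := 0) (j := m.succ) ?_ (Fin.succ_ne_zero m).symm
      simp [hm]
    rw [this]; simp
  have hone : ∀ (a : K) (ha : a ≠ 0), b.det ((vC K V).fc 1 (u a ha)).1 = a := by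
    intro a ha
    have := hu a ha 0
    rw [Fin.succ_zero_eq_one] at this
    rw [this, hcons]
    have h1 : (Fin.cons (t.1 0) (t.1 ∘ Fin.succAbove 0) : Fin (p+1) → V) = b := by
      rw [hb']
      funext m
      refine Fin.cases ?_ (fun m => ?_) m <;> simp
    rw [h1, b.det_self, Finset.sum_eq_zero, mul_one, add_zero]
    intro j _
    refine b.det.map_eq_zero_of_eq _ (i := 0) (j := j.succ) ?_ (Fin.succ_ne_zero j).symm
    simp
  have key : ∀ (a : K) (ha : a ≠ 0) (a' : K) (ha' : a' ≠ 0), F ((vC K V).fc 1 (u a ha)) = F ((vC K V).fc 1 (u a' ha')) := by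
    intro a ha a' ha'
    have h1 := congrFun hD (u a ha)
    have h2 := congrFun hD (u a' ha')
    rw [GenCx.D_apply, Fin.sum_univ_succ, Fin.sum_univ_succ, Pi.zero_apply] at h1 h2
    have h0 : (vC K V).fc 0 (u a ha) = (vC K V).fc 0 (u a' ha') := GenCx.X.ext (by
      funext m; simp [GenCx.fc, u])
    have h3 : ∀ i : Fin p, F ((vC K V).fc i.succ.succ (u a ha)) = F ((vC K V).fc i.succ.succ (u a' ha')) :=
      fun i => hsucc a ha a' ha' i.succ (Fin.succ_ne_zero i)
    simp only [h3, h0] at h1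
    simp only [Fin.succ_zero_eq_one, Fin.val_one, pow_one] at h1 h2
    linear_combination h2 - h1
  have e1 : F ((vC K V).fc 1 (u 1 one_ne_zero)) = F t := hdet _ _ (by rw [hone 1 one_ne_zero, ← hb', b.det_self])
  have e2 : F ((vC K V).fc 1 (u _ (hne t'))) = F t' := hdet _ _ (hone _ (hne t'))
  exact e1.symm.trans ((key _ one_ne_zero _ (hne t')).trans e2)

/-- Induction on the dimension in degree two, from generic tuples of vectors: stabilizers of vectors and of pairs reduce
to smaller special linear groups, and invariant cocycles on triples are constant. -/
theorem H2_step {k : Type*} [Field k] (ℓ : ℕ) [CharP k ℓ] (hK : (ℓ : K) ≠ 0)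
    (hn : 3 ≤ Module.finrank K V)
    (ih : ∀ (U : Type) [AddCommGroup U] [Module K U] [FiniteDimensional K U],
      Module.finrank K U = Module.finrank K V - 1 → H2 (SL K U) k) : H2 (SL K V) k := by
  intro F hF
  refine (vC K V).machine2 F hF ?_ ?_ ?_
  · refine shapiro2' (fun x => ?_) _ hF.eps
    obtain ⟨W, π, h1, h2, h3⟩ := vC_stab (k := k) ℓ hK (by omega) x
    exact ext2_H2 h2 h3.1 h3.2.1 (ih _ h1)
  · refine shapiro1' (fun x => ?_)
    obtain ⟨W, π, h1, h2, h3⟩ := vC_stab (k := k) ℓ hK (by omega) x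
    exact ext1 h2 h3.1 (H1_SL ℓ hK _ _ h1)
  · intro f hf hD
    obtain ⟨t0⟩ := (vC K V).exists_X 2
    refine ⟨fun _ => f t0, fun _ _ => rfl, ?_⟩
    funext t
    rw [GenCx.D1, vC_const (by omega) f hf hD t t0]; ring

/-- Induction on the dimension in degree three. Invariant cocycles on quadruples are constant, and such a constant must be
zero, since quintuples have an odd number of faces. -/
theorem H3_step {k : Type*} [Field k] (ℓ : ℕ) [CharP k ℓ] (hK : (ℓ : K) ≠ 0)
    (hn : 4 ≤ Module.finrank K V)
    (ih : ∀ (U : Type) [AddCommGroup U] [Module K U] [FiniteDimensional K U],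
      Module.finrank K U = Module.finrank K V - 1 → H3 (SL K U) k)
    (ih2 : ∀ (U : Type) [AddCommGroup U] [Module K U] [FiniteDimensional K U],
      Module.finrank K U = Module.finrank K V - 2 → H2 (SL K U) k) : H3 (SL K V) k := by
  intro F hF
  refine (vC K V).machine3 F hF ?_ ?_ ?_ ?_
  · refine shapiro3' (fun x => ?_) _ hF.eps
    obtain ⟨W, π, h1, h2, h3⟩ := vC_stab (k := k) ℓ hK (by omega) x
    exact ext3 h2 h3.1 h3.2.1 h3.2.2 (ih _ h1)
  · intro c hc hD
    refine ⟨0, ⟨fun _ _ _ _ _ => rfl, by funext; simp [d2]⟩, ?_⟩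
    have : (fun g0 g1 g2 => c g0 g1 g2 - (vC K V).D ((0 : SL K V → SL K V → SL K V → (vC K V).X 0 → k) g0 g1 g2)) = c := by
      funext g0 g1 g2 
      simp
    rw [this]
    refine shapiro2' (fun x => ?_) c hc
    obtain ⟨W, π, h1, h2, h3⟩ := vC_stab (k := k) ℓ hK (by omega) x
    exact ext2_H2 h2 h3.1 h3.2.1 (ih2 _ h1)
  · refine shapiro1' (fun x => ?_)
    obtain ⟨W, π, h1, h2, h3⟩ := vC_stab (k := k) ℓ hK (by omega) x
    exact ext1 h2 h3.1 (H1_SL ℓ hK _ _ h1)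
  · intro f hf hD
    have hc := vC_const (by omega) f hf hD
    obtain ⟨t0⟩ := (vC K V).exists_X 3
    obtain ⟨t1⟩ := (vC K V).exists_X 4
    have h0 : f t0 = 0 := by
      have := congrFun hD t1
      rw [GenCx.D3, hc (GenCx.fc _ 0 t1) t0, hc (GenCx.fc _ 1 t1) t0, hc (GenCx.fc _ 2 t1) t0, hc (GenCx.fc _ 3 t1) t0,
        hc (GenCx.fc _ 4 t1) t0, Pi.zero_apply] at this
      linear_combination this
    refine ⟨0, fun _ _ => rfl, ?_⟩
    funext t
    rw [map_zero, hc t t0, h0]; rfl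
end Lin
end FM

namespace FM

/-! ### Configurations of points of projective space -/

open scoped LinearAlgebra.Projectivization
open Projectivization (mk rep_nonzero mk_rep)

section Proj
variable {K : Type} [Field K] {V : Type} [AddCommGroup V] [Module K V]

section
variable (G : Subgroup (V ≃ₗ[K] V))

theorem P_smul (g : G) (v : V) (hv : v ≠ 0) :
    g • mk K v hv = mk K ((g : V ≃ₗ[K] V) v) ((LinearEquiv.map_ne_zero_iff _).2 hv) := rfl

theorem rep_mk (v : V) (hv : v ≠ 0) : ∃ u : Kˣ, (mk K v hv).rep = (u : K) • v := by
  obtain ⟨u, hu⟩ := Projectivization.exists_smul_eq_mk_rep K v hv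
  exact ⟨u, hu.symm⟩

theorem mk_eq_iff {v w : V} {hv : v ≠ 0} {hw : w ≠ 0} : mk K v hv = mk K w hw ↔ ∃ u : Kˣ, v = (u : K) • w := by
  rw [Projectivization.mk_eq_mk_iff]
  exact ⟨fun ⟨u, h⟩ => ⟨u, h.symm⟩, fun ⟨u, h⟩ => ⟨u, h.symm⟩⟩

theorem P_fix_mk {g : G} {v : V} {hv : v ≠ 0} : g • mk K v hv = mk K v hv ↔ 
    ∃ u : Kˣ, (g : V ≃ₗ[K] V) v = (u : K) • v := by
  rw [P_smul, mk_eq_iff]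

theorem P_fix {g : G} {x : ℙ K V} : g • x = x ↔ ∃ u : Kˣ, (g : V ≃ₗ[K] V) x.rep = (u : K) • x.rep := by
  conv_lhs => rw [← mk_rep x]
  exact P_fix_mk G

theorem P_smul_rep (g : G) (x : ℙ K V) : ∃ u : Kˣ, (g • x).rep = (u : K) • (g : V ≃ₗ[K] V) x.rep := by
  conv => enter [1, u, 1]; rw [← mk_rep x]
  exact rep_mk _ _

variable [FiniteDimensional K V] [Infinite K] [Nontrivial V]

/-- Tuples of points of projective space in general position. -/
noncomputable def pC : GenCx G (ℙ K V) := linCx (K := K) (V := V) Projectivization.rep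
  (fun g => ⟨(g : V ≃ₗ[K] V), fun y => P_smul_rep G g y⟩)
  (fun w hw => ⟨mk K w hw, rep_mk w hw⟩)

variable {G}

theorem pC_gen {p : ℕ} (hp : p ≤ Module.finrank K V) (t : Fin p → ℙ K V) :
    (pC G).Gen t ↔ LinearIndependent K (fun i => (t i).rep) := linCx_gen_iff _ _ _ hp t

theorem pC_mk_indep {p : ℕ} (v : Fin p → V) (h0 : ∀ i, v i ≠ 0) :
    LinearIndependent K (fun i => (mk K (v i) (h0 i)).rep) ↔ LinearIndependent K v := by
  choose u hu using fun i => rep_mk (K := K) (v i) (h0 i)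
  exact indep_units _ _ u hu

theorem pC_gen_mk {p : ℕ} (hp : p ≤ Module.finrank K V) (v : Fin p → V) (h0 : ∀ i, v i ≠ 0) :
    (pC G).Gen (fun i => mk K (v i) (h0 i)) ↔ LinearIndependent K v := by
  rw [pC_gen hp, pC_mk_indep]

theorem pC_gen2 (h2 : Module.finrank K V = 2) {p : ℕ} (t : Fin p → ℙ K V) :
    (pC G).Gen t ↔ Function.Injective t := by
  constructor
  · intro h i j e
    by_contra hne
    have := h {i, j} (by rw [h2]; exact Finset.card_le_two)
    rw [Finset.coe_pair] at this
    have h3 := (LinearIndepOn.pair_iff _ hne).1 this 1 (-1) (by rw [e]; simp)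
    exact one_ne_zero h3.1
  · intro h s hs
    rw [h2] at hs
    interval_cases hc : s.card
    · rw [Finset.card_eq_zero] at hc; subst hc; simp
    · obtain ⟨i, rfl⟩ := Finset.card_eq_one.1 hc
      rw [Finset.coe_singleton]
      exact LinearIndepOn.singleton (rep_nonzero _)
    · obtain ⟨i, j, hij, rfl⟩ := Finset.card_eq_two.1 hc
      rw [Finset.coe_pair, LinearIndepOn.pair_iff _ hij]
      have := Projectivization.linearIndependent_pair_iff_ne.2 (h.ne hij)
      exact LinearIndependent.pair_iff.1 this

end

/-! ### Split tori -/

/-- The diagonalizable elements of `G` have `ℓ`-th roots in `G` in every split torus. -/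
def RootClosed (ℓ : ℕ) (G : Subgroup (V ≃ₗ[K] V)) : Prop :=
  ∀ (n : ℕ) (b : Module.Basis (Fin n) K V) (u : Fin n → Kˣ), diagE b u ∈ G →
    ∃ v : Fin n → Kˣ, v ^ ℓ = u ∧ diagE b v ∈ G

theorem exists_root [IsAlgClosed K] {ℓ : ℕ} (hℓ : ℓ ≠ 0) (u : Kˣ) : ∃ v : Kˣ, v ^ ℓ = u := by
  obtain ⟨z, hz⟩ := IsAlgClosed.exists_pow_nat_eq (u : K) (Nat.pos_of_ne_zero hℓ)
  have : z ≠ 0 := by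
    rintro rfl
    rw [zero_pow hℓ] at hz
    exact u.ne_zero hz.symm
  exact ⟨Units.mk0 z this, Units.ext (by simpa using hz)⟩

theorem rootClosed_top [IsAlgClosed K] {ℓ : ℕ} (hℓ : ℓ ≠ 0) : RootClosed ℓ (⊤ : Subgroup (V ≃ₗ[K] V)) := by
  intro n b u _
  choose v hv using fun i => exists_root hℓ (u i)
  exact ⟨v, funext hv, Subgroup.mem_top _⟩

theorem diagE_mem_SL [FiniteDimensional K V] {ι : Type*} [Fintype ι] [DecidableEq ι] (b : Module.Basis ι K V) (u : ι → Kˣ) :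
    diagE b u ∈ SL K V ↔ ∏ i, u i = 1 := by
  rw [mem_SL, diagE_det, ← Units.coe_prod, ← Units.val_one, Units.val_inj]

theorem rootClosed_SL [FiniteDimensional K V] [IsAlgClosed K] {ℓ : ℕ} (hℓ : ℓ ≠ 0) : RootClosed ℓ (SL K V) := by
  intro n b u hu
  rw [diagE_mem_SL] at hu
  choose v hv using fun i => exists_root hℓ (u i)
  have hω : (∏ i, v i) ^ ℓ = 1 := by
    rw [← Finset.prod_pow, ← hu]
    exact Finset.prod_congr rfl fun i _ => hv i
  rcases n with _ | n
  · exact ⟨v, funext hv, by rw [diagE_mem_SL]; simp⟩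
  · refine ⟨v * Pi.mulSingle 0 (∏ i, v i)⁻¹, ?_, ?_⟩
    · funext i
      rw [Pi.pow_apply, Pi.mul_apply, mul_pow, hv]
      by_cases h : i = 0
      · subst h; rw [Pi.mulSingle_eq_same, inv_pow, hω]; simp
      · rw [Pi.mulSingle_eq_of_ne h]; simp
    · rw [diagE_mem_SL]
      simp only [Pi.mul_apply, Finset.prod_mul_distrib]
      simp

section torus
variable [FiniteDimensional K V] {G : Subgroup (V ≃ₗ[K] V)} {S : Subgroup G} {n : ℕ} {b : Module.Basis (Fin n) K V}

/-- `S` consists of the elements of `G` that are diagonal in the basis `b`. -/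
def IsTorus (S : Subgroup G) (b : Module.Basis (Fin n) K V) : Prop :=
  ∀ g : G, g ∈ S ↔ ∀ i, ∃ u : Kˣ, (g : V ≃ₗ[K] V) (b i) = (u : K) • b i

theorem IsTorus.diag (h : IsTorus S b) (s : S) : ∃ u, ((s : G) : V ≃ₗ[K] V) = diagE b u := by
  choose u hu using (h s).1 s.2
  exact ⟨u, eq_diagE b u hu⟩

theorem IsTorus.mem (h : IsTorus S b) {u : Fin n → Kˣ} (hu : diagE b u ∈ G) : (⟨diagE b u, hu⟩ : G) ∈ S :=
  (h _).2 fun i => ⟨u i, diagE_apply b u i⟩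

theorem IsTorus.comm (h : IsTorus S b) (s t : S) : s * t = t * s := by
  obtain ⟨u, hu⟩ := h.diag s
  obtain ⟨v, hv⟩ := h.diag t
  apply Subtype.ext; apply Subtype.ext
  simp only [Subgroup.coe_mul, hu, hv, diagE_mul, mul_comm]

theorem IsTorus.div {ℓ : ℕ} (hG : RootClosed ℓ G) (h : IsTorus S b) (s : S) : ∃ t : S, t ^ ℓ = s := by
  obtain ⟨u, hu⟩ := h.diag s
  obtain ⟨v, hv, hv'⟩ := hG n b u (hu ▸ s.1.2)
  refine ⟨⟨⟨diagE b v, hv'⟩, h.mem hv'⟩, ?_⟩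
  apply Subtype.ext; apply Subtype.ext
  rw [hu, ← hv, ← diagE_pow]; rfl
end torus

end Proj
end FM

namespace FM

/-! ### The Kummer cocycle on projective space -/

open scoped LinearAlgebra.Projectivization
open Projectivization (mk rep_nonzero mk_rep)

section Kummer
variable {K : Type} [Field K] {k : Type*} [Field k] (ℓ : ℕ) [CharP k ℓ] (ζ : Kˣ)

open Classical in
/-- The logarithm to base `ζ` with values in a field of characteristic `ℓ`; it is
meaningful on powers of a primitive `ℓ`-th root of unity `ζ`. -/
noncomputable def lg (k : Type*) [Field k] (ζ u : Kˣ) : k := if h : ∃ i : ℕ, ζ ^ i = u then (h.choose : k) else 0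

variable {ζ} (hζ : orderOf ζ = ℓ)
include hζ

theorem lg_pow (i : ℕ) : lg k ζ (ζ ^ i) = i := by
  have h : ∃ j : ℕ, ζ ^ j = ζ ^ i := ⟨i, rfl⟩
  rw [lg, dif_pos h]
  have := h.choose_spec
  rw [pow_eq_pow_iff_modEq, hζ] at this
  exact (CharP.natCast_eq_natCast k ℓ).2 this

variable [NeZero ℓ]

theorem root_unity {u : Kˣ} (hu : u ^ ℓ = 1) : ∃ i : ℕ, ζ ^ i = u := by
  have h : IsPrimitiveRoot ζ ℓ := hζ ▸ IsPrimitiveRoot.orderOf ζ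
  obtain ⟨i, _, hi⟩ := h.eq_pow_of_mem_rootsOfUnity ((mem_rootsOfUnity _ _).2 hu)
  exact ⟨i, hi⟩

theorem lg_mul {u v : Kˣ} (hu : u ^ ℓ = 1) (hv : v ^ ℓ = 1) : lg k ζ (u * v) = lg k ζ u + lg k ζ v := by
  obtain ⟨i, rfl⟩ := root_unity ℓ hζ hu
  obtain ⟨j, rfl⟩ := root_unity ℓ hζ hv
  rw [← pow_add, lg_pow ℓ hζ, lg_pow ℓ hζ, lg_pow ℓ hζ]; push_cast; rfl

theorem lg_one : lg k ζ 1 = 0 := by simpa using lg_pow (k := k) ℓ hζ 0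

theorem lg_prod {ι : Type*} (s : Finset ι) (f : ι → Kˣ) (h : ∀ i ∈ s, f i ^ ℓ = 1) :
    lg k ζ (∏ i ∈ s, f i) = ∑ i ∈ s, lg k ζ (f i) := by
  classical
  induction s using Finset.induction_on with
  | empty => simpa using lg_one ℓ hζ
  | insert a s ha ih =>
    rw [Finset.prod_insert ha, Finset.sum_insert ha, lg_mul ℓ hζ (h a (by simp)), ih fun i hi => h i (by simp [hi])]
    rw [← Finset.prod_pow]
    exact Finset.prod_eq_one fun i hi => h i (by simp [hi])

end Kummer

section Cocycle
variable {K : Type} [Field K] {V : Type} [AddCommGroup V] [Module K V] (G : Subgroup (V ≃ₗ[K] V))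

theorem exists_ratio (g0 g1 : G) (x : ℙ K V) : ∃ u : Kˣ, 
    (g1 : V ≃ₗ[K] V) (g1⁻¹ • x).rep = (u : K) • (g0 : V ≃ₗ[K] V) (g0⁻¹ • x).rep := by
  have h : ∀ g : G, ∃ u : Kˣ, x.rep = (u : K) • (g : V ≃ₗ[K] V) (g⁻¹ • x).rep := fun g => by
    obtain ⟨u, hu⟩ := P_smul_rep G g (g⁻¹ • x)
    rw [smul_inv_smul] at hu
    exact ⟨u, hu⟩
  obtain ⟨u, hu⟩ := h g0
  obtain ⟨v, hv⟩ := h g1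
  refine ⟨v⁻¹ * u, ?_⟩
  rw [Units.val_mul, mul_smul, ← hu, hv, smul_smul, Units.inv_mul, one_smul]

/-- The ratio of the two vectors on the line `x` obtained by transporting the chosen generators
along `g0` and `g1`. -/
noncomputable def ratio (g0 g1 : G) (x : ℙ K V) : Kˣ := (exists_ratio G g0 g1 x).choose

theorem ratio_spec (g0 g1 : G) (x : ℙ K V) :
    (g1 : V ≃ₗ[K] V) (g1⁻¹ • x).rep = (ratio G g0 g1 x : K) • (g0 : V ≃ₗ[K] V) (g0⁻¹ • x).rep :=
  (exists_ratio G g0 g1 x).choose_spec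

theorem ratio_eq {g0 g1 : G} {x : ℙ K V} {u : Kˣ}
    (h : (g1 : V ≃ₗ[K] V) (g1⁻¹ • x).rep = (u : K) • (g0 : V ≃ₗ[K] V) (g0⁻¹ • x).rep) : ratio G g0 g1 x = u := by
  rw [ratio_spec G g0 g1] at h
  exact Units.ext (smul_left_injective K ((LinearEquiv.map_ne_zero_iff _).2 (rep_nonzero _)) h)

theorem ratio_mul (g0 g1 g2 : G) (x : ℙ K V) : ratio G g0 g1 x * ratio G g1 g2 x = ratio G g0 g2 x := by
  symm
  apply ratio_eq
  rw [ratio_spec G g1 g2, ratio_spec G g0 g1, smul_smul, ← Units.val_mul, mul_comm]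

theorem ratio_inv (h g0 g1 : G) (x : ℙ K V) : ratio G (h * g0) (h * g1) (h • x) = ratio G g0 g1 x := by
  apply ratio_eq
  have : ∀ g : G, (h * g)⁻¹ • h • x = g⁻¹ • x := fun g => by
    rw [smul_smul]; congr 1; group
  rw [this, this, Subgroup.coe_mul, Subgroup.coe_mul, LinearEquiv.mul_apply, LinearEquiv.mul_apply,
    ratio_spec G g0 g1, map_smul]

theorem ratio_fix {τ : G} {x : ℙ K V} {u : Kˣ} (h : (τ : V ≃ₗ[K] V) x.rep = (u : K) • x.rep) :
    ratio G 1 τ x = u := by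
  apply ratio_eq
  have : τ⁻¹ • x = x := by rw [inv_smul_eq_iff]; exact ((P_fix G).2 ⟨u, h⟩).symm
  rw [this, h]; simp

variable {k : Type*} [Field k] (ℓ : ℕ) [CharP k ℓ] (ζ : Kˣ) 

/-- The `ℓ`-th root of unity measuring the failure of a choice `ρ` of `ℓ`-th roots to be
multiplicative on ratios. -/
noncomputable def kumU (ρ : Kˣ → Kˣ) (g0 g1 g2 : G) (x : ℙ K V) : Kˣ :=
  ρ (ratio G g0 g1 x) * ρ (ratio G g1 g2 x) * (ρ (ratio G g0 g2 x))⁻¹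

/-- The Kummer cocycle: the logarithm of `kumU`, that is, the Bockstein of the cocycle `ratio`. -/
noncomputable def kum (k : Type*) [Field k] (ρ : Kˣ → Kˣ) (g0 g1 g2 : G) (x : ℙ K V) : k :=
  lg k ζ (kumU G ρ g0 g1 g2 x)

variable {ζ} {ρ : Kˣ → Kˣ} (hρ : ∀ u, ρ u ^ ℓ = u)
include hρ

theorem kumU_root (g0 g1 g2 : G) (x : ℙ K V) : kumU G ρ g0 g1 g2 x ^ ℓ = 1 := by
  rw [kumU, mul_pow, mul_pow, inv_pow, hρ, hρ, hρ, ratio_mul, mul_inv_cancel]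

variable [NeZero ℓ] (hζ : orderOf ζ = ℓ)
include hζ

theorem kum_XZ2 : XZ2 (kum G ζ k ρ) := by
  refine ⟨fun h a b c x => by simp only [kum, kumU, ratio_inv], ?_⟩
  funext a b c d x
  have h := fun a b c => kumU_root G ℓ hρ a b c x
  have e : kumU G ρ b c d x * kumU G ρ a b d x = kumU G ρ a c d x * kumU G ρ a b c x := by
    simp only [kumU]
    apply Units.ext
    push_cast
    field_simp
  have e2 := congrArg (lg k ζ) e
  rw [lg_mul ℓ hζ (h _ _ _) (h _ _ _), lg_mul ℓ hζ (h _ _ _) (h _ _ _)] at e2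
  simp only [d2, Pi.zero_apply, Pi.sub_apply, Pi.add_apply, kum]
  linear_combination e2

/-- The norm invariant of the Kummer cocycle at a fixed point with eigenvalue `u` is the logarithm of `u`. -/
theorem nn_kum {τ : G} (hτ : τ ^ ℓ = 1) {x : ℙ K V} {u : Kˣ} (h : (τ : V ≃ₗ[K] V) x.rep = (u : K) • x.rep) :
    nn ℓ τ (fun a b c => kum G ζ k ρ a b c x) = lg k ζ u := by
  have hx : τ • x = x := (P_fix G).2 ⟨u, h⟩
  have hr : ∀ i : ℕ, ratio G (τ^i) (τ^(i+1)) x = u := by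
    intro i
    induction i with
    | zero => rw [pow_zero, zero_add, pow_one]; exact ratio_fix G h
    | succ i ih =>
      have e := ratio_inv G τ (τ^i) (τ^(i+1)) x
      rw [hx, ← pow_succ', ← pow_succ'] at e
      rw [e, ih]
  have hp : ∀ n : ℕ, ∏ i ∈ Finset.range n, kumU G ρ 1 (τ^i) (τ^(i+1)) x =
      ρ (ratio G 1 1 x) * ρ u ^ n * (ρ (ratio G 1 (τ^n) x))⁻¹ := by
    intro n
    induction n with
    | zero => simp
    | succ n ih =>
      rw [Finset.prod_range_succ, ih, kumU, hr, pow_succ]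
      apply Units.ext
      push_cast
      field_simp
      ring
  have := hp ℓ
  rw [hτ, hρ, mul_comm, inv_mul_cancel_left] at this
  rw [← this, lg_prod ℓ hζ _ _ fun i _ => kumU_root G ℓ hρ _ _ _ _]
  rfl
end Cocycle
end FM

namespace FM

/-! ### Projective frames -/

open scoped LinearAlgebra.Projectivization
open Projectivization (mk rep_nonzero mk_rep)

section Proj
variable {K : Type} [Field K] {V : Type} [AddCommGroup V] [Module K V] [FiniteDimensional K V] 

theorem basis_of_indep {n : ℕ} (hn : Module.finrank K V = n) {v : Fin n → V} (hv : LinearIndependent K v) :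
    ∃ b : Module.Basis (Fin n) K V, ∀ i, b i = v i := by
  have : Nonempty (Fin n) ∨ n = 0 := by
    rcases n with _ | n
    · exact Or.inr rfl
    · exact Or.inl ⟨0⟩
  rcases this with h | rfl
  · exact ⟨basisOfLinearIndependentOfCardEqFinrank hv (by simp [hn]), fun i => by simp⟩
  · have : Subsingleton V := (Module.finrank_zero_iff (R := K)).1 hn
    exact ⟨Module.Basis.empty V, fun i => i.elim0⟩

theorem exists_basis2 (h2 : Module.finrank K V = 2) {v : V} (hv : v ≠ 0) :
    ∃ b : Module.Basis (Fin 2) K V, b 0 = v := by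
  obtain ⟨w, hw⟩ := exists_linearIndependent_pair_of_one_lt_finrank (R := K) (by omega) hv
  obtain ⟨b, hb⟩ := basis_of_indep h2 hw
  exact ⟨b, hb 0⟩

theorem exists_basis3 (h3 : Module.finrank K V = 3) {v w : V} (h : LinearIndependent K ![v, w]) :
    ∃ b : Module.Basis (Fin 3) K V, b 0 = v ∧ b 1 = w := by
  obtain ⟨b, hb⟩ := exists_basis_ext h
  refine ⟨b.reindex (finSumFinEquiv.trans (finCongr (by omega))), ?_, ?_⟩
  · rw [Module.Basis.reindex_apply]; exact hb 0
  · rw [Module.Basis.reindex_apply]; exact hb 1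

variable [Infinite K] [Nontrivial V] {G : Subgroup (V ≃ₗ[K] V)}

theorem stabX_iff {p : ℕ} (t : (pC G).X p) (g : G) : g ∈ MulAction.stabilizer G t ↔
    ∀ i, ∃ u : Kˣ, (g : V ≃ₗ[K] V) (t.1 i).rep = (u : K) • (t.1 i).rep := by
  rw [MulAction.mem_stabilizer_iff, GenCx.X.ext_iff, funext_iff]
  exact forall_congr' fun i => P_fix G

/-- The stabilizer of `dim V` points in general position is a split torus. -/
theorem stab_torus {p : ℕ} (hp : Module.finrank K V = p + 1) (t : (pC G).X p) :
    ∃ b : Module.Basis (Fin (p+1)) K V, (∀ i, b i = (t.1 i).rep) ∧ IsTorus (MulAction.stabilizer G t) b := by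
  obtain ⟨b, hb⟩ := basis_of_indep hp ((pC_gen hp.ge _).1 t.2)
  refine ⟨b, hb, fun g => ?_⟩
  rw [stabX_iff]; simp only [hb]

/-- `n+1` points in general position in a space of dimension `n` form a projective frame. -/
theorem exists_frame {p : ℕ} (hp : Module.finrank K V = p + 1) (t : (pC G).X (p+1)) :
    ∃ b : Module.Basis (Fin (p+1)) K V, (∀ i : Fin (p+1), t.1 i.castSucc = mk K (b i) (b.ne_zero i)) ∧
      ∃ h, t.1 (Fin.last _) = mk K (∑ i, b i) h := by
  have hf : ∀ i : Fin (p+2), LinearIndependent K (fun j => (t.1 (i.succAbove j)).rep) := fun i =>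
    (pC_gen hp.ge _).1 ((pC G).face _ i t.2)
  obtain ⟨b0, hb0⟩ := basis_of_indep hp (hf (Fin.last _))
  simp only [Fin.succAbove_last] at hb0
  set w := (t.1 (Fin.last _)).rep with hw
  have hne : ∀ i, b0.coord i w ≠ 0 := by
    intro i h
    obtain ⟨c, hc⟩ := basis_of_indep hp (hf i.castSucc)
    have : b0.coord i = 0 := by
      apply c.ext
      intro j
      rw [hc, LinearMap.zero_apply]
      rcases Fin.eq_castSucc_or_eq_last (i.castSucc.succAbove j) with ⟨m, hm⟩ | hm
      · rw [hm, ← hb0]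
        have : m ≠ i := by
          rintro rfl
          exact Fin.succAbove_ne _ _ hm
        simp [this]
      · rw [hm]; exact h
    have h1 : b0.coord i (b0 i) = 1 := by simp
    rw [this] at h1
    exact zero_ne_one h1
  refine ⟨b0.unitsSMul fun i => Units.mk0 _ (hne i), fun i => ?_, ?_⟩
  · rw [← mk_rep (t.1 i.castSucc), mk_eq_iff]
    refine ⟨(Units.mk0 _ (hne i))⁻¹, ?_⟩
    rw [Module.Basis.unitsSMul_apply, ← hb0, Units.smul_def, smul_smul, Units.inv_mul, one_smul]
  · have : ∑ i, (b0.unitsSMul fun i => Units.mk0 _ (hne i)) i = w := by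
      conv_rhs => rw [← b0.sum_repr w]
      exact Finset.sum_congr rfl fun i _ => by rw [Module.Basis.unitsSMul_apply]; rfl
    refine ⟨by rw [this]; exact rep_nonzero _, ?_⟩
    simp only [this]
    exact (mk_rep _).symm

/-- The group `SL(V)` is transitive on projective frames: over an algebraically closed field the determinant can be
adjusted by a scalar, which acts trivially. -/
theorem frame_trans [IsAlgClosed K] {p : ℕ} (hp : Module.finrank K V = p + 1) (t t' : (pC (SL K V)).X (p+1)) :
    ∃ g : SL K V, g • t = t' := by
  obtain ⟨b, h1, h2, h3⟩ := exists_frame hp t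
  obtain ⟨b', h1', h2', h3'⟩ := exists_frame hp t'
  let g := b.equiv b' (Equiv.refl _)
  have hg : ∀ i, g (b i) = b' i := fun i => by simp [g]
  obtain ⟨c, hc⟩ := exists_root (ℓ := p+1) (by omega) (LinearEquiv.det g)⁻¹
  let g' := diagE b' (fun _ => c) * g
  have hd : g' ∈ SL K V := by
    rw [SL, MonoidHom.mem_ker, map_mul]
    have : LinearEquiv.det (diagE b' (fun _ => c)) = c ^ (p+1) := Units.ext (by
      rw [LinearEquiv.coe_det, diagE_det]; simp)
    rw [this, hc, inv_mul_cancel]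
  have hg' : ∀ i, g' (b i) = (c : K) • b' i := fun i => by
    rw [LinearEquiv.mul_apply, hg, diagE_apply]
  refine ⟨⟨g', hd⟩, GenCx.X.ext (funext fun i => ?_)⟩
  rw [GenCx.smul_val]
  rcases Fin.eq_castSucc_or_eq_last i with ⟨m, rfl⟩ | rfl
  · rw [h1, h1', P_smul, mk_eq_iff]
    exact ⟨c, hg' m⟩
  · rw [h3, h3', P_smul, mk_eq_iff]
    refine ⟨c, ?_⟩
    rw [map_sum, Finset.smul_sum]
    exact Finset.sum_congr rfl fun i _ => hg' i

end Proj

/-! ### Degree two for the special linear group -/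

section Q8
variable {G k : Type*} [Group G] [Field k] [CharP k 2]

/-- A class of degree two restricts to zero on the centre of a quaternion group. -/
theorem nn_quaternion {F : G → G → G → k} (hF : Z2 F) {t w : G} (h1 : t * t = w * w)
    (h2 : w * t = t⁻¹ * w) (h3 : (t * t) * (t * t) = 1) : nn 2 (t * t) F = 0 := by
  have c := inh_cyc hF
  have two : (2 : k) = 0 := by exact_mod_cast CharP.cast_eq_zero k 2
  have h4 : t⁻¹ * t⁻¹ = t * t := by
    rw [← mul_inv_rev, inv_eq_iff_mul_eq_one]; exact h3
  have h5 : t⁻¹ * (t * t) = t := by group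
  have h6 : inh F (t * t) w = inh F w (t * t) := by
    have := c w w w
    rw [h1]
    linear_combination -this
  have e1 := c w t t
  have e2 := c t⁻¹ w t
  have e3 := c t⁻¹ t⁻¹ w
  have e4 := c t⁻¹ t⁻¹ (t * t)
  have e5 := c t⁻¹ t t
  have e6 := c 1 1 t
  have e7 := c 1 1 (t * t)
  rw [h4] at e3 e4
  rw [h5] at e4
  rw [h2] at e1 e2
  simp only [mul_one, one_mul, inv_mul_cancel] at *
  have hn : nn 2 (t * t) F = inh F 1 (t * t) + inh F (t * t) (t * t) := by
    rw [nn, Finset.sum_range_succ, Finset.sum_range_one]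
    simp only [inh, pow_zero, pow_one, zero_add, one_mul, one_add_one_eq_two, pow_two]
  rw [hn]
  have d1 : inh F t t = inh F t⁻¹ t⁻¹ := by
    linear_combination e1 + e2 + e3 + h6 + (inh F (t⁻¹ * w) t - inh F t⁻¹ (t⁻¹ * w)) * two
  linear_combination e7 - e4 + e5 + d1 + e6 + (inh F t⁻¹ t - inh F t t + inh F 1 1) * two
end Q8
end FM

namespace FM

open scoped LinearAlgebra.Projectivization
open Projectivization (mk rep_nonzero mk_rep)

/-! ### Stabilizers of points, and degree two for SL₂ -/

section Proj
variable {K : Type} [Field K] {V : Type} [AddCommGroup V] [Module K V] [FiniteDimensional K V] 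

section stab
variable (G : Subgroup (V ≃ₗ[K] V))

/-- The inclusion of a subgroup of a linear group in the group of linear automorphisms. -/
def inclG (S : Subgroup G) : S →* (V ≃ₗ[K] V) := G.subtype.comp S.subtype

theorem inclG_inj (S : Subgroup G) : Function.Injective (inclG G S) :=
  Subtype.val_injective.comp Subtype.val_injective

theorem inclG_apply (S : Subgroup G) (s : S) : inclG G S s = ((s : G) : V ≃ₗ[K] V) := rfl

variable [Infinite K] [Nontrivial V] {G}

theorem stab0_spec (t : (pC G).X 0) (s : MulAction.stabilizer G t) :
    ∃ u : Kˣ, inclG G _ s (t.1 0).rep = (u : K) • (t.1 0).rep := (stabX_iff t s).1 s.2 0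

theorem stab0_mem (t : (pC G).X 0) {g : V ≃ₗ[K] V} (hg : g ∈ G) {u : Kˣ}
    (h : g (t.1 0).rep = (u : K) • (t.1 0).rep) : ∃ s : MulAction.stabilizer G t, inclG G _ s = g :=
  ⟨⟨⟨g, hg⟩, (stabX_iff t _).2 fun i => ⟨u, by
    have hi : i = 0 := Fin.ext (by omega)
    rw [hi]; exact h⟩⟩, rfl⟩

/-- The character of the stabilizer of a line given by its action on this line. -/
noncomputable def chi0 (t : (pC G).X 0) : MulAction.stabilizer G t →* Kˣ :=
  chi (inclG G _) (t.1 0).rep (rep_nonzero _) (stab0_spec t)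

theorem chi0_spec (t : (pC G).X 0) (s : MulAction.stabilizer G t) :
    ((s : G) : V ≃ₗ[K] V) (t.1 0).rep = (chi0 t s : K) • (t.1 0).rep := chi_spec _ _ _ (stab0_spec t) s

theorem chi0_eq (t : (pC G).X 0) {s : MulAction.stabilizer G t} {u : Kˣ}
    (h : ((s : G) : V ≃ₗ[K] V) (t.1 0).rep = (u : K) • (t.1 0).rep) : chi0 t s = u :=
  chi_eq _ _ _ (stab0_spec t) h

end stab

theorem finrank_quot_line {v : V} (hv : v ≠ 0) :
    Module.finrank K (V ⧸ Submodule.span K {v}) = Module.finrank K V - 1 := by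
  have := Submodule.finrank_quotient_add_finrank (Submodule.span K {v})
  rw [finrank_span_singleton hv] at this; omega

section SL2
variable (h2 : Module.finrank K V = 2)

/-- The diagonal torus of `SL₂` in a given basis. -/
noncomputable def tor2 (b : Module.Basis (Fin 2) K V) : Kˣ →* SL K V where
  toFun q := ⟨diagE b ![q, q⁻¹], by rw [diagE_mem_SL]; simp⟩
  map_one' := Subtype.ext (by
    have : (![1, (1 : Kˣ)⁻¹] : Fin 2 → Kˣ) = 1 := by funext i; fin_cases i <;> simp
    simp only [this, diagE_one]; rfl)
  map_mul' q r := Subtype.ext (by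
    simp only [Subgroup.coe_mul, diagE_mul]
    congr 1
    funext i; fin_cases i <;> simp [mul_comm])

theorem tor2_0 (b : Module.Basis (Fin 2) K V) (q : Kˣ) : (tor2 b q : V ≃ₗ[K] V) (b 0) = (q : K) • b 0 :=
  diagE_apply b ![q, q⁻¹] 0

theorem tor2_1 (b : Module.Basis (Fin 2) K V) (q : Kˣ) : (tor2 b q : V ≃ₗ[K] V) (b 1) = ((q⁻¹ : Kˣ) : K) • b 1 :=
  diagE_apply b ![q, q⁻¹] 1

/-- A representative `w` of the Weyl element, inverting the torus. -/
theorem exists_weyl (b : Module.Basis (Fin 2) K V) : ∃ w : SL K V, w * w = tor2 b (-1) ∧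
    ∀ q, w * tor2 b q = tor2 b q⁻¹ * w := by
  have e0 : ⇑b = ![b 0, b 1] := by funext i; fin_cases i <;> rfl
  have hb2 : LinearIndependent K ![b 0, b 1] := by rw [← e0]; exact b.linearIndependent
  obtain ⟨g, hg⟩ := exists_GL (v := b) (w := ![b 1, - b 0]) b.linearIndependent (by
    rw [LinearIndependent.pair_iff]
    intro s t e
    have h := LinearIndependent.pair_iff.1 hb2 (-t) s (by rw [← e]; module)
    exact ⟨h.2, neg_eq_zero.1 h.1⟩)
  have h0 : g (b 0) = b 1 := hg 0
  have h1 : g (b 1) = - b 0 := hg 1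
  have hd : g ∈ SL K V := by
    rw [mem_SL, ← LinearMap.det_toMatrix b, Matrix.det_fin_two]
    simp [LinearMap.toMatrix_apply, h0, h1]
  refine ⟨⟨g, hd⟩, ?_, fun q => ?_⟩
  · apply Subtype.ext
    apply equiv_ext_basis b
    intro i
    rw [Subgroup.coe_mul, LinearEquiv.mul_apply]
    fin_cases i
    · change g (g (b 0)) = _
      refine Eq.trans ?_ (tor2_0 b (-1)).symm
      rw [h0, h1]; simp
    · change g (g (b 1)) = _
      refine Eq.trans ?_ (tor2_1 b (-1)).symm
      rw [h1, map_neg, h0]; simp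
  · apply Subtype.ext
    apply equiv_ext_basis b
    intro i
    rw [Subgroup.coe_mul, LinearEquiv.mul_apply, Subgroup.coe_mul, LinearEquiv.mul_apply]
    fin_cases i
    · change g ((tor2 b q : V ≃ₗ[K] V) (b 0)) = (tor2 b q⁻¹ : V ≃ₗ[K] V) (g (b 0))
      rw [tor2_0, h0, tor2_1, map_smul, h0, inv_inv]
    · change g ((tor2 b q : V ≃ₗ[K] V) (b 1)) = (tor2 b q⁻¹ : V ≃ₗ[K] V) (g (b 1))
      rw [tor2_1, h1, map_neg, tor2_0, map_smul, h1, smul_neg]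

variable [IsAlgClosed K] {k : Type*} [Field k] (ℓ : ℕ) [CharP k ℓ] 

/-- The norm invariants on the torus of `SL₂` vanish: conjugation by `w` inverts the torus, so twice the invariant is
zero; for `ℓ = 2` the class restricts to zero on the centre of the quaternion group. -/
theorem nn_tor2 (hℓ : ℓ.Prime) {F : SL K V → SL K V → SL K V → k} (hF : Z2 F) (b : Module.Basis (Fin 2) K V)
    {q : Kˣ} (hq : q ^ ℓ = 1) : nn ℓ (tor2 b q) F = 0 := by
  obtain ⟨w, hw, hw'⟩ := exists_weyl b
  have hτ : tor2 b q ^ ℓ = 1 := by rw [← map_pow, hq, map_one]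
  have hqi : q⁻¹ ^ ℓ = 1 := by rw [inv_pow, hq, inv_one]
  have e1 : nn ℓ (tor2 b q⁻¹) F = nn ℓ (tor2 b q) F := by
    rw [← hF.nn_conj ℓ hτ w, hw', mul_inv_cancel_right]
  have e2 : nn ℓ (tor2 b (q * q⁻¹)) F = nn ℓ (tor2 b q) F + nn ℓ (tor2 b q⁻¹) F := by
    rw [← nn_map ℓ (tor2 b), ← nn_map ℓ (tor2 b), ← nn_map ℓ (tor2 b)]
    exact nn_mul ℓ mul_comm (fun u => exists_root hℓ.ne_zero u) (hF.comp (tor2 b)) hq hqi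
  rw [mul_inv_cancel, map_one, nn_one, e1] at e2
  by_cases hl : ℓ = 2
  · subst hl
    rcases eq_or_ne q 1 with rfl | hq1
    · rw [map_one, nn_one]
    · have hq2 : q = -1 := by
        have : (q : K) ^ 2 = 1 := by rw [← Units.val_pow_eq_pow_val, hq, Units.val_one]
        rw [pow_two] at this
        rcases mul_self_eq_one_iff.1 this with h | h
        · exact absurd (Units.ext h) hq1
        · exact Units.ext h
      obtain ⟨r, hr⟩ := exists_root (ℓ := 2) two_ne_zero q
      have hr' : tor2 b r * tor2 b r = tor2 b q := by rw [← map_mul, ← pow_two, hr]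
      rw [← hr']
      refine nn_quaternion hF (w := w) ?_ ?_ ?_
      · rw [hr', hw, hq2]
      · rw [hw', map_inv]
      · rw [hr', ← map_mul, ← pow_two, hq, map_one]
  · have two : (2 : k) ≠ 0 := by
      have h := (CharP.cast_eq_zero_iff k ℓ 2).not.2 (fun h => hl ((Nat.prime_dvd_prime_iff_eq hℓ Nat.prime_two).1 h))
      exact_mod_cast h
    have : 2 * nn ℓ (tor2 b q) F = 0 := by linear_combination -e2
    exact (mul_eq_zero.1 this).resolve_left two

variable (hℓ : ℓ.Prime) (hK : (ℓ : K) ≠ 0)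
include h2 hℓ hK

/-- Degree two for `SL₂`, from its action on the projective line. -/
theorem H2_SL2 [Nontrivial V] : H2 (SL K V) k := by
  intro F hF
  refine (pC (SL K V)).machine2 F hF ?_ ?_ ?_
  · refine shapiro2 _ hF.eps fun t => ?_
    obtain ⟨b, hb⟩ := exists_basis2 h2 (rep_nonzero (t.1 0))
    have hτ : ∀ q : Kˣ, ∃ s : MulAction.stabilizer (SL K V) t, (s : SL K V) = tor2 b q ∧ chi0 t s = q := by
      intro q
      obtain ⟨s, hs⟩ := stab0_mem t (tor2 b q).2 (u := q) (by rw [← hb]; exact tor2_0 b q)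
      refine ⟨s, Subtype.ext hs, chi0_eq t ?_⟩
      rw [← hb, ← inclG_apply, hs]; exact tor2_0 b q
    have hker := unip_ker (k := k) ℓ hK (inclG (SL K V) (MulAction.stabilizer (SL K V) t)) (inclG_inj _ _) (chi0 t)
      (Submodule.span K {(t.1 0).rep}) (fun g => by
        constructor
        · rintro ⟨s, h1, rfl⟩
          refine unip_of_codim1 (by rw [finrank_quot_line (rep_nonzero _), h2]) ?_ (mem_SL.1 s.1.2)
          rw [fix_span]
          rintro _ rfl
          have := chi0_spec t s
          rw [h1, Units.val_one, one_smul] at this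
          exact this
        · intro hg
          have hf := hg.1 _ (Submodule.mem_span_singleton_self _)
          obtain ⟨s, rfl⟩ := stab0_mem t (mem_SL.2 (det_unip hg)) (u := 1) (by simpa using hf)
          rw [inclG_apply] at hf
          exact ⟨s, chi0_eq t (by rw [Units.val_one, one_smul]; exact hf), rfl⟩)
    refine ext2_det ℓ (π := chi0 t) (fun q => ?_) hker.1 hker.2.1 mul_comm (fun u => exists_root hℓ.ne_zero u)
      (hF.comp (MulAction.stabilizer (SL K V) t).subtype) (fun q hq => ?_)
    · obtain ⟨s, _, hs⟩ := hτ q; exact ⟨s, hs⟩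
    · obtain ⟨s, hs, hs'⟩ := hτ q
      refine ⟨s, hs', ?_, ?_⟩
      · apply Subtype.ext
        rw [Subgroup.coe_pow, hs, ← map_pow, hq, map_one]; rfl
      · refine (nn_map ℓ (MulAction.stabilizer (SL K V) t).subtype s F).trans ?_
        rw [Subgroup.subtype_apply, hs]
        exact nn_tor2 ℓ hℓ hF b hq
  · refine shapiro1' (fun t => ?_)
    obtain ⟨b, _, hT⟩ := stab_torus h2 t
    exact H1_of_div ℓ (hT.div (rootClosed_SL hℓ.ne_zero))
  · intro f hf hD
    obtain ⟨t0⟩ := (pC (SL K V)).exists_X 2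
    refine ⟨fun _ => f t0, fun _ _ => rfl, ?_⟩
    funext t
    obtain ⟨g, rfl⟩ := frame_trans h2 t0 t
    rw [GenCx.D1, hf]; ring
end SL2

/-- Degree two for all special linear groups, by induction from `SL₂`. -/
theorem H2_SL [IsAlgClosed K] {k : Type*} [Field k] (ℓ : ℕ) [CharP k ℓ] (hℓ : ℓ.Prime) (hK : (ℓ : K) ≠ 0) :
    ∀ (n : ℕ) (V : Type) [AddCommGroup V] [Module K V] [FiniteDimensional K V],
      Module.finrank K V = n + 2 → H2 (SL K V) k := by
  intro n
  induction n with
  | zero =>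
    intro V _ _ _ hV
    have : Nontrivial V := Module.nontrivial_of_finrank_pos (R := K) (by omega)
    exact H2_SL2 hV ℓ hℓ hK
  | succ n ih =>
    intro V _ _ _ hV
    have : Nontrivial V := Module.nontrivial_of_finrank_pos (R := K) (by omega)
    exact H2_step ℓ hK (by omega) fun U _ _ _ hU => ih U (by omega)
end Proj
end FM

namespace FM

/-! ### The obstruction along pairs of points -/

open scoped LinearAlgebra.Projectivization
open Projectivization (mk rep_nonzero mk_rep)

section Proj
variable {K : Type} [Field K] {V : Type} [AddCommGroup V] [Module K V] [FiniteDimensional K V] 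
variable [IsAlgClosed K] {k : Type*} [Field k] (ℓ : ℕ) [CharP k ℓ] [NeZero ℓ]

/-- The norm invariants of a class on `Kˣ × Kˣ` are linear in the logarithms of the coordinates. -/
theorem nn_two {ζ : Kˣ} (hζ : orderOf ζ = ℓ) {F : Kˣ × Kˣ → Kˣ × Kˣ → Kˣ × Kˣ → k} (hF : Z2 F) {u : Kˣ × Kˣ}
    (hu : u ^ ℓ = 1) : nn ℓ u F = lg k ζ u.1 * nn ℓ (ζ, 1) F + lg k ζ u.2 * nn ℓ (1, ζ) F := by
  have hζℓ : ζ ^ ℓ = 1 := hζ ▸ pow_orderOf_eq_one ζ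
  have hd : ∀ x : Kˣ × Kˣ, ∃ y, y ^ ℓ = x := fun x => by
    obtain ⟨a, ha⟩ := exists_root (NeZero.ne ℓ) x.1
    obtain ⟨b, hb⟩ := exists_root (NeZero.ne ℓ) x.2
    exact ⟨(a, b), Prod.ext ha hb⟩
  have hp : ∀ v : Kˣ × Kˣ, v ^ ℓ = 1 → ∀ i : ℕ, nn ℓ (v ^ i) F = i * nn ℓ v F := by
    intro v hv i
    induction i with
    | zero => rw [pow_zero, nn_one]; simp
    | succ i ih =>
      rw [pow_succ, nn_mul ℓ mul_comm hd hF (by rw [← pow_mul, mul_comm, pow_mul, hv, one_pow]) hv, ih]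
      push_cast; ring
  obtain ⟨i, hi⟩ := root_unity ℓ hζ (u := u.1) (by rw [← Prod.pow_fst, hu]; rfl)
  obtain ⟨j, hj⟩ := root_unity ℓ hζ (u := u.2) (by rw [← Prod.pow_snd, hu]; rfl)
  have e : u = (ζ, 1) ^ i * (1, ζ) ^ j := Prod.ext (by simp [hi]) (by simp [hj])
  have h1 : ((ζ, 1) : Kˣ × Kˣ) ^ ℓ = 1 := Prod.ext (by simp [hζℓ]) (by simp)
  have h2 : ((1, ζ) : Kˣ × Kˣ) ^ ℓ = 1 := Prod.ext (by simp) (by simp [hζℓ])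
  rw [← hi, ← hj, lg_pow ℓ hζ, lg_pow ℓ hζ, ← hp _ h1, ← hp _ h2, ← nn_mul ℓ mul_comm hd hF, ← e]
  · rw [← pow_mul, mul_comm, pow_mul, h1, one_pow]
  · rw [← pow_mul, mul_comm, pow_mul, h2, one_pow]

theorem XZ2.sub_D {G Y : Type*} [Group G] [MulAction G Y] {C : GenCx G Y} {c : G → G → G → C.X 1 → k}
    {b : G → G → G → C.X 0 → k} (hc : XZ2 c) (hb : XZ2 b) :
    XZ2 (fun g0 g1 g2 => c g0 g1 g2 - C.D (b g0 g1 g2)) := by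
  refine ⟨fun h g0 g1 g2 x => ?_, ?_⟩
  · simp only [Pi.sub_apply, GenCx.D0, GenCx.fc_smul]
    rw [hb.inv, hb.inv, hc.inv]
  · have e1 := xd2_zero hc.cyc
    have e2 := xd2_zero hb.cyc
    funext g0 g1 g2 g3 x
    simp only [d2, Pi.sub_apply, Pi.add_apply, Pi.zero_apply, GenCx.D0]
    linear_combination e1 g0 g1 g2 g3 x - e2 g0 g1 g2 g3 (C.fc 0 x) + e2 g0 g1 g2 g3 (C.fc 1 x)

variable [Nontrivial V] {G : Subgroup (V ≃ₗ[K] V)}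

/-- A family of equivariant cocycles on pairs of points in general position has, on the split torus of rank two attached
to a pair, norm invariants of the form `A log a + B log b`, with `A` and `B` independent of the pair. Compatibility over
triples of points forces `A + B = 0`, and then these norm invariants are cancelled by `D` of a multiple of the Kummer
cocycle. The index type `T` stands for the bases of `V`, `θ` for the torus and `P` for the pair attached to a basis. -/
theorem kill_pairs {ζ : Kˣ} (hζ : orderOf ζ = ℓ) {T : Type*} (θ : T → Kˣ × Kˣ →* G) (P : T → (pC G).X 1)
    (h0 : ∀ b u, (θ b u : V ≃ₗ[K] V) ((P b).1 0).rep = (u.1 : K) • ((P b).1 0).rep)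
    (h1 : ∀ b u, (θ b u : V ≃ₗ[K] V) ((P b).1 1).rep = (u.2 : K) • ((P b).1 1).rep)
    (hconj : ∀ b b', ∃ g : G, g • P b = P b' ∧ ∀ u, g * θ b u * g⁻¹ = θ b' u)
    (htri : ∃ (t : (pC G).X 2) (b0 b1 b2 : T) (q r : Kˣ), q ^ ℓ = 1 ∧ r ^ ℓ = 1 ∧ (pC G).fc 0 t = P b0 ∧
      (pC G).fc 1 t = P b1 ∧ (pC G).fc 2 t = P b2 ∧ θ b1 (q, r) = θ b0 (ζ, r) ∧ θ b2 (q, ζ) = θ b0 (ζ, r))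
    (c : G → G → G → (pC G).X 1 → k) (hc : XZ2 c) (hD : ∀ g0 g1 g2, (pC G).D (c g0 g1 g2) = 0) :
    ∃ b : G → G → G → (pC G).X 0 → k, XZ2 b ∧ ∀ t u, u ^ ℓ = 1 →
      nn ℓ (θ t u) (fun g0 g1 g2 => c g0 g1 g2 (P t) - (pC G).D (b g0 g1 g2) (P t)) = 0 := by
  have hζℓ : ζ ^ ℓ = 1 := hζ ▸ pow_orderOf_eq_one ζ
  have lζ : lg k ζ ζ = 1 := by simpa using lg_pow (k := k) ℓ hζ 1
  choose ρ hρ using fun u : Kˣ => exists_root (NeZero.ne ℓ) u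
  have hfix : ∀ b u, θ b u • P b = P b := by
    intro b u
    apply GenCx.X.ext; funext i
    rw [GenCx.smul_val]
    fin_cases i
    · exact (P_fix G).2 ⟨_, h0 b u⟩
    · exact (P_fix G).2 ⟨_, h1 b u⟩
  have hpow : ∀ b u, u ^ ℓ = 1 → θ b u ^ ℓ = 1 := fun b u hu => by rw [← map_pow, hu, map_one]
  obtain ⟨t, b0, b1, b2, q, r, hq, hr, e0, e1, e2, f1, f2⟩ := htri
  have hind : ∀ b u, u ^ ℓ = 1 → nn ℓ (θ b u) (fun g0 g1 g2 => c g0 g1 g2 (P b)) =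
      nn ℓ (θ b0 u) (fun g0 g1 g2 => c g0 g1 g2 (P b0)) := by
    intro b u hu
    obtain ⟨g, hg, hg'⟩ := hconj b0 b
    rw [← hg, ← hg']
    exact hc.nn_conj ℓ (hpow b0 u hu) (hfix b0 u) g
  have hZ : Z2 (fun u v w : Kˣ × Kˣ => c (θ b0 u) (θ b0 v) (θ b0 w) (P b0)) := by
    refine ⟨fun h u v w => ?_, ?_⟩
    · rw [map_mul, map_mul, map_mul]
      conv_lhs => rw [← hfix b0 h]
      exact hc.inv _ _ _ _ _
    · funext u v w x
      exact xd2_zero hc.cyc _ _ _ _ _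
  obtain ⟨A, B, hAB⟩ : ∃ A B : k, ∀ b u, u ^ ℓ = 1 → nn ℓ (θ b u) (fun g0 g1 g2 => c g0 g1 g2 (P b)) =
      lg k ζ u.1 * A + lg k ζ u.2 * B := by
    refine ⟨nn ℓ ((ζ, 1) : Kˣ × Kˣ) (fun u v w => c (θ b0 u) (θ b0 v) (θ b0 w) (P b0)),
      nn ℓ ((1, ζ) : Kˣ × Kˣ) (fun u v w => c (θ b0 u) (θ b0 v) (θ b0 w) (P b0)), fun b u hu => ?_⟩
    rw [hind b u hu]
    refine (nn_map ℓ (θ b0) u (fun g0 g1 g2 => c g0 g1 g2 (P b0))).symm.trans ?_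
    exact nn_two ℓ hζ hZ hu
  have hs : A + B = 0 := by
    have hnn : nn ℓ (θ b0 (ζ, r)) (fun g0 g1 g2 => c g0 g1 g2 (P b0)) -
        nn ℓ (θ b0 (ζ, r)) (fun g0 g1 g2 => c g0 g1 g2 (P b1)) +
        nn ℓ (θ b0 (ζ, r)) (fun g0 g1 g2 => c g0 g1 g2 (P b2)) = 0 := by
      rw [← nn_sub, ← nn_add]
      simp only [nn]
      refine Finset.sum_eq_zero fun i _ => ?_
      have := congrFun (hD 1 (θ b0 (ζ, r) ^ i) (θ b0 (ζ, r) ^ (i+1))) t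
      rw [GenCx.D1, e0, e1, e2] at this
      exact this
    have n0 := hAB b0 (ζ, r) (Prod.ext hζℓ hr)
    have n1 := hAB b1 (q, r) (Prod.ext hq hr)
    have n2 := hAB b2 (q, ζ) (Prod.ext hq hζℓ)
    rw [f1] at n1
    rw [f2] at n2
    rw [n0, n1, n2] at hnn
    simp only [lζ] at hnn
    linear_combination hnn
  have hk := kum_XZ2 (k := k) G ℓ hρ hζ
  refine ⟨fun g0 g1 g2 x => -A * kum G ζ k ρ g0 g1 g2 (x.1 0), ⟨fun h g0 g1 g2 x => ?_, ?_⟩, fun t u hu => ?_⟩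
  · rw [GenCx.smul_val, hk.inv]
  · funext g0 g1 g2 g3 x
    have := xd2_zero hk.cyc g0 g1 g2 g3 (x.1 0)
    simp only [d2, Pi.sub_apply, Pi.add_apply, Pi.zero_apply]
    linear_combination -A * this
  · simp only [GenCx.D0, ← mul_sub]
    rw [nn_sub, nn_smul, nn_sub, hAB t u hu]
    have k0 := nn_kum (k := k) G ℓ hρ hζ (hpow t u hu) (h0 t u)
    have k1 := nn_kum (k := k) G ℓ hρ hζ (hpow t u hu) (h1 t u)
    have g0 : ((pC G).fc 0 (P t)).1 0 = (P t).1 1 := rfl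
    have g1 : ((pC G).fc 1 (P t)).1 0 = (P t).1 0 := rfl
    rw [g0, g1, k0, k1]
    linear_combination lg k ζ u.2 * hs
end Proj
end FM

namespace FM

/-! ### Degree three for the general linear group of a plane -/

open scoped LinearAlgebra.Projectivization
open Projectivization (mk rep_nonzero mk_rep)

section Proj
variable {K : Type} [Field K] {V : Type} [AddCommGroup V] [Module K V] 

/-- The point `y` of projective space is the line spanned by `v`. -/
def On (v : V) (y : ℙ K V) : Prop := ∃ u : Kˣ, y.rep = (u : K) • v

theorem On.mk (v : V) (hv : v ≠ 0) : On v (mk K v hv) := rep_mk v hv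

theorem On.of_mk {v : V} {hv : v ≠ 0} {y : ℙ K V} (h : y = Projectivization.mk K v hv) : On v y := h ▸ rep_mk v hv

theorem On.scale {v : V} {y : ℙ K V} (h : On v y) {c : K} (hc : c ≠ 0) {w : V} (e : w = c • v) : On w y := by
  obtain ⟨u, hu⟩ := h
  refine ⟨u * (Units.mk0 c hc)⁻¹, ?_⟩
  rw [hu, e, smul_smul]; simp [hc]

theorem On.eig {v : V} {y : ℙ K V} (h : On v y) {g : V ≃ₗ[K] V} {c : K} (e : g v = c • v) : g y.rep = c • y.rep := by
  obtain ⟨u, hu⟩ := h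
  rw [hu, map_smul, e, smul_comm]

theorem On.eq {v : V} {y z : ℙ K V} (h : On v y) (h' : On v z) : y = z := by
  obtain ⟨u, hu⟩ := h
  obtain ⟨w, hw⟩ := h'
  rw [← mk_rep y, ← mk_rep z, mk_eq_iff]
  refine ⟨u * w⁻¹, ?_⟩
  rw [hu, hw, smul_smul]; simp

theorem On.map {G : Subgroup (V ≃ₗ[K] V)} {v : V} {y : ℙ K V} (h : On v y) (g : G) :
    On ((g : V ≃ₗ[K] V) v) (g • y) := by
  obtain ⟨u, hu⟩ := h
  obtain ⟨w, hw⟩ := P_smul_rep G g y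
  refine ⟨w * u, ?_⟩
  rw [hw, hu, map_smul, smul_smul, Units.val_mul]

theorem On.indep {v w : V} {y z : ℙ K V} (h : On v y) (h' : On w z) (hne : y ≠ z) : LinearIndependent K ![v, w] := by
  obtain ⟨u, hu⟩ := h
  obtain ⟨u', hu'⟩ := h'
  have := Projectivization.linearIndependent_pair_iff_ne.2 hne
  rw [LinearIndependent.pair_iff] at this ⊢
  intro s t e
  have h2 := this (s * (u⁻¹ : Kˣ)) (t * (u'⁻¹ : Kˣ)) (by
    rw [hu, hu', smul_smul, smul_smul, mul_assoc, mul_assoc, Units.inv_mul, Units.inv_mul, mul_one, mul_one, e])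
  simpa using h2

variable [FiniteDimensional K V]

section GL2
variable (K V) in
/-- The general linear group, as a subgroup of itself. -/
abbrev GLg : Subgroup (V ≃ₗ[K] V) := ⊤

variable (h2 : Module.finrank K V = 2) [IsAlgClosed K] [Nontrivial V]

/-- The pair of points attached to a basis of a plane. -/
noncomputable def pair2 (b : Module.Basis (Fin 2) K V) : (pC (GLg K V)).X 1 :=
  ⟨fun i => mk K (b i) (b.ne_zero i), (pC_gen_mk h2.ge _ _).2 b.linearIndependent⟩

theorem exists_pair2 (t : (pC (GLg K V)).X 1) : ∃ b, (∀ i, b i = (t.1 i).rep) ∧ t = pair2 h2 b := by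
  obtain ⟨b, hb⟩ := basis_of_indep h2 ((pC_gen h2.ge _).1 t.2)
  refine ⟨b, hb, GenCx.X.ext (funext fun i => ?_)⟩
  exact (mk_rep _).symm.trans (mk_eq_iff.2 ⟨1, by rw [hb]; simp⟩)

/-- The torus of `GL₂` attached to a basis. -/
noncomputable def torG (b : Module.Basis (Fin 2) K V) : Kˣ × Kˣ →* (GLg K V) where
  toFun u := ⟨diagE b ![u.1, u.2], Subgroup.mem_top _⟩
  map_one' := Subtype.ext (by
    have : (![1, 1] : Fin 2 → Kˣ) = 1 := by funext i; fin_cases i <;> simp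
    simp only [Prod.fst_one, Prod.snd_one, this, diagE_one]; rfl)
  map_mul' q r := Subtype.ext (by
    simp only [Subgroup.coe_mul, diagE_mul]
    congr 1
    funext i; fin_cases i <;> simp)

theorem torG_0 (b : Module.Basis (Fin 2) K V) (u) : (torG b u : V ≃ₗ[K] V) (b 0) = (u.1 : K) • b 0 :=
  diagE_apply b ![u.1, u.2] 0

theorem torG_1 (b : Module.Basis (Fin 2) K V) (u) : (torG b u : V ≃ₗ[K] V) (b 1) = (u.2 : K) • b 1 :=
  diagE_apply b ![u.1, u.2] 1

theorem torG_scalar (b : Module.Basis (Fin 2) K V) (q : Kˣ) (v : V) : (torG b (q, q) : V ≃ₗ[K] V) v = (q : K) • v := by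
  have : ((torG b (q, q) : V ≃ₗ[K] V) : V →ₗ[K] V) = (q : K) • LinearMap.id := by
    apply b.ext
    intro i
    fin_cases i
    · exact torG_0 b (q, q)
    · exact torG_1 b (q, q)
  exact LinearMap.congr_fun this v

theorem torG_scalar_eq (b b' : Module.Basis (Fin 2) K V) (q : Kˣ) : torG b (q, q) = torG b' (q, q) :=
  Subtype.ext (LinearEquiv.ext fun v => by rw [torG_scalar, torG_scalar])

/-- All pairs of points of the projective line, with their tori, are conjugate. -/
theorem torG_conj (b b' : Module.Basis (Fin 2) K V) : ∃ g : (GLg K V),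
    g • pair2 h2 b = pair2 h2 b' ∧ ∀ u, g * torG b u * g⁻¹ = torG b' u := by
  obtain ⟨g, hg⟩ := exists_GL b.linearIndependent b'.linearIndependent
  refine ⟨⟨g, Subgroup.mem_top _⟩, GenCx.X.ext (funext fun i => ?_), fun u => ?_⟩
  · rw [GenCx.smul_val]
    exact (P_smul _ _ _ _).trans (mk_eq_iff.2 ⟨1, by rw [Units.val_one, one_smul]; exact hg i⟩)
  · rw [mul_inv_eq_iff_eq_mul]
    apply Subtype.ext
    apply equiv_ext_basis b
    intro i
    rw [Subgroup.coe_mul, Subgroup.coe_mul, LinearEquiv.mul_apply, LinearEquiv.mul_apply]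
    change g ((torG b u : V ≃ₗ[K] V) (b i)) = (torG b' u : V ≃ₗ[K] V) (g (b i))
    rw [hg]
    fin_cases i
    · exact (congrArg g (torG_0 b u)).trans (by rw [map_smul, hg]; exact (torG_0 b' u).symm)
    · exact (congrArg g (torG_1 b u)).trans (by rw [map_smul, hg]; exact (torG_1 b' u).symm)

variable {k : Type*} [Field k] (ℓ : ℕ) [CharP k ℓ] 

include h2 in
/-- The contribution of pairs for `GL₂`: their stabilizers are tori, on which classes of degree two are detected by
norm invariants, and these are removed by `kill_pairs`. -/
theorem GL2_h12 [NeZero ℓ] {ζ : Kˣ} (hζ : orderOf ζ = ℓ) 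
    (c : (GLg K V) → (GLg K V) → (GLg K V) → (pC (GLg K V)).X 1 → k)
    (hc : XZ2 c) (hD : ∀ g0 g1 g2, (pC (GLg K V)).D (c g0 g1 g2) = 0) :
    ∃ b : (GLg K V) → (GLg K V) → (GLg K V) → (pC (GLg K V)).X 0 → k,
      XZ2 b ∧ XB2 (fun g0 g1 g2 => c g0 g1 g2 - (pC (GLg K V)).D (b g0 g1 g2)) := by
  have hζℓ : ζ ^ ℓ = 1 := hζ ▸ pow_orderOf_eq_one ζ
  obtain ⟨b, hb, hb'⟩ := kill_pairs ℓ hζ torG (pair2 h2) (fun b u => (On.mk (b 0) (b.ne_zero 0)).eig (torG_0 b u))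
    (fun b u => (On.mk (b 1) (b.ne_zero 1)).eig (torG_1 b u)) (torG_conj h2) (by
      obtain ⟨t⟩ := (pC (GLg K V)).exists_X 2
      obtain ⟨b0, _, e0⟩ := exists_pair2 h2 ((pC (GLg K V)).fc 0 t)
      obtain ⟨b1, _, e1⟩ := exists_pair2 h2 ((pC (GLg K V)).fc 1 t)
      obtain ⟨b2, _, e2⟩ := exists_pair2 h2 ((pC (GLg K V)).fc 2 t)
      exact ⟨t, b0, b1, b2, ζ, ζ, hζℓ, hζℓ, e0, e1, e2, torG_scalar_eq _ _ _, torG_scalar_eq _ _ _⟩) c hc hD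
  refine ⟨b, hb, shapiro2 _ (hc.sub_D hb) fun t => ?_⟩
  obtain ⟨β, hβ, hT⟩ := stab_torus (G := GLg K V) h2 t
  obtain ⟨β', hβ', e⟩ := exists_pair2 h2 t
  have : β = β' := Module.Basis.eq_of_apply_eq fun i => by rw [hβ, hβ']
  subst this
  refine det2 ℓ hT.comm (hT.div (rootClosed_top (NeZero.ne ℓ))) ((hc.sub_D hb).stab t) fun τ hτ => ?_
  obtain ⟨u, hu⟩ := hT.diag τ
  have hτu : (τ : (GLg K V)) = torG β (u 0, u 1) := by
    apply Subtype.ext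
    rw [hu]
    change _ = diagE β ![u 0, u 1]
    congr 1
    funext i; fin_cases i <;> rfl
  have hui : ∀ i, u i ^ ℓ = 1 := by
    intro i
    have h1 : ((τ : (GLg K V)) : V ≃ₗ[K] V) ^ ℓ = 1 := by
      have := congrArg (inclG (GLg K V) _) hτ
      rwa [map_pow, map_one] at this
    rw [hu, diagE_pow, ← diagE_one β] at h1
    have h2 := LinearEquiv.congr_fun h1 (β i)
    rw [diagE_apply, diagE_apply] at h2
    exact Units.ext (smul_left_injective K (β.ne_zero i) h2)
  have := hb' β (u 0, u 1) (Prod.ext (hui 0) (hui 1))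
  rw [← e, ← hτu] at this
  exact (nn_map ℓ (MulAction.stabilizer (GLg K V) t).subtype τ _).trans this
end GL2
end Proj
end FM

namespace FM

open scoped LinearAlgebra.Projectivization
open Projectivization (mk rep_nonzero mk_rep)

/-! ### The projective line and the five-term relation -/

section Proj
variable {K : Type} [Field K] {V : Type} [AddCommGroup V] [Module K V] 
variable [FiniteDimensional K V]
section GL2
variable (h2 : Module.finrank K V = 2) [IsAlgClosed K] [Nontrivial V]

variable {k : Type*} [Field k] (ℓ : ℕ) [CharP k ℓ] 
include h2

theorem pC_ne {G : Subgroup (V ≃ₗ[K] V)} {p : ℕ} (x : (pC G).X p) {i j} (h : i ≠ j) : x.1 i ≠ x.1 j :=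
  ((pC_gen2 h2 _).1 x.2).ne h

/-- Functions on quadruples of distinct points invariant under `GL₂` factor through the cross ratio. -/
theorem cross_ratio (f : (pC (GLg K V)).X 3 → k) (hf : ∀ (g : GLg K V) x, f (g • x) = f x) : ∃ φ : K → k,
    (∀ (x : (pC (GLg K V)).X 3) (p q : V) (z : K), On p (x.1 0) → On q (x.1 1) → On (p + q) (x.1 2) →
      On (z • p + q) (x.1 3) → f x = φ z) := by
  classical
  obtain ⟨b, -⟩ := exists_basis2 h2 (exists_ne (0 : V)).choose_spec
  let Q : K → (pC (GLg K V)).X 3 → Prop := fun z x => On (b 0) (x.1 0) ∧ On (b 1) (x.1 1) ∧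
    On (b 0 + b 1) (x.1 2) ∧ On (z • b 0 + b 1) (x.1 3)
  have hQ : ∀ z x y, Q z x → Q z y → x = y := by
    intro z x y h h'
    apply GenCx.X.ext; funext i
    fin_cases i
    · exact h.1.eq h'.1
    · exact h.2.1.eq h'.2.1
    · exact h.2.2.1.eq h'.2.2.1
    · exact h.2.2.2.eq h'.2.2.2
  refine ⟨fun z => if h : ∃ x, Q z x then f h.choose else 0, fun x p q z h0 h1 h2' h3 => ?_⟩
  have e0 : ⇑b = ![b 0, b 1] := by funext i; fin_cases i <;> rfl
  have hb2 : LinearIndependent K ![b 0, b 1] := by rw [← e0]; exact b.linearIndependent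
  obtain ⟨g, hg⟩ := exists_GL (h0.indep h1 (pC_ne h2 x (by decide))) hb2
  have g0 : g p = b 0 := hg 0
  have g1 : g q = b 1 := hg 1
  let γ : GLg K V := ⟨g, Subgroup.mem_top _⟩
  have hx : Q z (γ • x) := by
    refine ⟨?_, ?_, ?_, ?_⟩
    · rw [← g0]; exact h0.map γ
    · rw [← g1]; exact h1.map γ
    · rw [← g0, ← g1, ← map_add]; exact h2'.map γ
    · rw [← g0, ← g1, ← map_smul, ← map_add]; exact h3.map γ
  have hex : ∃ x, Q z x := ⟨_, hx⟩
  dsimp only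
  rw [dif_pos hex, ← hf γ x, hQ z _ _ hx hex.choose_spec]

/-- Coordinates in which four distinct points of the projective line are `∞`, `0`, `1` and `z`. -/
theorem exists_cross (x : (pC (GLg K V)).X 3) : ∃ (p q : V) (z : K), z ≠ 0 ∧ z ≠ 1 ∧ On p (x.1 0) ∧ On q (x.1 1) ∧
    On (p + q) (x.1 2) ∧ On (z • p + q) (x.1 3) := by
  obtain ⟨b, hb, hn, hs⟩ := exists_frame h2 ((pC (GLg K V)).fc 3 x)
  have o0 : On (b 0) (x.1 0) := On.of_mk (hb 0)
  have o1 : On (b 1) (x.1 1) := On.of_mk (hb 1)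
  have o2 : On (b 0 + b 1) (x.1 2) := by
    have h : On (∑ i, b i) (x.1 2) := On.of_mk hs
    rwa [Fin.sum_univ_two] at h
  set w := (x.1 3).rep with hw
  have o3 : On w (x.1 3) := ⟨1, by simp [hw]⟩
  have hwb : w = b.repr w 0 • b 0 + b.repr w 1 • b 1 := by
    conv_lhs => rw [← b.sum_repr w, Fin.sum_univ_two]
  set α := b.repr w 0
  set β := b.repr w 1
  have hw0 : w ≠ 0 := rep_nonzero _
  have hβ : β ≠ 0 := by
    intro h
    rw [h, zero_smul, add_zero] at hwb
    have hα : α ≠ 0 := by rintro h; exact hw0 (by rw [hwb, h, zero_smul])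
    exact pC_ne h2 x (show (3 : Fin 4) ≠ 0 by decide) (o3.eq (o0.scale hα hwb))
  refine ⟨b 0, b 1, α / β, ?_, ?_, o0, o1, o2, o3.scale (inv_ne_zero hβ) ?_⟩
  · intro h
    have h0 : α = 0 := by simpa [hβ] using h
    rw [h0, zero_smul, zero_add] at hwb
    exact pC_ne h2 x (show (3 : Fin 4) ≠ 1 by decide) (o3.eq (o1.scale hβ hwb))
  · intro h
    rw [div_eq_one_iff_eq hβ] at h
    rw [h, ← smul_add] at hwb
    exact pC_ne h2 x (show (3 : Fin 4) ≠ 2 by decide) (o3.eq (o2.scale hβ hwb))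
  · rw [hwb, smul_add, smul_smul, smul_smul, inv_mul_cancel₀ hβ, one_smul, div_eq_inv_mul]

/-- Five distinct points of the projective line in coordinates. -/
theorem five_points (b : Module.Basis (Fin 2) K V) {x y : K} (x0 : x ≠ 0) (x1 : x ≠ 1) (y0 : y ≠ 0) (y1 : y ≠ 1) (hxy : x ≠ y) :
    ∃ t : (pC (GLg K V)).X 4, On (b 0) (t.1 0) ∧ On (b 1) (t.1 1) ∧ On (b 0 + b 1) (t.1 2) ∧
      On (x • b 0 + b 1) (t.1 3) ∧ On (y • b 0 + b 1) (t.1 4) := by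
  let α : Fin 5 → K := ![1, 0, 1, x, y]
  let β : Fin 5 → K := ![0, 1, 1, 1, 1]
  let v : Fin 5 → V := fun i => α i • b 0 + β i • b 1
  have r0 : ∀ i, b.repr (v i) 0 = α i := fun i => by simp [v]
  have r1 : ∀ i, b.repr (v i) 1 = β i := fun i => by simp [v]
  have hv : ∀ i, v i ≠ 0 := by
    intro i h
    have h0 := r0 i
    have h1 := r1 i
    rw [h] at h0 h1
    fin_cases i <;> simp [α, β] at h0 h1
  have hinj : Function.Injective fun i => mk K (v i) (hv i) := by
    intro i j h
    obtain ⟨u, hu⟩ := mk_eq_iff.1 h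
    have h0 := r0 i
    have h1 := r1 i
    rw [hu, map_smul, Finsupp.smul_apply, r0] at h0
    rw [hu, map_smul, Finsupp.smul_apply, r1] at h1
    have e : α i * β j = α j * β i := by
      rw [← h0, ← h1]; simp only [smul_eq_mul]; ring
    fin_cases i <;> fin_cases j <;> simp [α, β] at e ⊢ <;> first
      | exact x0 e
      | exact x1 e
      | exact y0 e
      | exact y1 e
      | exact hxy e
      | exact x0 e.symm
      | exact x1 e.symm
      | exact y0 e.symm
      | exact y1 e.symm
      | exact hxy e.symm
  have ho : ∀ i w, v i = w → On w (mk K (v i) (hv i)) := fun i w h => h ▸ On.mk _ _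
  refine ⟨⟨_, (pC_gen2 h2 _).2 hinj⟩, ho _ _ ?_, ho _ _ ?_, ho _ _ ?_, ho _ _ ?_, ho _ _ ?_⟩ <;> simp [v, α, β]

/-- The contribution of quadruples for `GL₂`: an invariant cocycle is a function of the cross ratio that satisfies
the five-term relation, hence it vanishes. -/
theorem GL2_h30 (hℓ : ℓ ≠ 0) (f : (pC (GLg K V)).X 3 → k) (hf : ∀ (g : GLg K V) x, f (g • x) = f x) (hD : (pC (GLg K V)).D f = 0) :
    f = 0 := by
  obtain ⟨b, -⟩ := exists_basis2 h2 (exists_ne (0 : V)).choose_spec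
  obtain ⟨φ, hφ⟩ := cross_ratio h2 f hf
  have hFT : FT φ := by
    intro x y x0 x1 y0 y1 hxy
    obtain ⟨t, o0, o1, o2, o3, o4⟩ := five_points h2 b x0 x1 y0 y1 hxy
    have hx1 : x - 1 ≠ 0 := sub_ne_zero.2 x1
    have hx1' : 1 - x ≠ 0 := sub_ne_zero.2 x1.symm
    have hy1 : y - 1 ≠ 0 := sub_ne_zero.2 y1
    have key := congrFun hD t
    rw [GenCx.D3, Pi.zero_apply] at key
    have f0 := hφ ((pC (GLg K V)).fc 0 t) ((1 - x) • b 1) (x • (b 0 + b 1)) ((y⁻¹ - 1) / (x⁻¹ - 1))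
      (o1.scale hx1' rfl) (o2.scale x0 rfl) (o3.scale one_ne_zero (by module))
      (o4.scale (c := x / y) (div_ne_zero x0 y0) (by
        have e : (y⁻¹ - 1) / (x⁻¹ - 1) * (1 - x) = x * (1 - y) / y := by
          have : x⁻¹ - 1 ≠ 0 := by
            rw [sub_ne_zero]; exact fun h => x1 (inv_eq_one.1 h)
          field_simp
        have e2 : x / y * y = x := by field_simp
        have e3 : x * (1 - y) / y + x = x / y := by field_simp; ring
        rw [smul_smul, e, smul_add, smul_add, smul_smul, e2, ← e3]
        module))
    have f1 := hφ ((pC (GLg K V)).fc 1 t) ((x - 1) • b 0) (b 0 + b 1) ((y - 1) / (x - 1))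
      (o0.scale hx1 rfl) o2 (o3.scale one_ne_zero (by module))
      (o4.scale one_ne_zero (by
        rw [smul_smul, div_mul_cancel₀ _ hx1]; module))
    have f2 := hφ ((pC (GLg K V)).fc 2 t) (x • b 0) (b 1) (y / x)
      (o0.scale x0 rfl) o1 o3
      (o4.scale one_ne_zero (by
        rw [smul_smul, div_mul_cancel₀ _ x0]; module))
    have f3 := hφ ((pC (GLg K V)).fc 3 t) (b 0) (b 1) y o0 o1 o2 o4
    have f4 := hφ ((pC (GLg K V)).fc 4 t) (b 0) (b 1) x o0 o1 o2 o3
    rw [f0, f1, f2, f3, f4] at key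
    linear_combination key
  funext x
  obtain ⟨p, q, z, z0, z1, h0, h1, h2', h3⟩ := exists_cross h2 x
  rw [hφ x p q z h0 h1 h2' h3]
  exact hFT.eq_zero ℓ hℓ z0 z1

/-- The stabilizer of three distinct points consists of scalars, hence is divisible. -/
theorem GL2_h21 (hℓ : ℓ ≠ 0) (t : (pC (GLg K V)).X 2) : H1 (MulAction.stabilizer (GLg K V) t) k := by
  refine H1_of_div ℓ fun s => ?_
  obtain ⟨b, hb, hn, hs⟩ := exists_frame h2 t
  have o : ∀ i : Fin 3, ∃ u : Kˣ, inclG _ _ s (t.1 i).rep = (u : K) • (t.1 i).rep := (stabX_iff t s).1 s.2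
  have o' : ∀ (i : Fin 3) v, On v (t.1 i) → ∃ u : Kˣ, inclG _ _ s v = (u : K) • v := by
    rintro i v ⟨w, hw⟩
    obtain ⟨u, hu⟩ := o i
    refine ⟨u, ?_⟩
    rw [hw, map_smul, smul_comm] at hu
    exact smul_right_injective V w.ne_zero hu
  obtain ⟨u0, h0⟩ := o' 0 _ (On.of_mk (hb 0))
  obtain ⟨u1, h1⟩ := o' 1 _ (On.of_mk (hb 1))
  obtain ⟨u, h⟩ := o' 2 _ (On.of_mk hs)
  rw [Fin.sum_univ_two, map_add, h0, h1, smul_add] at h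
  have e0 := congrArg (fun v => b.repr v 0) h
  have e1 := congrArg (fun v => b.repr v 1) h
  simp at e0 e1
  obtain ⟨r, hr⟩ := exists_root hℓ u
  have hst : torG b (r, r) ∈ MulAction.stabilizer (GLg K V) t :=
    (stabX_iff t _).2 fun i => ⟨r, torG_scalar b r _⟩
  refine ⟨⟨_, hst⟩, ?_⟩
  apply Subtype.ext; apply Subtype.ext
  rw [Subgroup.coe_pow, ← map_pow]
  apply equiv_ext_basis b
  have : ((r, r) : Kˣ × Kˣ) ^ ℓ = (u, u) := Prod.ext hr hr
  rw [this]
  intro i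
  rw [torG_scalar]
  fin_cases i
  · exact (h0.trans (by rw [e0]; rfl)).symm
  · exact (h1.trans (by rw [e1]; rfl)).symm

/-- The stabilizer of a point is a Borel subgroup, an extension of `Kˣ × Kˣ` by a unipotent group. -/
theorem GL2_h03 (hℓ : ℓ ≠ 0) (hK : (ℓ : K) ≠ 0) (t : (pC (GLg K V)).X 0) : H3 (MulAction.stabilizer (GLg K V) t) k := by
  have : Infinite K := inferInstance
  let j := inclG (GLg K V) (MulAction.stabilizer (GLg K V) t)
  let π : MulAction.stabilizer (GLg K V) t →* Kˣ × Kˣ := (chi0 t).prod (LinearEquiv.det.comp j)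
  have hker := unip_ker (k := k) ℓ hK j (inclG_inj _ _) π (Submodule.span K {(t.1 0).rep}) (fun g => by
    constructor
    · rintro ⟨s, h1, rfl⟩
      have h1' : chi0 t s = 1 := congrArg Prod.fst h1
      have h1'' : LinearEquiv.det (j s) = 1 := congrArg Prod.snd h1
      refine unip_of_codim1 (by rw [finrank_quot_line (rep_nonzero _), h2]) ?_ (by
        rw [← LinearEquiv.coe_det, h1'', Units.val_one])
      rw [fix_span]
      rintro _ rfl
      have := chi0_spec t s
      rw [h1', Units.val_one, one_smul] at this
      exact this
    · intro hg
      have hf := hg.1 _ (Submodule.mem_span_singleton_self _)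
      obtain ⟨s, rfl⟩ := stab0_mem t (Subgroup.mem_top g) (u := 1) (by simpa using hf)
      rw [inclG_apply] at hf
      have hc : chi0 t s = 1 := chi0_eq t (by rw [Units.val_one, one_smul]; exact hf)
      refine ⟨s, Prod.ext hc (Units.ext ?_), rfl⟩
      exact (LinearEquiv.coe_det _).trans (det_unip hg))
  refine ext3 (π := π) (fun q => ?_) hker.1 hker.2.1 hker.2.2 (H3_of_div ℓ mul_comm fun q => ?_)
  · obtain ⟨b, hb⟩ := exists_basis2 h2 (rep_nonzero (t.1 0))
    obtain ⟨s, hs⟩ := stab0_mem t (Subgroup.mem_top (diagE b ![q.1, q.1⁻¹ * q.2])) (u := q.1) (by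
      rw [← hb]; exact diagE_apply _ _ 0)
    refine ⟨s, Prod.ext (chi0_eq t ?_) ?_⟩
    · rw [← inclG_apply, hs, ← hb]; exact diagE_apply _ _ 0
    · change LinearEquiv.det (inclG _ _ s) = _
      rw [hs]
      apply Units.ext
      rw [LinearEquiv.coe_det, diagE_det, Fin.prod_univ_two]
      simp
  · obtain ⟨a, ha⟩ := exists_root hℓ q.1
    obtain ⟨c, hc⟩ := exists_root hℓ q.2
    exact ⟨(a, c), Prod.ext ha hc⟩

theorem H3_GL2 (hℓ : ℓ ≠ 0) (hK : (ℓ : K) ≠ 0) {ζ : Kˣ} (hζ : orderOf ζ = ℓ) : H3 (V ≃ₗ[K] V) k := by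
  have : NeZero ℓ := ⟨hℓ⟩
  refine H3.equiv (Subgroup.topEquiv : GLg K V ≃* _) fun F hF => ?_
  refine (pC (GLg K V)).machine3 F hF (shapiro3' (GL2_h03 h2 ℓ hℓ hK) _ hF.eps) (fun c hc hD => ?_)
    (shapiro1' (GL2_h21 h2 ℓ hℓ)) (fun f hf hD => ⟨0, fun _ _ => rfl, ?_⟩)
  · exact GL2_h12 h2 ℓ hζ c hc hD
  · rw [map_zero, GL2_h30 h2 ℓ hℓ f hf hD]
end GL2
end Proj
end FM

namespace FM

/-! ### Degree three for the special linear group -/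

open scoped LinearAlgebra.Projectivization
open Projectivization (mk rep_nonzero mk_rep)

section Proj
variable {K : Type} [Field K] {V : Type} [AddCommGroup V] [Module K V] 
variable [FiniteDimensional K V]
section SL3
variable (h3 : Module.finrank K V = 3) [IsAlgClosed K] [Nontrivial V]

/-- The pair of points given by the first two vectors of a basis of a space of dimension three. -/
noncomputable def pair3 (b : Module.Basis (Fin 3) K V) : (pC (SL K V)).X 1 :=
  ⟨fun i => mk K (b i.castSucc) (b.ne_zero _), (pC_gen_mk (by omega) _ _).2
    (b.linearIndependent.comp _ (Fin.castSucc_injective 2))⟩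

/-- The diagonal torus of `SL₃` in a given basis, parametrized by its first two characters. -/
noncomputable def tor3 (b : Module.Basis (Fin 3) K V) : Kˣ × Kˣ →* SL K V where
  toFun u := ⟨diagE b ![u.1, u.2, (u.1 * u.2)⁻¹], by
    rw [diagE_mem_SL, Fin.prod_univ_three]
    exact mul_inv_cancel (u.1 * u.2)⟩
  map_one' := Subtype.ext (by
    have : (![1, 1, (1 * 1)⁻¹] : Fin 3 → Kˣ) = 1 := by funext i; fin_cases i <;> simp
    simp only [Prod.fst_one, Prod.snd_one, this, diagE_one]; rfl)
  map_mul' q r := Subtype.ext (by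
    simp only [Subgroup.coe_mul, diagE_mul]
    congr 1
    funext i; fin_cases i
    · rfl
    · rfl
    · change (q.1 * r.1 * (q.2 * r.2))⁻¹ = (q.1 * q.2)⁻¹ * (r.1 * r.2)⁻¹
      rw [mul_mul_mul_comm, mul_inv])

theorem tor3_0 (b : Module.Basis (Fin 3) K V) (u) : (tor3 b u : V ≃ₗ[K] V) (b 0) = (u.1 : K) • b 0 :=
  diagE_apply b ![u.1, u.2, (u.1 * u.2)⁻¹] 0

theorem tor3_1 (b : Module.Basis (Fin 3) K V) (u) : (tor3 b u : V ≃ₗ[K] V) (b 1) = (u.2 : K) • b 1 :=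
  diagE_apply b ![u.1, u.2, (u.1 * u.2)⁻¹] 1

theorem tor3_2 (b : Module.Basis (Fin 3) K V) (u) :
    (tor3 b u : V ≃ₗ[K] V) (b 2) = (((u.1 * u.2)⁻¹ : Kˣ) : K) • b 2 :=
  diagE_apply b ![u.1, u.2, (u.1 * u.2)⁻¹] 2

/-- The pairs of points attached to bases, with their tori, are conjugate under `SL(V)`: the change of basis is scaled
to determinant one by a cube root. -/
theorem tor3_conj (b b' : Module.Basis (Fin 3) K V) : ∃ g : SL K V,
    g • pair3 h3 b = pair3 h3 b' ∧ ∀ u, g * tor3 b u * g⁻¹ = tor3 b' u := by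
  let g := b.equiv b' (Equiv.refl _)
  have hg : ∀ i, g (b i) = b' i := fun i => by simp [g]
  obtain ⟨c, hc⟩ := exists_root (ℓ := 3) (by omega) (LinearEquiv.det g)⁻¹
  let g' := diagE b' (fun _ => c) * g
  have hd : g' ∈ SL K V := by
    rw [SL, MonoidHom.mem_ker, map_mul]
    have : LinearEquiv.det (diagE b' (fun _ => c)) = c ^ 3 := Units.ext (by
      rw [LinearEquiv.coe_det, diagE_det]; simp)
    rw [this, hc, inv_mul_cancel]
  have hg' : ∀ i, g' (b i) = (c : K) • b' i := fun i => by
    rw [LinearEquiv.mul_apply, hg, diagE_apply]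
  refine ⟨⟨g', hd⟩, GenCx.X.ext (funext fun i => ?_), fun u => ?_⟩
  · rw [GenCx.smul_val]
    exact (P_smul _ _ _ _).trans (mk_eq_iff.2 ⟨c, hg' _⟩)
  · rw [mul_inv_eq_iff_eq_mul]
    apply Subtype.ext
    apply equiv_ext_basis b
    intro i
    rw [Subgroup.coe_mul, Subgroup.coe_mul, LinearEquiv.mul_apply, LinearEquiv.mul_apply]
    have key : ∀ (i : Fin 3) (x : K), (tor3 b u : V ≃ₗ[K] V) (b i) = x • b i →
        (tor3 b' u : V ≃ₗ[K] V) (b' i) = x • b' i →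
        g' ((tor3 b u : V ≃ₗ[K] V) (b i)) = (tor3 b' u : V ≃ₗ[K] V) (g' (b i)) := by
      intro i x e e'
      rw [e, map_smul, hg', map_smul, e', smul_comm]
    fin_cases i
    · exact key 0 _ (tor3_0 b u) (tor3_0 b' u)
    · exact key 1 _ (tor3_1 b u) (tor3_1 b' u)
    · exact key 2 _ (tor3_2 b u) (tor3_2 b' u)

/-- The triangle of the three coordinate points: one torus element of order dividing `ℓ` is written in the
coordinates attached to each of the three sides, as needed for `kill_pairs`. -/
theorem tor3_tri (ℓ : ℕ) {ζ : Kˣ} (hζ : ζ ^ ℓ = 1) : ∃ (t : (pC (SL K V)).X 2) (b0 b1 b2 : Module.Basis (Fin 3) K V)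
    (q r : Kˣ), q ^ ℓ = 1 ∧ r ^ ℓ = 1 ∧ (pC (SL K V)).fc 0 t = pair3 h3 b0 ∧
      (pC (SL K V)).fc 1 t = pair3 h3 b1 ∧ (pC (SL K V)).fc 2 t = pair3 h3 b2 ∧
      tor3 b1 (q, r) = tor3 b0 (ζ, r) ∧ tor3 b2 (q, ζ) = tor3 b0 (ζ, r) := by
  obtain ⟨t⟩ := (pC (SL K V)).exists_X 2
  obtain ⟨b, hb, -⟩ := stab_torus h3 t
  obtain ⟨b0, hb0⟩ := basis_of_indep h3 (b.linearIndependent.comp ![1, 2, 0] (by decide))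
  obtain ⟨b1, hb1⟩ := basis_of_indep h3 (b.linearIndependent.comp ![0, 2, 1] (by decide))
  have p0 : b0 0 = b 1 := hb0 0
  have p1 : b0 1 = b 2 := hb0 1
  have p2 : b0 2 = b 0 := hb0 2
  have q0 : b1 0 = b 0 := hb1 0
  have q1 : b1 1 = b 2 := hb1 1
  have q2 : b1 2 = b 1 := hb1 2
  have ht : ∀ (i : Fin 3) (c : Module.Basis (Fin 3) K V) (m : Fin 3), c m = b i → t.1 i = mk K (c m) (c.ne_zero m) :=
    fun i c m e => (mk_rep _).symm.trans (mk_eq_iff.2 ⟨1, by rw [e, hb]; simp⟩)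
  refine ⟨t, b0, b1, b, ζ⁻¹, 1, by rw [inv_pow, hζ, inv_one], one_pow _, ?_, ?_, ?_, ?_, ?_⟩
  · apply GenCx.X.ext; funext i
    fin_cases i
    · exact ht 1 b0 0 p0
    · exact ht 2 b0 1 p1
  · apply GenCx.X.ext; funext i
    fin_cases i
    · exact ht 0 b1 0 q0
    · exact ht 2 b1 1 q1
  · apply GenCx.X.ext; funext i
    fin_cases i
    · exact ht 0 b 0 rfl
    · exact ht 1 b 1 rfl
  · have e0 := tor3_0 b0 (ζ, 1)
    have e1 := tor3_1 b0 (ζ, 1)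
    have e2 := tor3_2 b0 (ζ, 1)
    have f0 := tor3_0 b1 (ζ⁻¹, 1)
    have f1 := tor3_1 b1 (ζ⁻¹, 1)
    have f2 := tor3_2 b1 (ζ⁻¹, 1)
    rw [p0] at e0; rw [p1] at e1; rw [p2] at e2
    rw [q0] at f0; rw [q1] at f1; rw [q2] at f2
    apply Subtype.ext
    apply equiv_ext_basis b
    intro i
    fin_cases i
    · exact f0.trans (e2.trans (by simp)).symm
    · exact f2.trans (e0.trans (by simp)).symm
    · exact f1.trans e1.symm
  · have e0 := tor3_0 b0 (ζ, 1)
    have e1 := tor3_1 b0 (ζ, 1)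
    have e2 := tor3_2 b0 (ζ, 1)
    rw [p0] at e0; rw [p1] at e1; rw [p2] at e2
    apply Subtype.ext
    apply equiv_ext_basis b
    intro i
    fin_cases i
    · exact (tor3_0 b _).trans (e2.trans (by simp)).symm
    · exact (tor3_1 b _).trans e0.symm
    · exact (tor3_2 b _).trans (e1.trans (by simp)).symm

variable {k : Type*} [Field k] (ℓ : ℕ) [CharP k ℓ] 
include h3

/-- The contribution of pairs for `SL₃`: their stabilizers are extensions of a torus of rank two by a unipotent group, so
classes of degree two are detected by norm invariants on a lift of this torus. -/
theorem SL3_h12 [NeZero ℓ] (hK : (ℓ : K) ≠ 0) {ζ : Kˣ} (hζ : orderOf ζ = ℓ)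
    (c : SL K V → SL K V → SL K V → (pC (SL K V)).X 1 → k)
    (hc : XZ2 c) (hD : ∀ g0 g1 g2, (pC (SL K V)).D (c g0 g1 g2) = 0) :
    ∃ b : SL K V → SL K V → SL K V → (pC (SL K V)).X 0 → k,
      XZ2 b ∧ XB2 (fun g0 g1 g2 => c g0 g1 g2 - (pC (SL K V)).D (b g0 g1 g2)) := by
  have hζℓ : ζ ^ ℓ = 1 := hζ ▸ pow_orderOf_eq_one ζ
  obtain ⟨b, hb, hb'⟩ := kill_pairs ℓ hζ tor3 (pair3 h3) (fun b u => (On.mk (b 0) (b.ne_zero 0)).eig (tor3_0 b u))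
    (fun b u => (On.mk (b 1) (b.ne_zero 1)).eig (tor3_1 b u)) (tor3_conj h3) (tor3_tri h3 ℓ hζℓ) c hc hD
  refine ⟨b, hb, shapiro2 _ (hc.sub_D hb) fun t => ?_⟩
  have hi := (pC_gen (G := SL K V) (by omega) _).1 t.2
  have ei : (fun i => (t.1 i).rep) = ![(t.1 0).rep, (t.1 1).rep] := by funext i; fin_cases i <;> rfl
  rw [ei] at hi
  obtain ⟨β, hβ0, hβ1⟩ := exists_basis3 h3 hi
  have et : t = pair3 h3 β := by
    apply GenCx.X.ext; funext i
    refine (mk_rep _).symm.trans (mk_eq_iff.2 ⟨1, ?_⟩)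
    rw [Units.val_one, one_smul]
    fin_cases i
    · exact hβ0.symm
    · exact hβ1.symm
  let S := MulAction.stabilizer (SL K V) t
  let j := inclG (SL K V) S
  have hs : ∀ (i : Fin 2) (s : S), ∃ u : Kˣ, j s (t.1 i).rep = (u : K) • (t.1 i).rep :=
    fun i s => (stabX_iff t s).1 s.2 i
  let χ : Fin 2 → S →* Kˣ := fun i => chi j (t.1 i).rep (rep_nonzero _) (hs i)
  let π : S →* Kˣ × Kˣ := (χ 0).prod (χ 1)
  have hW : Module.finrank K (V ⧸ Submodule.span K (Set.range ![(t.1 0).rep, (t.1 1).rep])) = 1 := by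
    have := Submodule.finrank_quotient_add_finrank (Submodule.span K (Set.range ![(t.1 0).rep, (t.1 1).rep]))
    rw [finrank_span_eq_card hi, Fintype.card_fin] at this
    omega
  have hker := unip_ker (k := k) ℓ hK j (inclG_inj _ _) π
    (Submodule.span K (Set.range ![(t.1 0).rep, (t.1 1).rep])) (fun g => by
      constructor
      · rintro ⟨s, h1, rfl⟩
        have h0' : χ 0 s = 1 := congrArg Prod.fst h1
        have h1' : χ 1 s = 1 := congrArg Prod.snd h1
        refine unip_of_codim1 hW ?_ (mem_SL.1 s.1.2)
        rw [fix_span]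
        rintro _ ⟨i, rfl⟩
        fin_cases i
        · exact (chi_spec j _ (rep_nonzero _) (hs 0) s).trans (by
            change ((χ 0 s : Kˣ) : K) • _ = _
            rw [h0', Units.val_one, one_smul]; rfl)
        · exact (chi_spec j _ (rep_nonzero _) (hs 1) s).trans (by
            change ((χ 1 s : Kˣ) : K) • _ = _
            rw [h1', Units.val_one, one_smul]; rfl)
      · intro hg
        have hf : ∀ i, g (t.1 i).rep = ((1 : Kˣ) : K) • (t.1 i).rep := by
          intro i
          rw [Units.val_one, one_smul]
          exact hg.1 _ (Submodule.subset_span ⟨i, by rw [← ei]⟩)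
        have hm : (⟨g, mem_SL.2 (det_unip hg)⟩ : SL K V) ∈ S := (stabX_iff t _).2 fun i => ⟨1, hf i⟩
        exact ⟨⟨_, hm⟩, Prod.ext (chi_eq j _ _ (hs 0) (hf 0)) (chi_eq j _ _ (hs 1) (hf 1)), rfl⟩)
  have hτ : ∀ u : Kˣ × Kˣ, ∃ s : S, (s : SL K V) = tor3 β u ∧ π s = u := by
    intro u
    have e0 : (tor3 β u : V ≃ₗ[K] V) (t.1 0).rep = (u.1 : K) • (t.1 0).rep := by
      rw [← hβ0]; exact tor3_0 β u
    have e1 : (tor3 β u : V ≃ₗ[K] V) (t.1 1).rep = (u.2 : K) • (t.1 1).rep := by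
      rw [← hβ1]; exact tor3_1 β u
    have hm : tor3 β u ∈ S := (stabX_iff t _).2 fun i => by
      fin_cases i
      · exact ⟨_, e0⟩
      · exact ⟨_, e1⟩
    exact ⟨⟨_, hm⟩, rfl, Prod.ext (chi_eq j _ _ (hs 0) e0) (chi_eq j _ _ (hs 1) e1)⟩
  have hd : ∀ x : Kˣ × Kˣ, ∃ y, y ^ ℓ = x := fun x => by
    obtain ⟨a, ha⟩ := exists_root (NeZero.ne ℓ) x.1
    obtain ⟨b, hb⟩ := exists_root (NeZero.ne ℓ) x.2
    exact ⟨(a, b), Prod.ext ha hb⟩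
  refine ext2_det ℓ (π := π) (fun q => ?_) hker.1 hker.2.1 mul_comm hd ((hc.sub_D hb).stab t) fun q hq => ?_
  · obtain ⟨s, -, h⟩ := hτ q
    exact ⟨s, h⟩
  · obtain ⟨s, h, h'⟩ := hτ q
    refine ⟨s, h', ?_, ?_⟩
    · apply Subtype.ext
      rw [Subgroup.coe_pow, h, ← map_pow, hq, map_one]; rfl
    · have := hb' β q hq
      rw [← et, ← h] at this
      exact (nn_map ℓ S.subtype s _).trans this

/-- The stabilizer of a point is an extension of `GL₂` by a unipotent group. -/
theorem SL3_h03 (hℓ : ℓ ≠ 0) (hK : (ℓ : K) ≠ 0) {ζ : Kˣ} (hζ : orderOf ζ = ℓ) (t : (pC (SL K V)).X 0) :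
    H3 (MulAction.stabilizer (SL K V) t) k := by
  set v := (t.1 0).rep with hv
  have v0 : v ≠ 0 := rep_nonzero _
  let j := inclG (SL K V) (MulAction.stabilizer (SL K V) t)
  let W := Submodule.span K {v}
  have hWd : Module.finrank K W = 1 := finrank_span_singleton v0
  have hW : ∀ s, W.map (j s : V →ₗ[K] V) = W := by
    intro s
    rw [Submodule.map_span, Set.image_singleton]
    have : (j s : V →ₗ[K] V) v = (chi0 t s : K) • v := chi0_spec t s
    rw [this, Submodule.span_singleton_smul_eq (chi0 t s).isUnit]
  let π := qhom j W hW
  have hQ : Module.finrank K (V ⧸ W) = 2 := by rw [finrank_quot_line v0, h3]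
  have : Nontrivial (V ⧸ W) := Module.nontrivial_of_finrank_pos (R := K) (by omega)
  have hker := unip_ker (k := k) ℓ hK j (inclG_inj _ _) π W (fun g => by
    constructor
    · rintro ⟨s, h1, rfl⟩
      exact unip_of_dim1 hWd ((qhom_eq_one j W hW s).1 h1) (mem_SL.1 s.1.2)
    · intro hg
      have hf : g v = v := hg.1 _ (Submodule.mem_span_singleton_self _)
      obtain ⟨s, rfl⟩ := stab0_mem t (mem_SL.2 (det_unip hg)) (u := 1) (by simpa using hf)
      exact ⟨s, (qhom_eq_one j W hW s).2 hg.2, rfl⟩)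
  refine ext3 (π := π) (fun b => ?_) hker.1 hker.2.1 hker.2.2 (H3_GL2 hQ ℓ hℓ hK hζ)
  let δ := (LinearEquiv.det b)⁻¹
  obtain ⟨g, h1, h2, hd⟩ := exists_block W (LinearEquiv.smulOfUnit δ) b
  have hdg : g ∈ SL K V := by
    rw [mem_SL, hd]
    have : ((LinearEquiv.smulOfUnit δ : W ≃ₗ[K] W) : W →ₗ[K] W) = (δ : K) • LinearMap.id := by
      ext w; rfl
    rw [this, LinearMap.det_smul, hWd, pow_one, LinearMap.det_id, mul_one, ← LinearEquiv.coe_det, ← Units.val_mul]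
    simp [δ]
  obtain ⟨s, rfl⟩ := stab0_mem t hdg (u := δ) (h1 ⟨v, Submodule.mem_span_singleton_self _⟩)
  refine ⟨s, LinearEquiv.ext fun x => ?_⟩
  obtain ⟨y, rfl⟩ := W.mkQ_surjective x
  exact (qhom_mk j W hW s y).trans (h2 y)

/-- Degree three for `SL₃`. The stabilizers of triples are divisible tori; by transitivity an invariant function
on quadruples is constant, and such a constant killed by `D` is zero, since quintuples have an odd number of faces. -/
theorem H3_SL3 (hℓ : ℓ ≠ 0) (hK : (ℓ : K) ≠ 0) {ζ : Kˣ} (hζ : orderOf ζ = ℓ) : H3 (SL K V) k := by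
  have : NeZero ℓ := ⟨hℓ⟩
  intro F hF
  refine (pC (SL K V)).machine3 F hF (shapiro3' (SL3_h03 h3 ℓ hℓ hK hζ) _ hF.eps)
    (SL3_h12 h3 ℓ hK hζ) (shapiro1' fun t => ?_) (fun f hf hD => ⟨0, fun _ _ => rfl, ?_⟩)
  · obtain ⟨b, _, hT⟩ := stab_torus h3 t
    exact H1_of_div ℓ (hT.div (rootClosed_SL hℓ))
  · have hcst : ∀ t t', f t = f t' := fun t t' => by
      obtain ⟨g, rfl⟩ := frame_trans h3 t t'
      exact (hf g t).symm
    obtain ⟨t⟩ := (pC (SL K V)).exists_X 4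
    funext t0
    have := congrFun hD t
    rw [GenCx.D3, hcst (GenCx.fc _ 0 t) t0, hcst (GenCx.fc _ 1 t) t0, hcst (GenCx.fc _ 2 t) t0,
      hcst (GenCx.fc _ 3 t) t0, hcst (GenCx.fc _ 4 t) t0, Pi.zero_apply] at this
    rw [map_zero, Pi.zero_apply]
    linear_combination -this
end SL3

/-- Degree three for `SL_n` with `n ≥ 3`, by induction from `n = 3`. -/
theorem H3_SL [IsAlgClosed K] {k : Type*} [Field k] (ℓ : ℕ) [CharP k ℓ] (hℓ : ℓ.Prime) (hK : (ℓ : K) ≠ 0)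
    {ζ : Kˣ} (hζ : orderOf ζ = ℓ) :
    ∀ (n : ℕ) (V : Type) [AddCommGroup V] [Module K V] [FiniteDimensional K V],
      Module.finrank K V = n + 3 → H3 (SL K V) k := by
  intro n
  induction n with
  | zero =>
    intro V _ _ _ hV
    have : Nontrivial V := Module.nontrivial_of_finrank_pos (R := K) (by omega)
    exact H3_SL3 hV ℓ hℓ.ne_zero hK hζ
  | succ n ih =>
    intro V _ _ _ hV
    have : Nontrivial V := Module.nontrivial_of_finrank_pos (R := K) (by omega)
    have : Infinite K := inferInstance
    exact H3_step ℓ hK (by omega) (fun U _ _ _ hU => ih U (by omega))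
      (fun U _ _ _ hU => H2_SL ℓ hℓ hK n U (by omega))
end Proj

theorem exists_zeta {K : Type} [Field K] [IsAlgClosed K] (ℓ : ℕ) (hℓ : ℓ.Prime) (hK : (ℓ : K) ≠ 0) :
    ∃ ζ : Kˣ, orderOf ζ = ℓ := by
  have : NeZero (ℓ : K) := ⟨hK⟩
  obtain ⟨z, hz⟩ := HasEnoughRootsOfUnity.exists_primitiveRoot K ℓ
  have hz' := hz.isUnit_unit hℓ.ne_zero
  exact ⟨_, hz'.eq_orderOf.symm⟩
end FM

namespace FM

/-! ### Comparison with the bar complex -/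

section Compare
open CategoryTheory groupCohomology

variable {k G : Type} [CommRing k] [Group G]

/-- The bar differential of an inhomogeneous cochain of degree three, written out. -/
theorem inh_d3 (f : (Fin 3 → G) → k) (g0 g1 g2 g3 : G) :
    inhomogeneousCochains.d (Rep.trivial k G k) 3 f ![g0, g1, g2, g3] =
      f ![g1, g2, g3] - f ![g0 * g1, g2, g3] + f ![g0, g1 * g2, g3] - f ![g0, g1, g2 * g3] + f ![g0, g1, g2] := by
  have e0 : Fin.contractNth 0 (· * ·) ![g0, g1, g2, g3] = ![g0 * g1, g2, g3] := by
    funext i; fin_cases i <;> rfl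
  have e1 : Fin.contractNth 1 (· * ·) ![g0, g1, g2, g3] = ![g0, g1 * g2, g3] := by
    funext i; fin_cases i <;> rfl
  have e2 : Fin.contractNth 2 (· * ·) ![g0, g1, g2, g3] = ![g0, g1, g2 * g3] := by
    funext i; fin_cases i <;> rfl
  have e3 : Fin.contractNth 3 (· * ·) ![g0, g1, g2, g3] = ![g0, g1, g2] := by
    funext i; fin_cases i <;> rfl
  have e : (fun i => ![g0, g1, g2, g3] (Fin.succ i)) = ![g1, g2, g3] := by
    funext i; fin_cases i <;> rfl
  rw [inhomogeneousCochains.d_hom_apply, Fin.sum_univ_four, e0, e1, e2, e3, e]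
  simp [pow_succ]
  ring

/-- The bar differential of an inhomogeneous cochain of degree two, written out. -/
theorem inh_d2 (f : (Fin 2 → G) → k) (g0 g1 g2 : G) :
    inhomogeneousCochains.d (Rep.trivial k G k) 2 f ![g0, g1, g2] =
      f ![g1, g2] - f ![g0 * g1, g2] + f ![g0, g1 * g2] - f ![g0, g1] := by
  have e0 : Fin.contractNth 0 (· * ·) ![g0, g1, g2] = ![g0 * g1, g2] := by
    funext i; fin_cases i <;> rfl
  have e1 : Fin.contractNth 1 (· * ·) ![g0, g1, g2] = ![g0, g1 * g2] := by
    funext i; fin_cases i <;> rfl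
  have e2 : Fin.contractNth 2 (· * ·) ![g0, g1, g2] = ![g0, g1] := by
    funext i; fin_cases i <;> rfl
  have e : (fun i => ![g0, g1, g2] (Fin.succ i)) = ![g1, g2] := by
    funext i; fin_cases i <;> rfl
  rw [inhomogeneousCochains.d_hom_apply, Fin.sum_univ_three, e0, e1, e2, e]
  simp [pow_succ]
  ring

/-- Exactness of the bar complex in degree three, from the vanishing for homogeneous cochains. -/
theorem exact3 (h : H3 G k) (f : (Fin 3 → G) → k) (hf : inhomogeneousCochains.d (Rep.trivial k G k) 3 f = 0) :
    ∃ φ : (Fin 2 → G) → k, inhomogeneousCochains.d (Rep.trivial k G k) 2 φ = f := by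
  have hZ : Z3 (fun x0 x1 x2 x3 => f ![x0⁻¹ * x1, x1⁻¹ * x2, x2⁻¹ * x3]) := by
    refine ⟨?_, ?_⟩
    · intro h x0 x1 x2 x3
      simp only [mul_inv_rev, mul_assoc, inv_mul_cancel_left]
    · funext x0 x1 x2 x3 x4
      have := congrFun hf ![x0⁻¹ * x1, x1⁻¹ * x2, x2⁻¹ * x3, x3⁻¹ * x4]
      have h2 := (inh_d3 _ _ _ _ _).symm.trans this
      simp only [mul_assoc, mul_inv_cancel_left] at h2
      exact h2
  obtain ⟨b, hb, e⟩ := h _ hZ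
  refine ⟨fun g => b 1 (g 0) (g 0 * g 1), ?_⟩
  funext g
  have hg : g = ![g 0, g 1, g 2] := by funext i; fin_cases i <;> rfl
  rw [hg]
  refine (inh_d2 _ _ _ _).trans ?_
  have := congrFun (congrFun (congrFun (congrFun e 1) (g 0)) (g 0 * g 1)) (g 0 * g 1 * g 2)
  simp only [d2, inv_one, one_mul, inv_mul_cancel_left] at this
  rw [← this]
  have hi := hb (g 0) 1 (g 1) (g 1 * g 2)
  rw [mul_one, ← mul_assoc] at hi
  rw [hi]
  simp [mul_assoc]

theorem subsingleton_of_H3 (h : H3 G k) : Subsingleton (groupCohomology (Rep.trivial k G k) 3) := by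
  refine subsingleton_of_forall_eq 0 fun x => ?_
  induction x using groupCohomology_induction_on with
  | h z =>
    obtain ⟨φ, hφ⟩ := exact3 h (iCocycles (Rep.trivial k G k) 3 z) (by
      have := (inhomogeneousCochains (Rep.trivial k G k)).iCycles_d 3 4
      rw [inhomogeneousCochains.d_def] at this
      exact congrArg (fun m => m.hom z) this)
    have hz : z = toCocycles (Rep.trivial k G k) 2 3 φ := by
      apply (ModuleCat.mono_iff_injective (iCocycles (Rep.trivial k G k) 3)).1 inferInstance
      rw [← hφ]
      have := (inhomogeneousCochains (Rep.trivial k G k)).toCycles_i 2 3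
      rw [inhomogeneousCochains.d_def] at this
      exact (congrArg (fun m => m.hom φ) this).symm
    rw [hz]
    exact congrArg (fun m => m.hom φ) ((inhomogeneousCochains (Rep.trivial k G k)).toCycles_comp_homologyπ 2 3)
end Compare

/-- The determinant-one matrices, as a group of linear automorphisms. -/
noncomputable def slEquiv (K : Type) [Field K] (n : ℕ) :
    SL K (Fin n → K) ≃* Matrix.SpecialLinearGroup (Fin n) K :=
  (MulEquiv.mk' 
    { toFun := fun g => (⟨g.1, g.2⟩ : SpecialLinearGroup K (Fin n → K))
      invFun := fun g => ⟨g.1, g.2⟩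
      left_inv := fun _ => rfl
      right_inv := fun _ => rfl } (fun _ _ => rfl)).trans Matrix.SpecialLinearGroup.toLin'_equiv.symm
end FM


/-- Degree 3 case of the Friedlander–Milnor conjecture for `SL_n`, `n ≥ 3`:
for an algebraically closed field `K` and a prime `ℓ` different from the characteristic
of `K`, the third group cohomology of the abstract group `SL_n(K)` with coefficients in the
trivial module `ℤ/ℓℤ` vanishes. -/
theorem FriedlanderMilnor_degree3_SL (K : Type) [Field K] [IsAlgClosed K] (ℓ : ℕ)
    (hℓ : ℓ.Prime) (hchar : (ℓ : K) ≠ 0) (n : ℕ) (hn : 3 ≤ n) :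
    Subsingleton
      (groupCohomology
        (Rep.trivial (ZMod ℓ) (Matrix.SpecialLinearGroup (Fin n) K) (ZMod ℓ)) 3) := by

  have : Fact ℓ.Prime := ⟨hℓ⟩
  obtain ⟨ζ, hζ⟩ := FM.exists_zeta ℓ hℓ hchar
  obtain ⟨m, rfl⟩ := Nat.exists_eq_add_of_le' hn
  exact FM.subsingleton_of_H3 (FM.H3.equiv (FM.slEquiv K _)
    (FM.H3_SL ℓ hℓ hchar hζ m (Fin (m + 3) → K) (by simp)))
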